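/- For all integers n ≥ 1 one has 4 D_n^2 q_n ∈ ℤ, 4 D_n^7 p_n ∈ ℤ, and 4 D_n^5 p̃_n ∈ ℤ, where D_n denotes the least common multiple of the numbers 1, 2, …, n. -/

import Mathlib

noncomputable section

open Filter


/-- `a₀(n)` from recursion (1). -/
def a0 (x : ℚ) : ℚ := 41218*x^3 - 48459*x^2 + 20010*x - 2871

/-- `a₁(n)` from recursion (1). -/
def a1 (x : ℚ) : ℚ := 2*(48802112*x^9 + 89030880*x^8 + 36002654*x^7 - 24317344*x^6
  - 19538418*x^5 + 1311365*x^4 + 3790503*x^3 + 460056*x^2 - 271701*x - 60291)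

/-- `a₂(n)` from recursion (1). -/
def a2 (x : ℚ) : ℚ := 3874492*x^8 - 2617900*x^7 - 3144314*x^6 + 2947148*x^5
  + 647130*x^4 - 1182926*x^3 + 115771*x^2 + 170716*x - 44541

/-- The third-order difference equation (1), imposed for all integers `n ≥ 2`. -/
def Rec1 (y : ℕ → ℚ) : Prop := ∀ n : ℕ, 2 ≤ n →
  ((n : ℚ) + 1)^6 * a0 (n : ℚ) * y (n+1) + a1 (n : ℚ) * y n
    - 4*(2*(n : ℚ) - 1) * a2 (n : ℚ) * y (n-1)
    - 4*((n : ℚ) - 1)^4*(2*(n : ℚ) - 1)*(2*(n : ℚ) - 3) * a0 ((n : ℚ) + 1) * y (n-2) = 0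

/-- `Dlcm n` is the least common multiple of `1, 2, …, n`. -/
def Dlcm (n : ℕ) : ℕ := (Finset.Icc 1 n).lcm id

namespace ZS
def A0 {R : Type*} [CommRing R] (x : R) : R := 41218*x^3 - 48459*x^2 + 20010*x - 2871
def A1 {R : Type*} [CommRing R] (x : R) : R := 2*(48802112*x^9 + 89030880*x^8 + 36002654*x^7 - 24317344*x^6
  - 19538418*x^5 + 1311365*x^4 + 3790503*x^3 + 460056*x^2 - 271701*x - 60291)
def A2 {R : Type*} [CommRing R] (x : R) : R := 3874492*x^8 - 2617900*x^7 - 3144314*x^6 + 2947148*x^5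
  + 647130*x^4 - 1182926*x^3 + 115771*x^2 + 170716*x - 44541
def cg00 {R : Type*} [CommRing R] (n : R) : R :=
    -105147118*n^18 - 277391013*n^17 - 131655664*n^16 + 256167322*n^15 + 317471182*n^14 +
    57962036*n^13 - 88984102*n^12 - 45649606*n^11 + 7747696*n^10 + 9648513*n^9 + 682846*n^8 -
    737252*n^7 - 114840*n^6

def cg01 {R : Type*} [CommRing R] (n : R) : R :=
    252789994*n^17 + 1120700153*n^16 + 1267086185*n^15 - 306835665*n^14 - 1262295103*n^13 -
    429704463*n^12 + 308375567*n^11 + 184992965*n^10 - 23482423*n^9 - 30977334*n^8 -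
    2832844*n^7 + 1925080*n^6 + 459360*n^5

def cg02 {R : Type*} [CommRing R] (n : R) : R :=
    259384874*n^16 - 38972733*n^15 - 1884487248*n^14 - 2350422191*n^13 - 198333880*n^12 +
    982935651*n^11 + 301893260*n^10 - 178070637*n^9 - 75026770*n^8 + 12826110*n^7 + 7306900*n^6
    - 4552*n^5 - 229680*n^4

def cg03 {R : Type*} [CommRing R] (n : R) : R :=
    -464403206*n^15 - 1582922147*n^14 - 1285956719*n^13 + 613388846*n^12 + 1084743670*n^11 +
    60637041*n^10 - 322870415*n^9 - 59654624*n^8 + 47219510*n^7 + 11188452*n^6 - 2804456*n^5 -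
    734976*n^4

def cg04 {R : Type*} [CommRing R] (n : R) : R :=
    -347385304*n^14 - 313232292*n^13 + 370317832*n^12 + 515741956*n^11 + 7122416*n^10 -
    194398876*n^9 - 35914296*n^8 + 35626268*n^7 + 8073736*n^6 - 2790272*n^5 - 505296*n^4

def cg05 {R : Type*} [CommRing R] (n : R) : R :=
    10551808*n^13 - 22957312*n^12 + 916096*n^11 + 24856896*n^10 - 8313408*n^9 - 9956928*n^8 +
    4093760*n^7 + 1442560*n^6 - 633472*n^5

def cg11 {R : Type*} [CommRing R] (n : R) : R :=
    -316677894*n^16 - 816045661*n^15 - 360459582*n^14 + 761531435*n^13 + 905662482*n^12 +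
    159484937*n^11 - 251037462*n^10 - 130932971*n^9 + 20618388*n^8 + 28161328*n^7 + 2238588*n^6
    - 2199068*n^5 - 344520*n^4

def cg12 {R : Type*} [CommRing R] (n : R) : R :=
    -173816306*n^15 + 577539375*n^14 + 2060044993*n^13 + 1578280838*n^12 - 190223688*n^11 -
    682271709*n^10 - 168684131*n^9 + 110391828*n^8 + 58145292*n^7 - 5017692*n^6 - 6991104*n^5 -
    217904*n^4 + 229680*n^3

def cg13 {R : Type*} [CommRing R] (n : R) : R :=
    427595532*n^14 + 1331404898*n^13 + 404085542*n^12 - 1345425326*n^11 - 990029606*n^10 +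
    174034059*n^9 + 321141046*n^8 + 36132450*n^7 - 43144208*n^6 - 13361061*n^5 + 1426006*n^4 +
    1155492*n^3 + 114840*n^2

def cg14 {R : Type*} [CommRing R] (n : R) : R :=
    9397704*n^13 - 1246022368*n^12 - 2422149698*n^11 - 1108436130*n^10 + 544706522*n^9 +
    509077364*n^8 + 2501338*n^7 - 81938550*n^6 - 18126314*n^5 + 3206332*n^4 + 2035368*n^3 +
    229680*n^2

def cg15 {R : Type*} [CommRing R] (n : R) : R :=
    -727126738*n^12 - 1373833259*n^11 - 590839866*n^10 + 327331623*n^9 + 277689730*n^8 -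
    5342495*n^7 - 45270212*n^6 - 9313257*n^5 + 1861006*n^4 + 1109556*n^3 + 114840*n^2

def cg22 {R : Type*} [CommRing R] (n : R) : R :=
    45793198*n^14 + 103408721*n^13 - 1111646*n^12 - 145341582*n^11 - 71285242*n^10 +
    50412964*n^9 + 32325988*n^8 - 9328746*n^7 - 6175088*n^6 + 881891*n^5 + 452790*n^4 -
    33248*n^3

def cg23 {R : Type*} [CommRing R] (n : R) : R :=
    216806680*n^13 + 228469146*n^12 - 342100279*n^11 - 855309456*n^10 - 599569807*n^9 +
    11678517*n^8 + 207951040*n^7 + 66515185*n^6 - 22116022*n^5 - 16019676*n^4 - 1550492*n^3 +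
    1179956*n^2 + 344520*n

def cg24 {R : Type*} [CommRing R] (n : R) : R :=
    -304065186*n^12 - 1024681151*n^11 - 1662445452*n^10 - 1169688915*n^9 + 36775132*n^8 +
    444133879*n^7 + 133535124*n^6 - 52884821*n^5 - 33156774*n^4 - 2328076*n^3 + 2474752*n^2 +
    689040*n

def cg25 {R : Type*} [CommRing R] (n : R) : R :=
    -385264646*n^11 - 912812157*n^10 - 667482732*n^9 + 28819578*n^8 + 241128170*n^7 +
    68950407*n^6 - 28494644*n^5 - 17420780*n^4 - 1040512*n^3 + 1294796*n^2 + 344520*n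

def cg33 {R : Type*} [CommRing R] (n : R) : R :=
    241702352*n^12 + 498772334*n^11 + 241009907*n^10 - 430454044*n^9 - 629478806*n^8 -
    148958573*n^7 + 169921565*n^6 + 86148224*n^5 - 12128184*n^4 - 15270569*n^3 - 2341050*n^2 +
    950276*n + 344520

def cg34 {R : Type*} [CommRing R] (n : R) : R :=
    178927338*n^11 + 626364881*n^10 - 1654473*n^9 - 988457781*n^8 - 518442185*n^7 +
    233530306*n^6 + 191197222*n^5 - 8277742*n^4 - 28702830*n^3 - 5517536*n^2 + 1556032*n +
    689040

def cg35 {R : Type*} [CommRing R] (n : R) : R :=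
    317790780*n^10 + 214850496*n^9 - 374980401*n^8 - 313800056*n^7 + 71965615*n^6 +
    98579053*n^5 + 2478460*n^4 - 13241425*n^3 - 3061646*n^2 + 605756*n + 344520

def cg40 {R : Type*} [CommRing R] (n : R) : R :=
    99871214*n^14 + 283593765*n^13 + 147952176*n^12 - 275256570*n^11 - 336763534*n^10 -
    35940372*n^9 + 100187430*n^8 + 33746278*n^7 - 11083824*n^6 - 6563617*n^5 - 278302*n^4 +
    420516*n^3 + 114840*n^2

def cg41 {R : Type*} [CommRing R] (n : R) : R :=
    431717332*n^13 + 859023224*n^12 - 238071147*n^11 - 1620039266*n^10 - 1060800075*n^9 +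
    176884182*n^8 + 374339935*n^7 + 62111902*n^6 - 47516893*n^5 - 19720094*n^4 - 114408*n^3 +
    1639316*n^2 + 344520*n

def cg42 {R : Type*} [CommRing R] (n : R) : R :=
    596506896*n^12 + 314848706*n^11 - 2223546365*n^10 - 3191647962*n^9 - 951176812*n^8 +
    742903159*n^7 + 499592997*n^6 - 8063236*n^5 - 80329930*n^4 - 21153567*n^3 + 2378774*n^2 +
    2328356*n + 344520

def cg43 {R : Type*} [CommRing R] (n : R) : R :=
    -47730444*n^11 - 1385236720*n^10 - 2846785605*n^9 - 1664713293*n^8 + 369060281*n^7 +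
    661403681*n^6 + 107580104*n^5 - 88195288*n^4 - 37826208*n^3 - 421636*n^2 + 3278632*n +
    689040

def cg44 {R : Type*} [CommRing R] (n : R) : R :=
    -301674542*n^10 - 846091355*n^9 - 698564401*n^8 + 3442266*n^7 + 247473529*n^6 +
    71608572*n^5 - 28789552*n^4 - 17256307*n^3 - 1161094*n^2 + 1294796*n + 344520

def cg45 {R : Type*} [CommRing R] (n : R) : R :=
    41218*n^9 - 48459*n^8 - 55185*n^7 + 54027*n^6 + 35349*n^5 - 17052*n^4 - 9898*n^3

def cg {R : Type*} [CommRing R] (n s t : R) : R :=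
    (cg00 n + cg01 n*t + cg02 n*t^2 + cg03 n*t^3 + cg04 n*t^4 + cg05 n*t^5) +
    (cg11 n*t + cg12 n*t^2 + cg13 n*t^3 + cg14 n*t^4 + cg15 n*t^5)*s +
    (cg22 n*t^2 + cg23 n*t^3 + cg24 n*t^4 + cg25 n*t^5)*s^2 +
    (cg33 n*t^3 + cg34 n*t^4 + cg35 n*t^5)*s^3 +
    (cg40 n + cg41 n*t + cg42 n*t^2 + cg43 n*t^3 + cg44 n*t^4 + cg45 n*t^5)*s^4

def cN {R : Type*} [CommRing R] (n s t : R) : R :=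
  2*n^3*(2*(2*n+1)*(n+1)^6 * A0 n * ((s-(n-1))*(t-(n-1))*(s+t-(n-1))) * ((s-n)*(t-n)*(s+t-n))
     * ((s-(n+1))*(t-(n+1))*(s+t-(n+1)))
  + A1 n * ((s-(n-1))*(t-(n-1))*(s+t-(n-1))) * ((s-n)*(t-n)*(s+t-n)) * ((s+(n+1))^2*(t+(n+1))^2)
  - 2 * A2 n * ((s-(n-1))*(t-(n-1))*(s+t-(n-1))) * ((s+n)^2*(t+n)^2) * ((s+(n+1))^2*(t+(n+1))^2)
  - (n-1)^4 * A0 (n+1) * ((s+(n-1))^2*(t+(n-1))^2) * ((s+n)^2*(t+n)^2) * ((s+(n+1))^2*(t+(n+1))^2))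

set_option linter.unusedSimpArgs false

/-- The symmetric polynomial in `s`, `t` with coefficients `f i j`, `i ≤ j ≤ 6`. -/
def sumS {R : Type*} [CommRing R] (s t : R) (f : ℕ → ℕ → R) : R :=
    f 0 0*1 + f 0 1*(t + s) + f 0 2*(t^2 + s^2) + f 0 3*(t^3 + s^3) + f 0 4*(t^4 + s^4) + f 0 5*(t^5 + s^5) + f 0 6*(t^6 + s^6) +
    f 1 1*s*t + f 1 2*(s*t^2 + s^2*t) + f 1 3*(s*t^3 + s^3*t) + f 1 4*(s*t^4 + s^4*t) + f 1 5*(s*t^5 + s^5*t) + f 1 6*(s*t^6 + s^6*t) +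
    f 2 2*s^2*t^2 + f 2 3*(s^2*t^3 + s^3*t^2) + f 2 4*(s^2*t^4 + s^4*t^2) + f 2 5*(s^2*t^5 + s^5*t^2) + f 2 6*(s^2*t^6 + s^6*t^2) +
    f 3 3*s^3*t^3 + f 3 4*(s^3*t^4 + s^4*t^3) + f 3 5*(s^3*t^5 + s^5*t^3) + f 3 6*(s^3*t^6 + s^6*t^3) +
    f 4 4*s^4*t^4 + f 4 5*(s^4*t^5 + s^5*t^4) + f 4 6*(s^4*t^6 + s^6*t^4) +
    f 5 5*s^5*t^5 + f 5 6*(s^5*t^6 + s^6*t^5) +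
    f 6 6*s^6*t^6

theorem sumS_add {R : Type*} [CommRing R] (s t : R) (f g : ℕ → ℕ → R) :
    sumS s t f + sumS s t g = sumS s t (fun i j => f i j + g i j) := by
  simp only [sumS]
  ring

theorem sumS_sub {R : Type*} [CommRing R] (s t : R) (f g : ℕ → ℕ → R) :
    sumS s t f - sumS s t g = sumS s t (fun i j => f i j - g i j) := by
  simp only [sumS]
  ring

theorem sumS_mul {R : Type*} [CommRing R] (s t c : R) (f : ℕ → ℕ → R) :
    c * sumS s t f = sumS s t (fun i j => c * f i j) := by
  simp only [sumS]
  ring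

/-- Coefficients of one of the four terms of `cN` with respect to `s`, `t`. -/
def kU {R : Type*} [CommRing R] (n : R) : ℕ → ℕ → R
  | 0, 0 => -n^9 + 3*n^7 - 3*n^5 + n^3
  | 0, 1 => 6*n^8 - 14*n^6 + 10*n^4 - 2*n^2
  | 0, 2 => -15*n^7 + 27*n^5 - 13*n^3 + n
  | 0, 3 => 20*n^6 - 28*n^4 + 8*n^2
  | 0, 4 => -15*n^5 + 17*n^3 - 2*n
  | 0, 5 => 6*n^4 - 6*n^2
  | 0, 6 => -n^3 + n
  | 1, 1 => -33*n^7 + 57*n^5 - 27*n^3 + 3*n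
  | 1, 2 => 75*n^6 - 93*n^4 + 27*n^2 - 1
  | 1, 3 => -90*n^5 + 78*n^3 - 12*n
  | 1, 4 => 60*n^4 - 36*n^2 + 2
  | 1, 5 => -21*n^3 + 9*n
  | 1, 6 => 3*n^2 - 1
  | 2, 2 => -153*n^5 + 123*n^3 - 18*n
  | 2, 3 => 162*n^4 - 78*n^2 + 4
  | 2, 4 => -93*n^3 + 24*n
  | 2, 5 => 27*n^2 - 3
  | 2, 6 => -3*n
  | 3, 3 => -147*n^3 + 33*n
  | 3, 4 => 69*n^2 - 5
  | 3, 5 => -15*n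
  | 3, 6 => 1
  | 4, 4 => -24*n
  | 4, 5 => 3
  | _, _ => 0

set_option maxHeartbeats 0 in
theorem kU_eq {R : Type*} [CommRing R] (n s t : R) :
    ((s-(n-1))*(t-(n-1))*(s+t-(n-1))) * ((s-n)*(t-n)*(s+t-n)) * ((s-(n+1))*(t-(n+1))*(s+t-(n+1))) =
    sumS s t (kU n) := by
  simp only [sumS, kU]
  ring

/-- Coefficients of one of the four terms of `cN` with respect to `s`, `t`. -/
def kV {R : Type*} [CommRing R] (n : R) : ℕ → ℕ → R
  | 0, 0 => n^10 + n^9 - 3*n^8 - 3*n^7 + 3*n^6 + 3*n^5 - n^4 - n^3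
  | 0, 1 => -2*n^9 - 6*n^8 + 2*n^7 + 14*n^6 + 2*n^5 - 10*n^4 - 2*n^3 + 2*n^2
  | 0, 2 => -n^8 + 7*n^7 + 13*n^6 - 11*n^5 - 19*n^4 + 5*n^3 + 7*n^2 - n
  | 0, 3 => 4*n^7 + 4*n^6 - 16*n^5 - 12*n^4 + 16*n^3 + 8*n^2 - 4*n
  | 0, 4 => -n^6 - 9*n^5 - n^4 + 15*n^3 + 2*n^2 - 6*n
  | 0, 5 => -2*n^5 + 2*n^4 + 6*n^3 - 2*n^2 - 4*n
  | 0, 6 => n^4 + n^3 - n^2 - n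
  | 1, 1 => 2*n^8 + 16*n^7 + 21*n^6 - 23*n^5 - 36*n^4 + 10*n^3 + 13*n^2 - 3*n
  | 1, 2 => 4*n^7 + n^6 - 43*n^5 - 33*n^4 + 46*n^3 + 23*n^2 - 15*n + 1
  | 1, 3 => -4*n^6 - 24*n^5 - 3*n^4 + 61*n^3 + 11*n^2 - 29*n + 4
  | 1, 4 => -2*n^5 + 8*n^4 + 35*n^3 - 8*n^2 - 27*n + 6
  | 1, 5 => 2*n^4 + 8*n^3 - 10*n^2 - 12*n + 4
  | 1, 6 => -3*n^2 - 2*n + 1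
  | 2, 2 => -30*n^5 - 5*n^4 + 91*n^3 + 17*n^2 - 49*n + 8
  | 2, 3 => -8*n^5 + 11*n^4 + 71*n^3 - 14*n^2 - 69*n + 21
  | 2, 4 => 3*n^4 + 24*n^3 - 25*n^2 - 47*n + 25
  | 2, 5 => 4*n^3 - 12*n^2 - 14*n + 14
  | 2, 6 => -2*n^2 - n + 3
  | 3, 3 => 8*n^4 + 32*n^3 - 31*n^2 - 75*n + 42
  | 3, 4 => 4*n^3 - 18*n^2 - 39*n + 40
  | 3, 5 => -4*n^2 - 8*n + 18
  | 3, 6 => 3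
  | 4, 4 => -3*n^2 - 15*n + 30
  | 4, 5 => -2*n + 10
  | 4, 6 => 1
  | 5, 5 => 2
  | _, _ => 0

set_option maxHeartbeats 0 in
theorem kV_eq {R : Type*} [CommRing R] (n s t : R) :
    ((s-(n-1))*(t-(n-1))*(s+t-(n-1))) * ((s-n)*(t-n)*(s+t-n)) * ((s+(n+1))^2*(t+(n+1))^2) =
    sumS s t (kV n) := by
  simp only [sumS, kV]
  ring

/-- Coefficients of one of the four terms of `cN` with respect to `s`, `t`. -/
def kW {R : Type*} [CommRing R] (n : R) : ℕ → ℕ → R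
  | 0, 0 => -n^11 - n^10 + 3*n^9 + 3*n^8 - 3*n^7 - 3*n^6 + n^5 + n^4
  | 0, 1 => -2*n^10 + 2*n^9 + 10*n^8 - 2*n^7 - 14*n^6 - 2*n^5 + 6*n^4 + 2*n^3
  | 0, 2 => n^9 + 9*n^8 + 3*n^7 - 21*n^6 - 13*n^5 + 11*n^4 + 9*n^3 + n^2
  | 0, 3 => 4*n^8 + 4*n^7 - 16*n^6 - 20*n^5 + 8*n^4 + 16*n^3 + 4*n^2
  | 0, 4 => n^7 - 7*n^6 - 15*n^5 + n^4 + 14*n^3 + 6*n^2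
  | 0, 5 => -2*n^6 - 6*n^5 - 2*n^4 + 6*n^3 + 4*n^2
  | 0, 6 => -n^5 - n^4 + n^3 + n^2
  | 1, 1 => -3*n^9 + 15*n^8 + 14*n^7 - 38*n^6 - 31*n^5 + 19*n^4 + 20*n^3 + 4*n^2
  | 1, 2 => 5*n^8 + 20*n^7 - 32*n^6 - 70*n^5 + 13*n^4 + 56*n^3 + 22*n^2 + 2*n
  | 1, 3 => 10*n^7 - 10*n^6 - 65*n^5 - 13*n^4 + 71*n^3 + 47*n^2 + 8*n
  | 1, 4 => -30*n^5 - 23*n^4 + 44*n^3 + 49*n^2 + 12*n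
  | 1, 5 => -7*n^5 - 13*n^4 + 11*n^3 + 25*n^2 + 8*n
  | 1, 6 => -3*n^4 + 5*n^2 + 2*n
  | 2, 2 => 8*n^7 - 8*n^6 - 94*n^5 - 26*n^4 + 113*n^3 + 85*n^2 + 17*n + 1
  | 2, 3 => 2*n^6 - 48*n^5 - 51*n^4 + 104*n^3 + 139*n^2 + 46*n + 4
  | 2, 4 => -7*n^5 - 31*n^4 + 44*n^3 + 112*n^2 + 56*n + 6
  | 2, 5 => -7*n^4 + 4*n^3 + 43*n^2 + 32*n + 4
  | 2, 6 => -2*n^3 + 6*n^2 + 7*n + 1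
  | 3, 3 => -12*n^5 - 36*n^4 + 68*n^3 + 180*n^2 + 97*n + 15
  | 3, 4 => -8*n^4 + 20*n^3 + 112*n^2 + 96*n + 21
  | 3, 5 => 2*n^3 + 30*n^2 + 45*n + 13
  | 3, 6 => 2*n^2 + 8*n + 3
  | 4, 4 => 3*n^3 + 51*n^2 + 75*n + 27
  | 4, 5 => 8*n^2 + 26*n + 15
  | 4, 6 => 3*n + 3
  | 5, 5 => 5*n + 7
  | 5, 6 => 1
  | _, _ => 0

set_option maxHeartbeats 0 in
theorem kW_eq {R : Type*} [CommRing R] (n s t : R) :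
    ((s-(n-1))*(t-(n-1))*(s+t-(n-1))) * ((s+n)^2*(t+n)^2) * ((s+(n+1))^2*(t+(n+1))^2) =
    sumS s t (kW n) := by
  simp only [sumS, kW]
  ring

/-- Coefficients of one of the four terms of `cN` with respect to `s`, `t`. -/
def kX {R : Type*} [CommRing R] (n : R) : ℕ → ℕ → R
  | 0, 0 => n^12 - 4*n^10 + 6*n^8 - 4*n^6 + n^4
  | 0, 1 => 6*n^11 - 20*n^9 + 24*n^7 - 12*n^5 + 2*n^3
  | 0, 2 => 15*n^10 - 42*n^8 + 40*n^6 - 14*n^4 + n^2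
  | 0, 3 => 20*n^9 - 48*n^7 + 36*n^5 - 8*n^3
  | 0, 4 => 15*n^8 - 32*n^6 + 19*n^4 - 2*n^2
  | 0, 5 => 6*n^7 - 12*n^5 + 6*n^3
  | 0, 6 => n^6 - 2*n^4 + n^2
  | 1, 1 => 36*n^10 - 96*n^8 + 88*n^6 - 32*n^4 + 4*n^2
  | 1, 2 => 90*n^9 - 192*n^7 + 132*n^5 - 32*n^3 + 2*n
  | 1, 3 => 120*n^8 - 208*n^6 + 104*n^4 - 16*n^2
  | 1, 4 => 90*n^7 - 132*n^5 + 46*n^3 - 4*n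
  | 1, 5 => 36*n^6 - 48*n^4 + 12*n^2
  | 1, 6 => 6*n^5 - 8*n^3 + 2*n
  | 2, 2 => 225*n^8 - 360*n^6 + 174*n^4 - 24*n^2 + 1
  | 2, 3 => 300*n^7 - 360*n^5 + 116*n^3 - 8*n
  | 2, 4 => 225*n^6 - 210*n^4 + 39*n^2 - 2
  | 2, 5 => 90*n^5 - 72*n^3 + 6*n
  | 2, 6 => 15*n^4 - 12*n^2 + 1
  | 3, 3 => 400*n^6 - 320*n^4 + 64*n^2
  | 3, 4 => 300*n^5 - 160*n^3 + 16*n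
  | 3, 5 => 120*n^4 - 48*n^2
  | 3, 6 => 20*n^3 - 8*n
  | 4, 4 => 225*n^4 - 60*n^2 + 4
  | 4, 5 => 90*n^3 - 12*n
  | 4, 6 => 15*n^2 - 2
  | 5, 5 => 36*n^2
  | 5, 6 => 6*n
  | 6, 6 => 1
  | _, _ => 0

set_option maxHeartbeats 0 in
theorem kX_eq {R : Type*} [CommRing R] (n s t : R) :
    ((s+(n-1))^2*(t+(n-1))^2) * ((s+n)^2*(t+n)^2) * ((s+(n+1))^2*(t+(n+1))^2) =
    sumS s t (kX n) := by
  simp only [sumS, kX]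
  ring

/-- Row coefficients of the telescoping operator. -/
def al {R : Type*} [CommRing R] (n r0 r1 r2 r3 r4 : R) : ℕ → R
  | 0 => (-n^4 + 2*n^2 - 1)*r0
  | 1 => (4*n^2 - 4)*r0 + (-n^4 + 2*n^2 - 1)*r1
  | 2 => (2*n^2 - 6)*r0 + (4*n^2 - 4)*r1 + (-n^4 + 2*n^2 - 1)*r2
  | 3 => (-4)*r0 + (2*n^2 - 6)*r1 + (4*n^2 - 4)*r2 + (-n^4 + 2*n^2 - 1)*r3
  | 4 => (-3)*r1 + (2*n^2 - 5)*r2 + (4*n^2 - 3)*r3 + (-n^4 + 2*n^2)*r4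
  | 5 => (-2)*r2 + (2*n^2 - 3)*r3 + (4*n^2)*r4
  | 6 => (-1)*r3 + (2*n^2)*r4
  | _ => 0

/-- Row coefficients of the telescoping operator. -/
def be {R : Type*} [CommRing R] (n r0 r1 r2 r3 r4 : R) : ℕ → R
  | 0 => (n^3 + n^2 - n - 1)*r0
  | 1 => (n^2 - 2*n - 3)*r0 + (n^3 + n^2 - n - 1)*r1
  | 2 => (-n - 3)*r0 + (n^2 - 2*n - 3)*r1 + (n^3 + n^2 - n - 1)*r2
  | 3 => (-n - 2)*r1 + (n^2 - 2*n - 2)*r2 + (n^3 + n^2 - n)*r3 + (1)*r4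
  | 4 => (-n - 1)*r2 + (n^2 - 2*n)*r3 + (n^3 + n^2 - n + 3)*r4
  | 5 => (-n)*r3 + (n^2 - 2*n + 3)*r4
  | 6 => (-n + 1)*r4
  | _ => 0

theorem row_eq {R : Type*} [CommRing R] (s t n r0 r1 r2 r3 r4 : R) :
    s^3*(s+t)*(r0 + r1*(s+1) + r2*(s+1)^2 + r3*(s+1)^3 + r4*(s+1)^4)
    - (s-n+1)*(s+t-n+1)*(s+n+1)^2*(r0 + r1*s + r2*s^2 + r3*s^3 + r4*s^4) =
    (al n r0 r1 r2 r3 r4 0 + t*be n r0 r1 r2 r3 r4 0) +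
    (al n r0 r1 r2 r3 r4 1 + t*be n r0 r1 r2 r3 r4 1)*s +
    (al n r0 r1 r2 r3 r4 2 + t*be n r0 r1 r2 r3 r4 2)*s^2 +
    (al n r0 r1 r2 r3 r4 3 + t*be n r0 r1 r2 r3 r4 3)*s^3 +
    (al n r0 r1 r2 r3 r4 4 + t*be n r0 r1 r2 r3 r4 4)*s^4 +
    (al n r0 r1 r2 r3 r4 5 + t*be n r0 r1 r2 r3 r4 5)*s^5 +
    (al n r0 r1 r2 r3 r4 6 + t*be n r0 r1 r2 r3 r4 6)*s^6 +
    (al n r0 r1 r2 r3 r4 7 + t*be n r0 r1 r2 r3 r4 7)*s^7 +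
    (al n r0 r1 r2 r3 r4 8 + t*be n r0 r1 r2 r3 r4 8)*s^8 := by
  simp only [al, be]
  ring

/-- Coefficients of `cg`, with the second index shifted by one. -/
def cs {R : Type*} [CommRing R] (n : R) : ℕ → ℕ → R
  | 0, 1 => cg00 n
  | 0, 2 => cg01 n
  | 0, 3 => cg02 n
  | 0, 4 => cg03 n
  | 0, 5 => cg04 n
  | 0, 6 => cg05 n
  | 1, 2 => cg11 n
  | 1, 3 => cg12 n
  | 1, 4 => cg13 n
  | 1, 5 => cg14 n
  | 1, 6 => cg15 n
  | 2, 3 => cg22 n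
  | 2, 4 => cg23 n
  | 2, 5 => cg24 n
  | 2, 6 => cg25 n
  | 3, 4 => cg33 n
  | 3, 5 => cg34 n
  | 3, 6 => cg35 n
  | 4, 1 => cg40 n
  | 4, 2 => cg41 n
  | 4, 3 => cg42 n
  | 4, 4 => cg43 n
  | 4, 5 => cg44 n
  | 4, 6 => cg45 n
  | _, _ => 0

/-- Coefficients of the telescoped certificate. -/
def hc {R : Type*} [CommRing R] (n : R) (k j : ℕ) : R :=
  al n (cs n 0 (j+1)) (cs n 1 (j+1)) (cs n 2 (j+1)) (cs n 3 (j+1)) (cs n 4 (j+1)) k +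
  be n (cs n 0 j) (cs n 1 j) (cs n 2 j) (cs n 3 j) (cs n 4 j) k

theorem al_lin {R : Type*} [CommRing R] (n t : R) (f : ℕ → ℕ → R) (k : ℕ) :
    al n (f 0 1 + f 0 2*t + f 0 3*t^2 + f 0 4*t^3 + f 0 5*t^4 + f 0 6*t^5) (f 1 1 + f 1 2*t + f 1 3*t^2 + f 1 4*t^3 + f 1 5*t^4 + f 1 6*t^5) (f 2 1 + f 2 2*t + f 2 3*t^2 + f 2 4*t^3 + f 2 5*t^4 + f 2 6*t^5) (f 3 1 + f 3 2*t + f 3 3*t^2 + f 3 4*t^3 + f 3 5*t^4 + f 3 6*t^5) (f 4 1 + f 4 2*t + f 4 3*t^2 + f 4 4*t^3 + f 4 5*t^4 + f 4 6*t^5) k =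
    al n (f 0 1) (f 1 1) (f 2 1) (f 3 1) (f 4 1) k + al n (f 0 2) (f 1 2) (f 2 2) (f 3 2) (f 4 2) k*t + al n (f 0 3) (f 1 3) (f 2 3) (f 3 3) (f 4 3) k*t^2 + al n (f 0 4) (f 1 4) (f 2 4) (f 3 4) (f 4 4) k*t^3 + al n (f 0 5) (f 1 5) (f 2 5) (f 3 5) (f 4 5) k*t^4 + al n (f 0 6) (f 1 6) (f 2 6) (f 3 6) (f 4 6) k*t^5 := by
  unfold al
  split <;> ring

theorem be_lin {R : Type*} [CommRing R] (n t : R) (f : ℕ → ℕ → R) (k : ℕ) :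
    be n (f 0 1 + f 0 2*t + f 0 3*t^2 + f 0 4*t^3 + f 0 5*t^4 + f 0 6*t^5) (f 1 1 + f 1 2*t + f 1 3*t^2 + f 1 4*t^3 + f 1 5*t^4 + f 1 6*t^5) (f 2 1 + f 2 2*t + f 2 3*t^2 + f 2 4*t^3 + f 2 5*t^4 + f 2 6*t^5) (f 3 1 + f 3 2*t + f 3 3*t^2 + f 3 4*t^3 + f 3 5*t^4 + f 3 6*t^5) (f 4 1 + f 4 2*t + f 4 3*t^2 + f 4 4*t^3 + f 4 5*t^4 + f 4 6*t^5) k =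
    be n (f 0 1) (f 1 1) (f 2 1) (f 3 1) (f 4 1) k + be n (f 0 2) (f 1 2) (f 2 2) (f 3 2) (f 4 2) k*t + be n (f 0 3) (f 1 3) (f 2 3) (f 3 3) (f 4 3) k*t^2 + be n (f 0 4) (f 1 4) (f 2 4) (f 3 4) (f 4 4) k*t^3 + be n (f 0 5) (f 1 5) (f 2 5) (f 3 5) (f 4 5) k*t^4 + be n (f 0 6) (f 1 6) (f 2 6) (f 3 6) (f 4 6) k*t^5 := by
  unfold be
  split <;> ring

theorem cg_rows {R : Type*} [CommRing R] (n s t : R) : cg n s t =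
    (cs n 0 1 + cs n 0 2*t + cs n 0 3*t^2 + cs n 0 4*t^3 + cs n 0 5*t^4 + cs n 0 6*t^5) + (cs n 1 1 + cs n 1 2*t + cs n 1 3*t^2 + cs n 1 4*t^3 + cs n 1 5*t^4 + cs n 1 6*t^5)*s + (cs n 2 1 + cs n 2 2*t + cs n 2 3*t^2 + cs n 2 4*t^3 + cs n 2 5*t^4 + cs n 2 6*t^5)*s^2 + (cs n 3 1 + cs n 3 2*t + cs n 3 3*t^2 + cs n 3 4*t^3 + cs n 3 5*t^4 + cs n 3 6*t^5)*s^3 + (cs n 4 1 + cs n 4 2*t + cs n 4 3*t^2 + cs n 4 4*t^3 + cs n 4 5*t^4 + cs n 4 6*t^5)*s^4 := by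
  simp only [cg, cs]
  ring

theorem hc_row {R : Type*} [CommRing R] (n t : R) (k : ℕ) :
    al n (cs n 0 1 + cs n 0 2*t + cs n 0 3*t^2 + cs n 0 4*t^3 + cs n 0 5*t^4 + cs n 0 6*t^5) (cs n 1 1 + cs n 1 2*t + cs n 1 3*t^2 + cs n 1 4*t^3 + cs n 1 5*t^4 + cs n 1 6*t^5) (cs n 2 1 + cs n 2 2*t + cs n 2 3*t^2 + cs n 2 4*t^3 + cs n 2 5*t^4 + cs n 2 6*t^5) (cs n 3 1 + cs n 3 2*t + cs n 3 3*t^2 + cs n 3 4*t^3 + cs n 3 5*t^4 + cs n 3 6*t^5) (cs n 4 1 + cs n 4 2*t + cs n 4 3*t^2 + cs n 4 4*t^3 + cs n 4 5*t^4 + cs n 4 6*t^5) k +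
    t*be n (cs n 0 1 + cs n 0 2*t + cs n 0 3*t^2 + cs n 0 4*t^3 + cs n 0 5*t^4 + cs n 0 6*t^5) (cs n 1 1 + cs n 1 2*t + cs n 1 3*t^2 + cs n 1 4*t^3 + cs n 1 5*t^4 + cs n 1 6*t^5) (cs n 2 1 + cs n 2 2*t + cs n 2 3*t^2 + cs n 2 4*t^3 + cs n 2 5*t^4 + cs n 2 6*t^5) (cs n 3 1 + cs n 3 2*t + cs n 3 3*t^2 + cs n 3 4*t^3 + cs n 3 5*t^4 + cs n 3 6*t^5) (cs n 4 1 + cs n 4 2*t + cs n 4 3*t^2 + cs n 4 4*t^3 + cs n 4 5*t^4 + cs n 4 6*t^5) k =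
    hc n k 0 + hc n k 1*t + hc n k 2*t^2 + hc n k 3*t^3 + hc n k 4*t^4 + hc n k 5*t^5 + hc n k 6*t^6 := by
  rw [al_lin n t (cs n), be_lin n t (cs n)]
  have h0 : be n (cs n 0 0) (cs n 1 0) (cs n 2 0) (cs n 3 0) (cs n 4 0) k = 0 := by
    simp only [cs]
    unfold be
    split <;> ring
  have h7 : al n (cs n 0 7) (cs n 1 7) (cs n 2 7) (cs n 3 7) (cs n 4 7) k = 0 := by
    simp only [cs]
    unfold al
    split <;> ring
  simp only [hc, zero_add, Nat.reduceAdd]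
  rw [h0, h7]
  ring

theorem hc_eq {R : Type*} [CommRing R] (n s t : R) :
    s^3*(s+t)*cg n (s+1) t - (s-n+1)*(s+t-n+1)*(s+n+1)^2*cg n s t =
    (hc n 0 0 + hc n 0 1*t + hc n 0 2*t^2 + hc n 0 3*t^3 + hc n 0 4*t^4 + hc n 0 5*t^5 + hc n 0 6*t^6) +
    (hc n 1 0 + hc n 1 1*t + hc n 1 2*t^2 + hc n 1 3*t^3 + hc n 1 4*t^4 + hc n 1 5*t^5 + hc n 1 6*t^6)*s +
    (hc n 2 0 + hc n 2 1*t + hc n 2 2*t^2 + hc n 2 3*t^3 + hc n 2 4*t^4 + hc n 2 5*t^5 + hc n 2 6*t^6)*s^2 +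
    (hc n 3 0 + hc n 3 1*t + hc n 3 2*t^2 + hc n 3 3*t^3 + hc n 3 4*t^4 + hc n 3 5*t^5 + hc n 3 6*t^6)*s^3 +
    (hc n 4 0 + hc n 4 1*t + hc n 4 2*t^2 + hc n 4 3*t^3 + hc n 4 4*t^4 + hc n 4 5*t^5 + hc n 4 6*t^6)*s^4 +
    (hc n 5 0 + hc n 5 1*t + hc n 5 2*t^2 + hc n 5 3*t^3 + hc n 5 4*t^4 + hc n 5 5*t^5 + hc n 5 6*t^6)*s^5 +
    (hc n 6 0 + hc n 6 1*t + hc n 6 2*t^2 + hc n 6 3*t^3 + hc n 6 4*t^4 + hc n 6 5*t^5 + hc n 6 6*t^6)*s^6 +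
    (hc n 7 0 + hc n 7 1*t + hc n 7 2*t^2 + hc n 7 3*t^3 + hc n 7 4*t^4 + hc n 7 5*t^5 + hc n 7 6*t^6)*s^7 +
    (hc n 8 0 + hc n 8 1*t + hc n 8 2*t^2 + hc n 8 3*t^3 + hc n 8 4*t^4 + hc n 8 5*t^5 + hc n 8 6*t^6)*s^8 := by
  rw [cg_rows n (s+1) t, cg_rows n s t, row_eq s t n]
  simp only [hc_row]

/-- Coefficients of `cN`. -/
def lc {R : Type*} [CommRing R] (n : R) (i j : ℕ) : R :=
  2*n^3*(2*(2*n+1)*(n+1)^6 * A0 n * kU n i j + A1 n * kV n i j - 2 * A2 n * kW n i j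
    - (n-1)^4 * A0 (n+1) * kX n i j)

theorem k00 {R : Type*} [CommRing R] (n : R) : lc n 0 0 = 2*hc n 0 0 := by
  simp only [hc, lc, al, be, cs, zero_add, Nat.reduceAdd, A0, A1, A2, cg00, cg01, cg02, cg03, cg04, cg05, cg11, cg12, cg13,
    cg14, cg15, cg22, cg23, cg24, cg25, cg33, cg34, cg35, cg40, cg41, cg42, cg43, cg44, cg45, kU, kV, kW, kX]
  ring

theorem k01 {R : Type*} [CommRing R] (n : R) : lc n 0 1 = hc n 0 1 + hc n 1 0 := by
  simp only [hc, lc, al, be, cs, zero_add, Nat.reduceAdd, A0, A1, A2, cg00, cg01, cg02, cg03, cg04, cg05, cg11, cg12, cg13,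
    cg14, cg15, cg22, cg23, cg24, cg25, cg33, cg34, cg35, cg40, cg41, cg42, cg43, cg44, cg45, kU, kV, kW, kX]
  ring

theorem k02 {R : Type*} [CommRing R] (n : R) : lc n 0 2 = hc n 0 2 + hc n 2 0 := by
  simp only [hc, lc, al, be, cs, zero_add, Nat.reduceAdd, A0, A1, A2, cg00, cg01, cg02, cg03, cg04, cg05, cg11, cg12, cg13,
    cg14, cg15, cg22, cg23, cg24, cg25, cg33, cg34, cg35, cg40, cg41, cg42, cg43, cg44, cg45, kU, kV, kW, kX]
  ring

theorem k03 {R : Type*} [CommRing R] (n : R) : lc n 0 3 = hc n 0 3 + hc n 3 0 := by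
  simp only [hc, lc, al, be, cs, zero_add, Nat.reduceAdd, A0, A1, A2, cg00, cg01, cg02, cg03, cg04, cg05, cg11, cg12, cg13,
    cg14, cg15, cg22, cg23, cg24, cg25, cg33, cg34, cg35, cg40, cg41, cg42, cg43, cg44, cg45, kU, kV, kW, kX]
  ring

theorem k04 {R : Type*} [CommRing R] (n : R) : lc n 0 4 = hc n 0 4 + hc n 4 0 := by
  simp only [hc, lc, al, be, cs, zero_add, Nat.reduceAdd, A0, A1, A2, cg00, cg01, cg02, cg03, cg04, cg05, cg11, cg12, cg13,
    cg14, cg15, cg22, cg23, cg24, cg25, cg33, cg34, cg35, cg40, cg41, cg42, cg43, cg44, cg45, kU, kV, kW, kX]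
  ring

theorem k05 {R : Type*} [CommRing R] (n : R) : lc n 0 5 = hc n 0 5 + hc n 5 0 := by
  simp only [hc, lc, al, be, cs, zero_add, Nat.reduceAdd, A0, A1, A2, cg00, cg01, cg02, cg03, cg04, cg05, cg11, cg12, cg13,
    cg14, cg15, cg22, cg23, cg24, cg25, cg33, cg34, cg35, cg40, cg41, cg42, cg43, cg44, cg45, kU, kV, kW, kX]
  ring

theorem k06 {R : Type*} [CommRing R] (n : R) : lc n 0 6 = hc n 0 6 + hc n 6 0 := by
  simp only [hc, lc, al, be, cs, zero_add, Nat.reduceAdd, A0, A1, A2, cg00, cg01, cg02, cg03, cg04, cg05, cg11, cg12, cg13,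
    cg14, cg15, cg22, cg23, cg24, cg25, cg33, cg34, cg35, cg40, cg41, cg42, cg43, cg44, cg45, kU, kV, kW, kX]
  ring

theorem k07 {R : Type*} [CommRing R] (n : R) : 0 = hc n 7 0 := by
  simp only [hc, al, be, cs, zero_add, Nat.reduceAdd, A0, A1, A2, cg00, cg01, cg02, cg03, cg04, cg05, cg11, cg12, cg13,
    cg14, cg15, cg22, cg23, cg24, cg25, cg33, cg34, cg35, cg40, cg41, cg42, cg43, cg44, cg45, kU, kV, kW, kX]

theorem k08 {R : Type*} [CommRing R] (n : R) : 0 = hc n 8 0 := by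
  simp only [hc, al, be, cs, zero_add, Nat.reduceAdd, A0, A1, A2, cg00, cg01, cg02, cg03, cg04, cg05, cg11, cg12, cg13,
    cg14, cg15, cg22, cg23, cg24, cg25, cg33, cg34, cg35, cg40, cg41, cg42, cg43, cg44, cg45, kU, kV, kW, kX]

theorem k11 {R : Type*} [CommRing R] (n : R) : lc n 1 1 = 2*hc n 1 1 := by
  simp only [hc, lc, al, be, cs, zero_add, Nat.reduceAdd, A0, A1, A2, cg00, cg01, cg02, cg03, cg04, cg05, cg11, cg12, cg13,
    cg14, cg15, cg22, cg23, cg24, cg25, cg33, cg34, cg35, cg40, cg41, cg42, cg43, cg44, cg45, kU, kV, kW, kX]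
  ring

theorem k12 {R : Type*} [CommRing R] (n : R) : lc n 1 2 = hc n 1 2 + hc n 2 1 := by
  simp only [hc, lc, al, be, cs, zero_add, Nat.reduceAdd, A0, A1, A2, cg00, cg01, cg02, cg03, cg04, cg05, cg11, cg12, cg13,
    cg14, cg15, cg22, cg23, cg24, cg25, cg33, cg34, cg35, cg40, cg41, cg42, cg43, cg44, cg45, kU, kV, kW, kX]
  ring

theorem k13 {R : Type*} [CommRing R] (n : R) : lc n 1 3 = hc n 1 3 + hc n 3 1 := by
  simp only [hc, lc, al, be, cs, zero_add, Nat.reduceAdd, A0, A1, A2, cg00, cg01, cg02, cg03, cg04, cg05, cg11, cg12, cg13,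
    cg14, cg15, cg22, cg23, cg24, cg25, cg33, cg34, cg35, cg40, cg41, cg42, cg43, cg44, cg45, kU, kV, kW, kX]
  ring

theorem k14 {R : Type*} [CommRing R] (n : R) : lc n 1 4 = hc n 1 4 + hc n 4 1 := by
  simp only [hc, lc, al, be, cs, zero_add, Nat.reduceAdd, A0, A1, A2, cg00, cg01, cg02, cg03, cg04, cg05, cg11, cg12, cg13,
    cg14, cg15, cg22, cg23, cg24, cg25, cg33, cg34, cg35, cg40, cg41, cg42, cg43, cg44, cg45, kU, kV, kW, kX]
  ring

theorem k15 {R : Type*} [CommRing R] (n : R) : lc n 1 5 = hc n 1 5 + hc n 5 1 := by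
  simp only [hc, lc, al, be, cs, zero_add, Nat.reduceAdd, A0, A1, A2, cg00, cg01, cg02, cg03, cg04, cg05, cg11, cg12, cg13,
    cg14, cg15, cg22, cg23, cg24, cg25, cg33, cg34, cg35, cg40, cg41, cg42, cg43, cg44, cg45, kU, kV, kW, kX]
  ring

theorem k16 {R : Type*} [CommRing R] (n : R) : lc n 1 6 = hc n 1 6 + hc n 6 1 := by
  simp only [hc, lc, al, be, cs, zero_add, Nat.reduceAdd, A0, A1, A2, cg00, cg01, cg02, cg03, cg04, cg05, cg11, cg12, cg13,
    cg14, cg15, cg22, cg23, cg24, cg25, cg33, cg34, cg35, cg40, cg41, cg42, cg43, cg44, cg45, kU, kV, kW, kX]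
  ring

theorem k17 {R : Type*} [CommRing R] (n : R) : 0 = hc n 7 1 := by
  simp only [hc, al, be, cs, zero_add, Nat.reduceAdd, A0, A1, A2, cg00, cg01, cg02, cg03, cg04, cg05, cg11, cg12, cg13,
    cg14, cg15, cg22, cg23, cg24, cg25, cg33, cg34, cg35, cg40, cg41, cg42, cg43, cg44, cg45, kU, kV, kW, kX]

theorem k18 {R : Type*} [CommRing R] (n : R) : 0 = hc n 8 1 := by
  simp only [hc, al, be, cs, zero_add, Nat.reduceAdd, A0, A1, A2, cg00, cg01, cg02, cg03, cg04, cg05, cg11, cg12, cg13,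
    cg14, cg15, cg22, cg23, cg24, cg25, cg33, cg34, cg35, cg40, cg41, cg42, cg43, cg44, cg45, kU, kV, kW, kX]

theorem k22 {R : Type*} [CommRing R] (n : R) : lc n 2 2 = 2*hc n 2 2 := by
  simp only [hc, lc, al, be, cs, zero_add, Nat.reduceAdd, A0, A1, A2, cg00, cg01, cg02, cg03, cg04, cg05, cg11, cg12, cg13,
    cg14, cg15, cg22, cg23, cg24, cg25, cg33, cg34, cg35, cg40, cg41, cg42, cg43, cg44, cg45, kU, kV, kW, kX]
  ring

theorem k23 {R : Type*} [CommRing R] (n : R) : lc n 2 3 = hc n 2 3 + hc n 3 2 := by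
  simp only [hc, lc, al, be, cs, zero_add, Nat.reduceAdd, A0, A1, A2, cg00, cg01, cg02, cg03, cg04, cg05, cg11, cg12, cg13,
    cg14, cg15, cg22, cg23, cg24, cg25, cg33, cg34, cg35, cg40, cg41, cg42, cg43, cg44, cg45, kU, kV, kW, kX]
  ring

theorem k24 {R : Type*} [CommRing R] (n : R) : lc n 2 4 = hc n 2 4 + hc n 4 2 := by
  simp only [hc, lc, al, be, cs, zero_add, Nat.reduceAdd, A0, A1, A2, cg00, cg01, cg02, cg03, cg04, cg05, cg11, cg12, cg13,
    cg14, cg15, cg22, cg23, cg24, cg25, cg33, cg34, cg35, cg40, cg41, cg42, cg43, cg44, cg45, kU, kV, kW, kX]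
  ring

theorem k25 {R : Type*} [CommRing R] (n : R) : lc n 2 5 = hc n 2 5 + hc n 5 2 := by
  simp only [hc, lc, al, be, cs, zero_add, Nat.reduceAdd, A0, A1, A2, cg00, cg01, cg02, cg03, cg04, cg05, cg11, cg12, cg13,
    cg14, cg15, cg22, cg23, cg24, cg25, cg33, cg34, cg35, cg40, cg41, cg42, cg43, cg44, cg45, kU, kV, kW, kX]
  ring

theorem k26 {R : Type*} [CommRing R] (n : R) : lc n 2 6 = hc n 2 6 + hc n 6 2 := by
  simp only [hc, lc, al, be, cs, zero_add, Nat.reduceAdd, A0, A1, A2, cg00, cg01, cg02, cg03, cg04, cg05, cg11, cg12, cg13,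
    cg14, cg15, cg22, cg23, cg24, cg25, cg33, cg34, cg35, cg40, cg41, cg42, cg43, cg44, cg45, kU, kV, kW, kX]
  ring

theorem k27 {R : Type*} [CommRing R] (n : R) : 0 = hc n 7 2 := by
  simp only [hc, al, be, cs, zero_add, Nat.reduceAdd, A0, A1, A2, cg00, cg01, cg02, cg03, cg04, cg05, cg11, cg12, cg13,
    cg14, cg15, cg22, cg23, cg24, cg25, cg33, cg34, cg35, cg40, cg41, cg42, cg43, cg44, cg45, kU, kV, kW, kX]

theorem k28 {R : Type*} [CommRing R] (n : R) : 0 = hc n 8 2 := by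
  simp only [hc, al, be, cs, zero_add, Nat.reduceAdd, A0, A1, A2, cg00, cg01, cg02, cg03, cg04, cg05, cg11, cg12, cg13,
    cg14, cg15, cg22, cg23, cg24, cg25, cg33, cg34, cg35, cg40, cg41, cg42, cg43, cg44, cg45, kU, kV, kW, kX]

theorem k33 {R : Type*} [CommRing R] (n : R) : lc n 3 3 = 2*hc n 3 3 := by
  simp only [hc, lc, al, be, cs, zero_add, Nat.reduceAdd, A0, A1, A2, cg00, cg01, cg02, cg03, cg04, cg05, cg11, cg12, cg13,
    cg14, cg15, cg22, cg23, cg24, cg25, cg33, cg34, cg35, cg40, cg41, cg42, cg43, cg44, cg45, kU, kV, kW, kX]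
  ring

theorem k34 {R : Type*} [CommRing R] (n : R) : lc n 3 4 = hc n 3 4 + hc n 4 3 := by
  simp only [hc, lc, al, be, cs, zero_add, Nat.reduceAdd, A0, A1, A2, cg00, cg01, cg02, cg03, cg04, cg05, cg11, cg12, cg13,
    cg14, cg15, cg22, cg23, cg24, cg25, cg33, cg34, cg35, cg40, cg41, cg42, cg43, cg44, cg45, kU, kV, kW, kX]
  ring

theorem k35 {R : Type*} [CommRing R] (n : R) : lc n 3 5 = hc n 3 5 + hc n 5 3 := by
  simp only [hc, lc, al, be, cs, zero_add, Nat.reduceAdd, A0, A1, A2, cg00, cg01, cg02, cg03, cg04, cg05, cg11, cg12, cg13,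
    cg14, cg15, cg22, cg23, cg24, cg25, cg33, cg34, cg35, cg40, cg41, cg42, cg43, cg44, cg45, kU, kV, kW, kX]
  ring

theorem k36 {R : Type*} [CommRing R] (n : R) : lc n 3 6 = hc n 3 6 + hc n 6 3 := by
  simp only [hc, lc, al, be, cs, zero_add, Nat.reduceAdd, A0, A1, A2, cg00, cg01, cg02, cg03, cg04, cg05, cg11, cg12, cg13,
    cg14, cg15, cg22, cg23, cg24, cg25, cg33, cg34, cg35, cg40, cg41, cg42, cg43, cg44, cg45, kU, kV, kW, kX]
  ring

theorem k37 {R : Type*} [CommRing R] (n : R) : 0 = hc n 7 3 := by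
  simp only [hc, al, be, cs, zero_add, Nat.reduceAdd, A0, A1, A2, cg00, cg01, cg02, cg03, cg04, cg05, cg11, cg12, cg13,
    cg14, cg15, cg22, cg23, cg24, cg25, cg33, cg34, cg35, cg40, cg41, cg42, cg43, cg44, cg45, kU, kV, kW, kX]

theorem k38 {R : Type*} [CommRing R] (n : R) : 0 = hc n 8 3 := by
  simp only [hc, al, be, cs, zero_add, Nat.reduceAdd, A0, A1, A2, cg00, cg01, cg02, cg03, cg04, cg05, cg11, cg12, cg13,
    cg14, cg15, cg22, cg23, cg24, cg25, cg33, cg34, cg35, cg40, cg41, cg42, cg43, cg44, cg45, kU, kV, kW, kX]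

theorem k44 {R : Type*} [CommRing R] (n : R) : lc n 4 4 = 2*hc n 4 4 := by
  simp only [hc, lc, al, be, cs, zero_add, Nat.reduceAdd, A0, A1, A2, cg00, cg01, cg02, cg03, cg04, cg05, cg11, cg12, cg13,
    cg14, cg15, cg22, cg23, cg24, cg25, cg33, cg34, cg35, cg40, cg41, cg42, cg43, cg44, cg45, kU, kV, kW, kX]
  ring

theorem k45 {R : Type*} [CommRing R] (n : R) : lc n 4 5 = hc n 4 5 + hc n 5 4 := by
  simp only [hc, lc, al, be, cs, zero_add, Nat.reduceAdd, A0, A1, A2, cg00, cg01, cg02, cg03, cg04, cg05, cg11, cg12, cg13,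
    cg14, cg15, cg22, cg23, cg24, cg25, cg33, cg34, cg35, cg40, cg41, cg42, cg43, cg44, cg45, kU, kV, kW, kX]
  ring

theorem k46 {R : Type*} [CommRing R] (n : R) : lc n 4 6 = hc n 4 6 + hc n 6 4 := by
  simp only [hc, lc, al, be, cs, zero_add, Nat.reduceAdd, A0, A1, A2, cg00, cg01, cg02, cg03, cg04, cg05, cg11, cg12, cg13,
    cg14, cg15, cg22, cg23, cg24, cg25, cg33, cg34, cg35, cg40, cg41, cg42, cg43, cg44, cg45, kU, kV, kW, kX]
  ring

theorem k47 {R : Type*} [CommRing R] (n : R) : 0 = hc n 7 4 := by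
  simp only [hc, al, be, cs, zero_add, Nat.reduceAdd, A0, A1, A2, cg00, cg01, cg02, cg03, cg04, cg05, cg11, cg12, cg13,
    cg14, cg15, cg22, cg23, cg24, cg25, cg33, cg34, cg35, cg40, cg41, cg42, cg43, cg44, cg45, kU, kV, kW, kX]

theorem k48 {R : Type*} [CommRing R] (n : R) : 0 = hc n 8 4 := by
  simp only [hc, al, be, cs, zero_add, Nat.reduceAdd, A0, A1, A2, cg00, cg01, cg02, cg03, cg04, cg05, cg11, cg12, cg13,
    cg14, cg15, cg22, cg23, cg24, cg25, cg33, cg34, cg35, cg40, cg41, cg42, cg43, cg44, cg45, kU, kV, kW, kX]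

theorem k55 {R : Type*} [CommRing R] (n : R) : lc n 5 5 = 2*hc n 5 5 := by
  simp only [hc, lc, al, be, cs, zero_add, Nat.reduceAdd, A0, A1, A2, cg00, cg01, cg02, cg03, cg04, cg05, cg11, cg12, cg13,
    cg14, cg15, cg22, cg23, cg24, cg25, cg33, cg34, cg35, cg40, cg41, cg42, cg43, cg44, cg45, kU, kV, kW, kX]
  ring

theorem k56 {R : Type*} [CommRing R] (n : R) : lc n 5 6 = hc n 5 6 + hc n 6 5 := by
  simp only [hc, lc, al, be, cs, zero_add, Nat.reduceAdd, A0, A1, A2, cg00, cg01, cg02, cg03, cg04, cg05, cg11, cg12, cg13,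
    cg14, cg15, cg22, cg23, cg24, cg25, cg33, cg34, cg35, cg40, cg41, cg42, cg43, cg44, cg45, kU, kV, kW, kX]
  ring

theorem k57 {R : Type*} [CommRing R] (n : R) : 0 = hc n 7 5 := by
  simp only [hc, al, be, cs, zero_add, Nat.reduceAdd, A0, A1, A2, cg00, cg01, cg02, cg03, cg04, cg05, cg11, cg12, cg13,
    cg14, cg15, cg22, cg23, cg24, cg25, cg33, cg34, cg35, cg40, cg41, cg42, cg43, cg44, cg45, kU, kV, kW, kX]

theorem k58 {R : Type*} [CommRing R] (n : R) : 0 = hc n 8 5 := by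
  simp only [hc, al, be, cs, zero_add, Nat.reduceAdd, A0, A1, A2, cg00, cg01, cg02, cg03, cg04, cg05, cg11, cg12, cg13,
    cg14, cg15, cg22, cg23, cg24, cg25, cg33, cg34, cg35, cg40, cg41, cg42, cg43, cg44, cg45, kU, kV, kW, kX]

theorem k66 {R : Type*} [CommRing R] (n : R) : lc n 6 6 = 2*hc n 6 6 := by
  simp only [hc, lc, al, be, cs, zero_add, Nat.reduceAdd, A0, A1, A2, cg00, cg01, cg02, cg03, cg04, cg05, cg11, cg12, cg13,
    cg14, cg15, cg22, cg23, cg24, cg25, cg33, cg34, cg35, cg40, cg41, cg42, cg43, cg44, cg45, kU, kV, kW, kX]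
  ring

theorem k67 {R : Type*} [CommRing R] (n : R) : 0 = hc n 7 6 := by
  simp only [hc, al, be, cs, zero_add, Nat.reduceAdd, A0, A1, A2, cg00, cg01, cg02, cg03, cg04, cg05, cg11, cg12, cg13,
    cg14, cg15, cg22, cg23, cg24, cg25, cg33, cg34, cg35, cg40, cg41, cg42, cg43, cg44, cg45, kU, kV, kW, kX]

theorem k68 {R : Type*} [CommRing R] (n : R) : 0 = hc n 8 6 := by
  simp only [hc, al, be, cs, zero_add, Nat.reduceAdd, A0, A1, A2, cg00, cg01, cg02, cg03, cg04, cg05, cg11, cg12, cg13,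
    cg14, cg15, cg22, cg23, cg24, cg25, cg33, cg34, cg35, cg40, cg41, cg42, cg43, cg44, cg45, kU, kV, kW, kX]

theorem cN_eq {R : Type*} [CommRing R] (n s t : R) : cN n s t = 2*n^3*(2*(2*n+1)*(n+1)^6 * A0 n * (((s-(n-1))*(t-(n-1))*(s+t-(n-1))) * ((s-n)*(t-n)*(s+t-n)) * ((s-(n+1))*(t-(n+1))*(s+t-(n+1))))
    + A1 n * (((s-(n-1))*(t-(n-1))*(s+t-(n-1))) * ((s-n)*(t-n)*(s+t-n)) * ((s+(n+1))^2*(t+(n+1))^2))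
    - 2 * A2 n * (((s-(n-1))*(t-(n-1))*(s+t-(n-1))) * ((s+n)^2*(t+n)^2) * ((s+(n+1))^2*(t+(n+1))^2))
    - (n-1)^4 * A0 (n+1) * (((s+(n-1))^2*(t+(n-1))^2) * ((s+n)^2*(t+n)^2) * ((s+(n+1))^2*(t+(n+1))^2))) := by
  unfold cN
  simp only [mul_assoc]

theorem lc_eq {R : Type*} [CommRing R] (n s t : R) : cN n s t = sumS s t (lc n) := by
  rw [cN_eq, kU_eq, kV_eq, kW_eq, kX_eq]
  simp only [sumS_mul, sumS_add, sumS_sub]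
  rfl

theorem cert {R : Type*} [CommRing R] (n s t : R) : cN n s t =
   s^3*(s+t)*cg n (s+1) t - (s-n+1)*(s+t-n+1)*(s+n+1)^2*cg n s t
   + (t^3*(s+t)*cg n (t+1) s - (t-n+1)*(s+t-n+1)*(t+n+1)^2*cg n t s) := by
  rw [show t^3*(s+t)*cg n (t+1) s - (t-n+1)*(s+t-n+1)*(t+n+1)^2*cg n t s =
    t^3*(t+s)*cg n (t+1) s - (t-n+1)*(t+s-n+1)*(t+n+1)^2*cg n t s by rw [add_comm s t],
    hc_eq n s t, hc_eq n t s, lc_eq, sumS]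
  linear_combination k00 n*1 +
    k01 n*(t + s) +
    k02 n*(t^2 + s^2) +
    k03 n*(t^3 + s^3) +
    k04 n*(t^4 + s^4) +
    k05 n*(t^5 + s^5) +
    k06 n*(t^6 + s^6) +
    k07 n*(t^7 + s^7) +
    k08 n*(t^8 + s^8) +
    k11 n*s*t +
    k12 n*(s*t^2 + s^2*t) +
    k13 n*(s*t^3 + s^3*t) +
    k14 n*(s*t^4 + s^4*t) +
    k15 n*(s*t^5 + s^5*t) +
    k16 n*(s*t^6 + s^6*t) +
    k17 n*(s*t^7 + s^7*t) +
    k18 n*(s*t^8 + s^8*t) +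
    k22 n*s^2*t^2 +
    k23 n*(s^2*t^3 + s^3*t^2) +
    k24 n*(s^2*t^4 + s^4*t^2) +
    k25 n*(s^2*t^5 + s^5*t^2) +
    k26 n*(s^2*t^6 + s^6*t^2) +
    k27 n*(s^2*t^7 + s^7*t^2) +
    k28 n*(s^2*t^8 + s^8*t^2) +
    k33 n*s^3*t^3 +
    k34 n*(s^3*t^4 + s^4*t^3) +
    k35 n*(s^3*t^5 + s^5*t^3) +
    k36 n*(s^3*t^6 + s^6*t^3) +
    k37 n*(s^3*t^7 + s^7*t^3) +
    k38 n*(s^3*t^8 + s^8*t^3) +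
    k44 n*s^4*t^4 +
    k45 n*(s^4*t^5 + s^5*t^4) +
    k46 n*(s^4*t^6 + s^6*t^4) +
    k47 n*(s^4*t^7 + s^7*t^4) +
    k48 n*(s^4*t^8 + s^8*t^4) +
    k55 n*s^5*t^5 +
    k56 n*(s^5*t^6 + s^6*t^5) +
    k57 n*(s^5*t^7 + s^7*t^5) +
    k58 n*(s^5*t^8 + s^8*t^5) +
    k66 n*s^6*t^6 +
    k67 n*(s^6*t^7 + s^7*t^6) +
    k68 n*(s^6*t^8 + s^8*t^6)

end ZS

namespace ZS
open TrivSqZeroExt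

abbrev DA := DualNumber ℚ
abbrev DB := DualNumber DA

/-- build an element of `DB` from its four coefficients -/
def mkB (a b c d : ℚ) : DB := inl (inl a + inr c) + inr (inl b + inr d)

@[simp] theorem mkB_ff (a b c d : ℚ) : (mkB a b c d).fst.fst = a := by simp [mkB]
@[simp] theorem mkB_sf (a b c d : ℚ) : (mkB a b c d).snd.fst = b := by simp [mkB]
@[simp] theorem mkB_fs (a b c d : ℚ) : (mkB a b c d).fst.snd = c := by simp [mkB]
@[simp] theorem mkB_ss (a b c d : ℚ) : (mkB a b c d).snd.snd = d := by simp [mkB]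

theorem extB {x y : DB} (h1 : x.fst.fst = y.fst.fst) (h2 : x.snd.fst = y.snd.fst)
    (h3 : x.fst.snd = y.fst.snd) (h4 : x.snd.snd = y.snd.snd) : x = y :=
  TrivSqZeroExt.ext (TrivSqZeroExt.ext h1 h3) (TrivSqZeroExt.ext h2 h4)

theorem mul_ff (x y : DB) : (x*y).fst.fst = x.fst.fst * y.fst.fst := by simp
theorem mul_sf (x y : DB) : (x*y).snd.fst = x.fst.fst * y.snd.fst + x.snd.fst * y.fst.fst := by
  simp [DualNumber.snd_mul]
theorem mul_fs (x y : DB) : (x*y).fst.snd = x.fst.fst * y.fst.snd + x.fst.snd * y.fst.fst := by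
  simp [DualNumber.snd_mul]
theorem mul_ss (x y : DB) : (x*y).snd.snd = x.fst.fst * y.snd.snd + x.fst.snd * y.snd.fst
    + x.snd.fst * y.fst.snd + x.snd.snd * y.fst.fst := by
  simp [DualNumber.snd_mul]; ring

/-- swap the two infinitesimals -/
def swap : DB →+* DB where
  toFun x := mkB x.fst.fst x.fst.snd x.snd.fst x.snd.snd
  map_one' := by apply extB <;> simp
  map_zero' := by apply extB <;> simp
  map_add' x y := by apply extB <;> simp
  map_mul' x y := by
    apply extB <;> simp only [mkB_ff, mkB_sf, mkB_fs, mkB_ss, mul_ff, mul_sf, mul_fs, mul_ss] <;> ring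

@[simp] theorem swap_ff (x : DB) : (swap x).fst.fst = x.fst.fst := by simp [swap]
@[simp] theorem swap_sf (x : DB) : (swap x).snd.fst = x.fst.snd := by simp [swap]
@[simp] theorem swap_fs (x : DB) : (swap x).fst.snd = x.snd.fst := by simp [swap]
@[simp] theorem swap_ss (x : DB) : (swap x).snd.snd = x.snd.snd := by simp [swap]
@[simp] theorem swap_swap (x : DB) : swap (swap x) = x := by apply extB <;> simp

def iT : DA →+* DB := TrivSqZeroExt.inlHom DA DA
def iS : DA →+* DB := swap.comp iT

theorem iT_apply (a : DA) : iT a = inl a := rfl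
theorem iS_apply (a : DA) : iS a = swap (iT a) := rfl
@[simp] theorem swap_iT (a : DA) : swap (iT a) = iS a := rfl
@[simp] theorem swap_iS (a : DA) : swap (iS a) = iT a := by rw [iS_apply, swap_swap]
@[simp] theorem iT_ff (a : DA) : (iT a).fst.fst = a.fst := by simp [iT_apply]
@[simp] theorem iT_fs (a : DA) : (iT a).fst.snd = a.snd := by simp [iT_apply]
@[simp] theorem iT_sf (a : DA) : (iT a).snd.fst = 0 := by simp [iT_apply]
@[simp] theorem iT_ss (a : DA) : (iT a).snd.snd = 0 := by simp [iT_apply]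
@[simp] theorem iS_ff (a : DA) : (iS a).fst.fst = a.fst := by rw [iS_apply, swap_ff, iT_ff]
@[simp] theorem iS_fs (a : DA) : (iS a).fst.snd = 0 := by rw [iS_apply, swap_fs, iT_sf]
@[simp] theorem iS_sf (a : DA) : (iS a).snd.fst = a.snd := by rw [iS_apply, swap_sf, iT_fs]
@[simp] theorem iS_ss (a : DA) : (iS a).snd.snd = 0 := by rw [iS_apply, swap_ss, iT_ss]

/-- local coordinate at `-k` -/
def xA (k : ℕ) : DA := -(k : DA) + DualNumber.eps

@[simp] theorem xA_fst (k : ℕ) : (xA k).fst = -(k:ℚ) := by simp [xA]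
@[simp] theorem xA_snd (k : ℕ) : (xA k).snd = 1 := by simp [xA]

/-- generalised harmonic numbers -/
def Hr (r k : ℕ) : ℚ := ∑ i ∈ Finset.range k, 1 / ((i:ℚ)+1)^r

@[simp] theorem Hr_zero (r : ℕ) : Hr r 0 = 0 := by simp [Hr]
theorem Hr_succ (r k : ℕ) : Hr r (k+1) = Hr r k + 1 / ((k:ℚ)+1)^r := by
  simp [Hr, Finset.sum_range_succ]

/-- local brick `n! ε / ∏ (s+j)` at `s = -k + ε` -/
def gA (n k : ℕ) : DA :=
  inl ((n.choose k : ℚ) * (-1)^k) + inr ((n.choose k : ℚ) * (-1)^k * (Hr 1 k - Hr 1 (n-k)))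

@[simp] theorem gA_fst (n k : ℕ) : (gA n k).fst = (n.choose k : ℚ) * (-1)^k := by simp [gA]
@[simp] theorem gA_snd (n k : ℕ) :
    (gA n k).snd = (n.choose k : ℚ) * (-1)^k * (Hr 1 k - Hr 1 (n-k)) := by simp [gA]

theorem gA_of_lt {n k : ℕ} (h : n < k) : gA n k = 0 := by
  ext <;> simp [Nat.choose_eq_zero_of_lt h]

theorem gA_succ {n k : ℕ} (h : k ≤ n) :
    gA (n+1) k * (xA k + ((n:DA)+1)) = ((n:DA)+1) * gA n k := by
  have hc : ((n+1).choose k : ℚ) * ((n:ℚ) + 1 - k) = (n+1) * n.choose k := by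
    have := Nat.choose_mul_succ_eq n k
    have h2 : ((n + 1 - k : ℕ) : ℚ) = (n:ℚ) + 1 - k := by
      rw [Nat.cast_sub (by omega)]; push_cast; ring
    rw [← h2]; exact_mod_cast (by linarith : (n+1).choose k * (n+1-k) = (n+1) * n.choose k)
  have hne : (n:ℚ) + 1 - k ≠ 0 := by
    have : (k:ℚ) ≤ n := by exact_mod_cast h
    intro h0; linarith
  have hH : Hr 1 (n+1-k) = Hr 1 (n-k) + 1 / ((n:ℚ)+1-k) := by
    rw [show n + 1 - k = (n-k)+1 by omega, Hr_succ, Nat.cast_sub h]; congr 2; ring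
  have hn1 : (((n:DA)+1)).fst = (n:ℚ)+1 := by simp
  have hn2 : (((n:DA)+1)).snd = 0 := by simp
  ext
  · simp only [fst_mul, fst_add, gA_fst, xA_fst, hn1]
    linear_combination (-1)^k * hc
  · simp only [DualNumber.snd_mul, fst_add, snd_add, gA_fst, gA_snd, xA_fst, xA_snd, hn1, hn2, hH]
    have : 1 / ((n:ℚ)+1-k) * ((n:ℚ)+1-k) = 1 := by field_simp
    linear_combination (-1)^k * (Hr 1 k - Hr 1 (n-k)) * hc - ((n + 1).choose k) * (-1)^k * this

theorem eps_sq : (DualNumber.eps : DA)^2 = 0 := by rw [sq]; exact DualNumber.eps_mul_eps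

theorem xA_self (k : ℕ) : xA k + (k:DA) = DualNumber.eps := by simp [xA]

theorem gA_sq_succ (n k : ℕ) :
    gA (n+1) k^2 * (xA k + ((n:DA)+1))^2 = ((n:DA)+1)^2 * gA n k^2 := by
  rcases Nat.lt_trichotomy k (n+1) with h | h | h
  · rw [← mul_pow, gA_succ (by omega), mul_pow]
  · subst h
    rw [gA_of_lt (Nat.lt_succ_self n)]
    have := xA_self (n+1)
    push_cast at this
    rw [this, eps_sq]; simp
  · rw [gA_of_lt h, gA_of_lt (by omega : n < k)]; simp

theorem gA_shift {M k : ℕ} (h : k + 1 ≤ M) :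
    gA M k * (xA (k+1) + ((M:DA)+1)) = gA M (k+1) * xA (k+1) := by
  have hc : (M.choose (k+1) : ℚ) * ((k:ℚ)+1) = M.choose k * ((M:ℚ) - k) := by
    have := Nat.choose_succ_right_eq M k
    have h2 : ((M - k : ℕ) : ℚ) = (M:ℚ) - k := Nat.cast_sub (by omega)
    rw [← h2]; exact_mod_cast this
  have hne : (M:ℚ) - k ≠ 0 := by
    have : (k:ℚ) + 1 ≤ M := by exact_mod_cast h
    intro h0; linarith
  have hk : (k:ℚ) + 1 ≠ 0 := by positivity
  have hH : Hr 1 (M-k) = Hr 1 (M-(k+1)) + 1 / ((M:ℚ)-k) := by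
    rw [show M - k = (M-(k+1))+1 by omega, Hr_succ, Nat.cast_sub h]; congr 2; push_cast; ring
  have hn1 : (((M:DA)+1)).fst = (M:ℚ)+1 := by simp
  have hn2 : (((M:DA)+1)).snd = 0 := by simp
  have e1 : 1 / ((M:ℚ)-k) * ((M:ℚ)-k) = 1 := by field_simp
  have e2 : 1 / ((k:ℚ)+1)^1 * ((k:ℚ)+1) = 1 := by field_simp
  ext
  · simp only [fst_mul, fst_add, gA_fst, xA_fst, hn1]
    push_cast
    linear_combination (-(-1)^k) * hc
  · simp only [DualNumber.snd_mul, fst_add, snd_add, gA_fst, gA_snd, xA_fst, xA_snd, hn1, hn2, hH,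
      Hr_succ]
    push_cast
    linear_combination (-(-1)^k) * (Hr 1 k - Hr 1 (M-(k+1))) * hc
      - (M.choose k) * (-1)^k * e1 - (M.choose (k+1) : ℚ) * (-1)^k * e2

/-- `∏_{j=1}^n (x-j)` -/
def Fp {R : Type*} [CommRing R] (n : ℕ) (x : R) : R := ∏ j ∈ Finset.range n, (x - ((j:R)+1))

theorem Fp_succ {R : Type*} [CommRing R] (n : ℕ) (x : R) :
    Fp (n+1) x = Fp n x * (x - ((n:R)+1)) := by simp [Fp, Finset.prod_range_succ]

theorem map_Fp {R S : Type*} [CommRing R] [CommRing S] (f : R →+* S) (n : ℕ) (x : R) :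
    f (Fp n x) = Fp n (f x) := by simp [Fp]

/-- shifting the argument -/
theorem Fp_shift {R : Type*} [CommRing R] (n : ℕ) (x : R) :
    Fp n (x+1) * (x - (n:R)) = Fp n x * x := by
  induction n with
  | zero => simp [Fp]
  | succ n ih =>
    rw [Fp_succ, Fp_succ]; push_cast
    linear_combination (x - ((n:R)+1)) * ih

theorem Fp_one {R : Type*} [CommRing R] (n : ℕ) : Fp (n+1) (1:R) = 0 := by
  unfold Fp
  exact Finset.prod_eq_zero (i := 0) (by simp) (by simp)

theorem map_cg {R S : Type*} [CommRing R] [CommRing S] (f : R →+* S) (n s t : R) :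
    f (cg n s t) = cg (f n) (f s) (f t) := by
  simp only [cg, cg00, cg01, cg02, cg03, cg04, cg05, cg11, cg12, cg13, cg14, cg15, cg22, cg23,
    cg24, cg25, cg33, cg34, cg35, cg40, cg41, cg42, cg43, cg44, cg45, map_add, map_sub, map_mul,
    map_pow, map_neg, map_ofNat]

end ZS

namespace ZS
open TrivSqZeroExt

theorem gA_diag (k : ℕ) : gA (k+1) (k+1) * xA (k+1) = ((k:DA)+1) * gA k k := by
  have hn1 : (((k:DA)+1)).fst = (k:ℚ)+1 := by simp
  have hn2 : (((k:DA)+1)).snd = 0 := by simp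
  have e2 : 1 / ((k:ℚ)+1)^1 * ((k:ℚ)+1) = 1 := by field_simp
  ext
  · simp only [fst_mul, gA_fst, xA_fst, hn1, Nat.choose_self]
    push_cast; ring
  · simp only [DualNumber.snd_mul, gA_fst, gA_snd, xA_fst, xA_snd, hn1, hn2, Nat.choose_self,
      Nat.sub_self, Hr_succ]
    push_cast
    linear_combination (-1)^k * e2

theorem gA_prod_diag (k : ℕ) :
    gA k k * ∏ j ∈ Finset.range k, (xA (j+1)) = (k.factorial : DA) := by
  induction k with
  | zero =>
    ext <;> simp
  | succ k ih =>
    rw [Finset.prod_range_succ, Nat.factorial_succ]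
    push_cast
    linear_combination ((k:DA)+1) * ih + (∏ j ∈ Finset.range k, (xA (j+1))) * gA_diag k

theorem gA_prod {M k : ℕ} (h : k ≤ M) :
    gA M k * ∏ j ∈ (Finset.range (M+1)).erase k, (xA k + (j:DA)) = (M.factorial : DA) := by
  induction M, h using Nat.le_induction with
  | base =>
    rw [← gA_prod_diag k]
    congr 1
    have : (Finset.range (k+1)).erase k = Finset.range k := by
      ext a; simp; omega
    rw [this, ← Finset.prod_range_reflect]
    apply Finset.prod_congr rfl
    intro j hj
    have hj := Finset.mem_range.mp hj
    rw [show k - 1 - j = k - (j+1) by omega, Nat.cast_sub (by omega)]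
    simp only [xA]; push_cast; ring
  | succ M hM ih =>
    have : (Finset.range (M+1+1)).erase k = insert (M+1) ((Finset.range (M+1)).erase k) := by
      ext a; simp; omega
    rw [this, Finset.prod_insert (by simp), Nat.factorial_succ]
    have h2 := gA_succ hM
    push_cast
    linear_combination (∏ j ∈ (Finset.range (M+1)).erase k, (xA k + (j:DA))) * h2 + ((M:DA)+1) * ih

open Polynomial in
theorem sq_dvd_of_aeval {A : Type*} [CommRing A] (Q : A[X]) (a : A)
    (h : aeval ((inl a : DualNumber A) + DualNumber.eps) Q = 0) : (X - C a)^2 ∣ Q := by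
  have hf : ∀ R : A[X], (aeval ((inl a : DualNumber A) + DualNumber.eps) R).fst = R.eval a := by
    intro R
    have := Polynomial.hom_eval₂ R (algebraMap A (DualNumber A)) (fstHom A A A).toRingHom
      ((inl a : DualNumber A) + DualNumber.eps)
    rw [aeval_def]
    have h2 : (fstHom A A A).toRingHom (eval₂ (algebraMap A (DualNumber A))
      ((inl a : DualNumber A) + DualNumber.eps) R) = (eval₂ (algebraMap A (DualNumber A))
      ((inl a : DualNumber A) + DualNumber.eps) R).fst := rfl
    rw [← h2, this]
    have h3 : (fstHom A A A).toRingHom.comp (algebraMap A (DualNumber A)) = RingHom.id A := by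
      ext x; simp
    have h4 : (fstHom A A A).toRingHom ((inl a : DualNumber A) + DualNumber.eps) = a := by
      simp
    rw [h3, h4]; rfl
  have h1 : Q.eval a = 0 := by rw [← hf, h]; simp
  obtain ⟨Q1, rfl⟩ := dvd_iff_isRoot.mpr h1
  have h2 : Q1.eval a = 0 := by
    rw [map_mul] at h
    have h3 : aeval ((inl a : DualNumber A) + DualNumber.eps) (X - C a) = DualNumber.eps := by
      have h5 : algebraMap A (DualNumber A) a = inl a := rfl
      rw [map_sub, aeval_X, aeval_C, h5, add_sub_cancel_left]
    rw [h3] at h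
    have h4 := congrArg snd h
    rw [DualNumber.snd_mul] at h4
    simpa [hf] using h4
  obtain ⟨Q2, rfl⟩ := dvd_iff_isRoot.mpr h2
  exact ⟨Q2, by ring⟩

/-- coordinate in `DB` -/
def xS (k : ℕ) : DB := iS (xA k)
def xT (k : ℕ) : DB := iT (xA k)

theorem xS_eq (k : ℕ) : xS k = (inl (-(k:DA)) : DB) + DualNumber.eps := by
  apply extB <;> simp [xS]

set_option maxHeartbeats 1000000 in
open Polynomial in
theorem residue (M : ℕ) (P : DA[X]) (hP : P.natDegree ≤ 2*M+2) :
    ∃ c : DA, (P.natDegree ≤ 2*M+1 → c = 0) ∧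
      ∀ (z : DA) (u : ℕ → DA), P.eval z = 0 → (∀ k, k ≤ M → u k * (z + (k:DA)) = 1) →
        ∑ k ∈ Finset.range (M+1), ((iS (gA M k)^2 * aeval (xS k) P).fst * u k^2
          + (iS (gA M k)^2 * aeval (xS k) P).snd * u k) = c := by
  set F : ℕ → DB := fun k => iS (gA M k)^2 * aeval (xS k) P with hF
  set R := Finset.range (M+1) with hR
  set c := P.coeff (2*M+2) with hc
  set W : DA[X] := ∏ j ∈ R, (X - C (-(j:DA))) with hW
  set f : DA := (M.factorial : DA) with hf
  set V : ℕ → DA[X] := fun k => ∏ j ∈ R.erase k, (X - C (-(j:DA))) with hV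
  have hWm : (W^2).Monic := (monic_prod_of_monic _ _ (fun j _ => monic_X_sub_C _)).pow 2
  have hWd : (W^2).natDegree = 2*M+2 := by
    rw [Monic.natDegree_pow (monic_prod_of_monic _ _ (fun j _ => monic_X_sub_C _)),
      natDegree_prod_of_monic _ _ (fun j _ => monic_X_sub_C _)]
    simp only [natDegree_X_sub_C, Finset.sum_const, hR, Finset.card_range, smul_eq_mul]; ring
  have hVd : ∀ k ∈ R, (V k).natDegree ≤ M := by
    intro k hk
    rw [natDegree_prod_of_monic _ _ (fun j _ => monic_X_sub_C _)]
    simp only [natDegree_X_sub_C, Finset.sum_const, Finset.card_erase_of_mem hk, smul_eq_mul]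
    simp [hR]
  set Q : DA[X] := C (f^2) * (P - C c * W^2)
    - ∑ k ∈ R, (C (F k).fst + C (F k).snd * (X - C (-(k:DA)))) * (V k)^2 with hQ
  have hQ0 : Q = 0 := by
    have hdvd : W^2 ∣ Q := by
      rw [hW, ← Finset.prod_pow]
      refine Finset.prod_dvd_of_coprime (s := fun x : ℕ => (X - C (-(x:DA)))^2) ?_ ?_
      · intro i hi j hj hij
        show IsCoprime ((X - C (-(i:DA)))^2) ((X - C (-(j:DA)))^2)
        apply IsCoprime.pow
        apply isCoprime_X_sub_C_of_isUnit_sub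
        have : (-(i:DA) - -(j:DA)) = inl ((j:ℚ) - i) := by ext <;> simp; ring
        rw [this]
        have hne : ((j:ℚ) - i) ≠ 0 := by
          intro h0
          exact hij (by exact_mod_cast (sub_eq_zero.mp h0).symm)
        exact (isUnit_iff_ne_zero.mpr hne).map (inlHom ℚ ℚ)
      · intro k hk
        apply sq_dvd_of_aeval
        rw [← xS_eq]
        have hz : ∀ j : ℕ, aeval (xS k) (X - C (-(j:DA)) : DA[X]) = iS (xA k + (j:DA)) := by
          intro j
          have : aeval (xS k) (X - C (-(j:DA)) : DA[X]) = xS k + (j:DB) := by simp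
          rw [this, map_add, xS]; simp
        have hzk : (aeval (xS k) (X - C (-(k:DA)) : DA[X]))^2 = 0 := by
          rw [hz, xA_self, ← map_pow, eps_sq, map_zero]
        have hWk : aeval (xS k) (W^2) = 0 := by
          obtain ⟨w, hw⟩ := Finset.dvd_prod_of_mem (fun j : ℕ => (X - C (-(j:DA)) : DA[X])) hk
          rw [hW, hw, mul_pow, map_mul, map_pow, hzk, zero_mul]
        have hVk : ∀ j ∈ R, j ≠ k → aeval (xS k) (V j ^2) = 0 := by
          intro j hj hjk
          obtain ⟨w, hw⟩ := Finset.dvd_prod_of_mem (fun j : ℕ => (X - C (-(j:DA)) : DA[X]))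
            (Finset.mem_erase.mpr ⟨hjk.symm, hk⟩)
          rw [hV]; simp only
          rw [hw, mul_pow, map_mul, map_pow, hzk, zero_mul]
        have hVkk : iS (gA M k) * aeval (xS k) (V k) = (f : DA) • (1:DB) := by
          rw [hV]; simp only
          rw [map_prod, Finset.prod_congr rfl (fun j _ => hz j), ← map_prod, ← map_mul,
            gA_prod (by simpa [hR, Nat.lt_succ_iff] using hk), hf]
          apply extB <;> simp
        have hfk : algebraMap DA DB f = iS (gA M k) * aeval (xS k) (V k) := by
          rw [hVkk, Algebra.algebraMap_eq_smul_one]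
        have hFk : aeval (xS k) (C (F k).fst + C (F k).snd * (X - C (-(k:DA))) : DA[X]) = F k := by
          rw [map_add, map_mul, hz, xA_self, aeval_C, aeval_C]
          apply extB <;> simp [Algebra.algebraMap_eq_smul_one]
        rw [hQ, map_sub, map_mul, map_sub, map_mul, hWk, map_sum, Finset.sum_eq_single k]
        · rw [map_mul, hFk, aeval_C, map_pow, map_pow, hfk, hF]
          ring
        · intro j hj hjk
          rw [map_mul, hVk j hj hjk, mul_zero]
        · intro h; exact absurd hk h
    by_contra hne
    have hlt : Q.degree < (W^2).degree := by
      rw [degree_eq_natDegree hWm.ne_zero, hWd, degree_lt_iff_coeff_zero]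
      intro m hm
      have hWc : (P - C c * W^2).coeff m = 0 := by
        rw [coeff_sub, coeff_C_mul]
        rcases Nat.eq_or_lt_of_le hm with h | h
        · rw [← h]
          have : (W^2).coeff (2*M+2) = 1 := by rw [← hWd]; exact hWm
          rw [this, ← hc]; ring
        · rw [coeff_eq_zero_of_natDegree_lt (by omega : P.natDegree < m),
            coeff_eq_zero_of_natDegree_lt (by omega : (W^2).natDegree < m)]; ring
      rw [hQ, coeff_sub, coeff_C_mul, hWc, finset_sum_coeff, Finset.sum_eq_zero]
      · ring
      · intro k hk
        apply coeff_eq_zero_of_natDegree_lt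
        have h1 := hVd k hk
        have h2 : ((V k)^2).natDegree ≤ 2 * M := natDegree_pow_le.trans (by omega)
        have h3 : (C (F k).fst + C (F k).snd * (X - C (-(k:DA)))).natDegree ≤ 1 := by
          refine (natDegree_add_le _ _).trans (max_le (by simp) ?_)
          exact (natDegree_C_mul_le _ _).trans (natDegree_X_sub_C _).le
        exact lt_of_le_of_lt natDegree_mul_le (by omega)
    exact hWm.not_dvd_of_degree_lt hne hlt hdvd
  refine ⟨-(f^2 * c), ?_, ?_⟩
  · intro h
    rw [hc, coeff_eq_zero_of_natDegree_lt (by omega)]; simp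
  · intro z u hz hu
    have he := congrArg (eval z) hQ0
    rw [hQ] at he
    simp only [eval_sub, eval_mul, eval_C, eval_pow, eval_finsetSum, eval_add, hz, eval_zero,
      eval_X] at he
    set U := ∏ j ∈ R, u j with hU
    have hWz : eval z W * U = 1 := by
      rw [hW, eval_prod, hU, ← Finset.prod_mul_distrib]
      apply Finset.prod_eq_one
      intro j hj
      have := hu j (by simpa [hR, Nat.lt_succ_iff] using hj)
      simp; linear_combination this
    have hVz : ∀ k ∈ R, eval z (V k) * U = u k := by
      intro k hk
      rw [hV, hU, ← Finset.mul_prod_erase R u hk]; simp only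
      rw [eval_prod]
      have : (∏ j ∈ R.erase k, eval z (X - C (-(j:DA)))) * ∏ j ∈ R.erase k, u j = 1 := by
        rw [← Finset.prod_mul_distrib]
        apply Finset.prod_eq_one
        intro j hj
        have := hu j (by simpa [hR, Nat.lt_succ_iff] using (Finset.mem_of_mem_erase hj))
        simp; linear_combination this
      linear_combination u k * this
    have hs : ∑ k ∈ R, ((F k).fst + (F k).snd * (z - -(k:DA))) * eval z (V k)^2
        = -(f^2 * c) * eval z W^2 := by linear_combination -he
    have : ∑ k ∈ R, ((F k).fst * u k^2 + (F k).snd * u k) =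
        (∑ k ∈ R, ((F k).fst + (F k).snd * (z - -(k:DA))) * eval z (V k)^2) * U^2 := by
      rw [Finset.sum_mul]
      apply Finset.sum_congr rfl
      intro k hk
      have h1 := hVz k hk
      have h2 := hu k (by simpa [hR, Nat.lt_succ_iff] using hk)
      rw [mul_assoc, ← mul_pow, h1]
      linear_combination -((F k).snd * u k) * h2
    rw [this, hs]
    linear_combination -(f^2 * c) * (eval z W * U + 1) * hWz
end ZS

namespace ZS
open TrivSqZeroExt
set_option linter.unusedSimpArgs false

theorem map_cg00 {R S : Type*} [CommRing R] [CommRing S] (f : R →+* S) (n : R) : cg00 (f n) = f (cg00 n) := by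
  simp only [cg00, map_add, map_sub, map_mul, map_pow, map_neg, map_ofNat]
theorem map_cg01 {R S : Type*} [CommRing R] [CommRing S] (f : R →+* S) (n : R) : cg01 (f n) = f (cg01 n) := by
  simp only [cg01, map_add, map_sub, map_mul, map_pow, map_neg, map_ofNat]
theorem map_cg02 {R S : Type*} [CommRing R] [CommRing S] (f : R →+* S) (n : R) : cg02 (f n) = f (cg02 n) := by
  simp only [cg02, map_add, map_sub, map_mul, map_pow, map_neg, map_ofNat]
theorem map_cg03 {R S : Type*} [CommRing R] [CommRing S] (f : R →+* S) (n : R) : cg03 (f n) = f (cg03 n) := by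
  simp only [cg03, map_add, map_sub, map_mul, map_pow, map_neg, map_ofNat]
theorem map_cg04 {R S : Type*} [CommRing R] [CommRing S] (f : R →+* S) (n : R) : cg04 (f n) = f (cg04 n) := by
  simp only [cg04, map_add, map_sub, map_mul, map_pow, map_neg, map_ofNat]
theorem map_cg05 {R S : Type*} [CommRing R] [CommRing S] (f : R →+* S) (n : R) : cg05 (f n) = f (cg05 n) := by
  simp only [cg05, map_add, map_sub, map_mul, map_pow, map_neg, map_ofNat]
theorem map_cg11 {R S : Type*} [CommRing R] [CommRing S] (f : R →+* S) (n : R) : cg11 (f n) = f (cg11 n) := by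
  simp only [cg11, map_add, map_sub, map_mul, map_pow, map_neg, map_ofNat]
theorem map_cg12 {R S : Type*} [CommRing R] [CommRing S] (f : R →+* S) (n : R) : cg12 (f n) = f (cg12 n) := by
  simp only [cg12, map_add, map_sub, map_mul, map_pow, map_neg, map_ofNat]
theorem map_cg13 {R S : Type*} [CommRing R] [CommRing S] (f : R →+* S) (n : R) : cg13 (f n) = f (cg13 n) := by
  simp only [cg13, map_add, map_sub, map_mul, map_pow, map_neg, map_ofNat]
theorem map_cg14 {R S : Type*} [CommRing R] [CommRing S] (f : R →+* S) (n : R) : cg14 (f n) = f (cg14 n) := by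
  simp only [cg14, map_add, map_sub, map_mul, map_pow, map_neg, map_ofNat]
theorem map_cg15 {R S : Type*} [CommRing R] [CommRing S] (f : R →+* S) (n : R) : cg15 (f n) = f (cg15 n) := by
  simp only [cg15, map_add, map_sub, map_mul, map_pow, map_neg, map_ofNat]
theorem map_cg22 {R S : Type*} [CommRing R] [CommRing S] (f : R →+* S) (n : R) : cg22 (f n) = f (cg22 n) := by
  simp only [cg22, map_add, map_sub, map_mul, map_pow, map_neg, map_ofNat]
theorem map_cg23 {R S : Type*} [CommRing R] [CommRing S] (f : R →+* S) (n : R) : cg23 (f n) = f (cg23 n) := by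
  simp only [cg23, map_add, map_sub, map_mul, map_pow, map_neg, map_ofNat]
theorem map_cg24 {R S : Type*} [CommRing R] [CommRing S] (f : R →+* S) (n : R) : cg24 (f n) = f (cg24 n) := by
  simp only [cg24, map_add, map_sub, map_mul, map_pow, map_neg, map_ofNat]
theorem map_cg25 {R S : Type*} [CommRing R] [CommRing S] (f : R →+* S) (n : R) : cg25 (f n) = f (cg25 n) := by
  simp only [cg25, map_add, map_sub, map_mul, map_pow, map_neg, map_ofNat]
theorem map_cg33 {R S : Type*} [CommRing R] [CommRing S] (f : R →+* S) (n : R) : cg33 (f n) = f (cg33 n) := by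
  simp only [cg33, map_add, map_sub, map_mul, map_pow, map_neg, map_ofNat]
theorem map_cg34 {R S : Type*} [CommRing R] [CommRing S] (f : R →+* S) (n : R) : cg34 (f n) = f (cg34 n) := by
  simp only [cg34, map_add, map_sub, map_mul, map_pow, map_neg, map_ofNat]
theorem map_cg35 {R S : Type*} [CommRing R] [CommRing S] (f : R →+* S) (n : R) : cg35 (f n) = f (cg35 n) := by
  simp only [cg35, map_add, map_sub, map_mul, map_pow, map_neg, map_ofNat]
theorem map_cg40 {R S : Type*} [CommRing R] [CommRing S] (f : R →+* S) (n : R) : cg40 (f n) = f (cg40 n) := by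
  simp only [cg40, map_add, map_sub, map_mul, map_pow, map_neg, map_ofNat]
theorem map_cg41 {R S : Type*} [CommRing R] [CommRing S] (f : R →+* S) (n : R) : cg41 (f n) = f (cg41 n) := by
  simp only [cg41, map_add, map_sub, map_mul, map_pow, map_neg, map_ofNat]
theorem map_cg42 {R S : Type*} [CommRing R] [CommRing S] (f : R →+* S) (n : R) : cg42 (f n) = f (cg42 n) := by
  simp only [cg42, map_add, map_sub, map_mul, map_pow, map_neg, map_ofNat]
theorem map_cg43 {R S : Type*} [CommRing R] [CommRing S] (f : R →+* S) (n : R) : cg43 (f n) = f (cg43 n) := by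
  simp only [cg43, map_add, map_sub, map_mul, map_pow, map_neg, map_ofNat]
theorem map_cg44 {R S : Type*} [CommRing R] [CommRing S] (f : R →+* S) (n : R) : cg44 (f n) = f (cg44 n) := by
  simp only [cg44, map_add, map_sub, map_mul, map_pow, map_neg, map_ofNat]
theorem map_cg45 {R S : Type*} [CommRing R] [CommRing S] (f : R →+* S) (n : R) : cg45 (f n) = f (cg45 n) := by
  simp only [cg45, map_add, map_sub, map_mul, map_pow, map_neg, map_ofNat]

open Polynomial in
theorem natDegree_cg_left {A : Type*} [CommRing A] (n t : A) : (cg (C n) X (C t)).natDegree ≤ 4 := by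
  simp only [cg, map_cg00 Polynomial.C, map_cg01 Polynomial.C, map_cg02 Polynomial.C, map_cg03 Polynomial.C, map_cg04 Polynomial.C, map_cg05 Polynomial.C, map_cg11 Polynomial.C, map_cg12 Polynomial.C, map_cg13 Polynomial.C, map_cg14 Polynomial.C, map_cg15 Polynomial.C, map_cg22 Polynomial.C, map_cg23 Polynomial.C, map_cg24 Polynomial.C, map_cg25 Polynomial.C, map_cg33 Polynomial.C, map_cg34 Polynomial.C, map_cg35 Polynomial.C, map_cg40 Polynomial.C, map_cg41 Polynomial.C, map_cg42 Polynomial.C, map_cg43 Polynomial.C, map_cg44 Polynomial.C, map_cg45 Polynomial.C]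
  compute_degree

open Polynomial in
theorem natDegree_cg_right {A : Type*} [CommRing A] (n t : A) : (cg (C n) (C t) X).natDegree ≤ 5 := by
  simp only [cg, map_cg00 Polynomial.C, map_cg01 Polynomial.C, map_cg02 Polynomial.C, map_cg03 Polynomial.C, map_cg04 Polynomial.C, map_cg05 Polynomial.C, map_cg11 Polynomial.C, map_cg12 Polynomial.C, map_cg13 Polynomial.C, map_cg14 Polynomial.C, map_cg15 Polynomial.C, map_cg22 Polynomial.C, map_cg23 Polynomial.C, map_cg24 Polynomial.C, map_cg25 Polynomial.C, map_cg33 Polynomial.C, map_cg34 Polynomial.C, map_cg35 Polynomial.C, map_cg40 Polynomial.C, map_cg41 Polynomial.C, map_cg42 Polynomial.C, map_cg43 Polynomial.C, map_cg44 Polynomial.C, map_cg45 Polynomial.C]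
  compute_degree

def Gf {R : Type*} [CommRing R] (m : ℕ) (s t : R) : R :=
  Fp (m+1) s * Fp m t * Fp (m+1) (s+t) * (s+((m:R)+3))^2 * cg ((m:R)+2) s t

theorem map_Gf {R S : Type*} [CommRing R] [CommRing S] (f : R →+* S) (m : ℕ) (s t : R) :
    f (Gf m s t) = Gf m (f s) (f t) := by
  simp only [Gf, map_mul, map_Fp, map_pow, map_add, map_cg, map_natCast, map_ofNat]

open Polynomial in
theorem natDegree_Fp {A : Type*} [CommRing A] (n : ℕ) (p : A[X]) (hp : p.natDegree ≤ 1) :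
    (Fp n p).natDegree ≤ n := by
  induction n with
  | zero => simp [Fp]
  | succ n ih =>
    rw [Fp_succ]
    refine natDegree_mul_le_of_le ih ?_
    refine (natDegree_sub_le _ _).trans (max_le hp ?_)
    have : ((n:A[X])+1) = C ((n:A)+1) := by simp
    rw [this, natDegree_C]; exact Nat.zero_le _

open Polynomial in
theorem natDegree_Gf_left {A : Type*} [CommRing A] (m : ℕ) (t : A) :
    (Gf m X (C t)).natDegree ≤ 2*m+8 := by
  have h1 : (Fp (m+1) (X:A[X])).natDegree ≤ m+1 := natDegree_Fp _ _ natDegree_X_le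
  have h2 : (Fp m (C t)).natDegree ≤ 0 := by rw [← map_Fp]; simp
  have h3 : (Fp (m+1) (X + C t)).natDegree ≤ m+1 := natDegree_Fp _ _ (by compute_degree)
  have e : ((m:A[X])+3) = C ((m:A)+3) := by rw [map_add, map_natCast, map_ofNat]
  have e2 : ((m:A[X])+2) = C ((m:A)+2) := by rw [map_add, map_natCast, map_ofNat]
  have h4 : ((X + ((m:A[X])+3))^2).natDegree ≤ 2 := by rw [e]; compute_degree
  have h5 : (cg ((m:A[X])+2) X (C t)).natDegree ≤ 4 := by rw [e2]; exact natDegree_cg_left _ _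
  have := natDegree_mul_le_of_le (natDegree_mul_le_of_le (natDegree_mul_le_of_le
    (natDegree_mul_le_of_le h1 h2) h3) h4) h5
  exact this.trans (by omega)

open Polynomial in
theorem natDegree_Gf_right {A : Type*} [CommRing A] (m : ℕ) (s : A) :
    (Gf m (C s) X).natDegree ≤ 2*m+6 := by
  have h1 : (Fp m (X:A[X])).natDegree ≤ m := natDegree_Fp _ _ natDegree_X_le
  have h2 : (Fp (m+1) (C s)).natDegree ≤ 0 := by rw [← map_Fp]; simp
  have h3 : (Fp (m+1) (C s + X)).natDegree ≤ m+1 := natDegree_Fp _ _ (by compute_degree)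
  have e : ((m:A[X])+3) = C ((m:A)+3) := by rw [map_add, map_natCast, map_ofNat]
  have e2 : ((m:A[X])+2) = C ((m:A)+2) := by rw [map_add, map_natCast, map_ofNat]
  have h4 : ((C s + ((m:A[X])+3))^2).natDegree ≤ 0 := by rw [e, ← C_add, ← C_pow, natDegree_C]
  have h5 : (cg ((m:A[X])+2) (C s) X).natDegree ≤ 5 := by rw [e2]; exact natDegree_cg_right _ _
  have := natDegree_mul_le_of_le (natDegree_mul_le_of_le (natDegree_mul_le_of_le
    (natDegree_mul_le_of_le h2 h1) h3) h4) h5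
  exact this.trans (by omega)

theorem Gf_one {R : Type*} [CommRing R] (m : ℕ) (t : R) : Gf m 1 t = 0 := by
  simp [Gf, Fp_one]

theorem Gf_one_sub {R : Type*} [CommRing R] (m : ℕ) (s t : R) (h : s + t = 1) : Gf m s t = 0 := by
  simp [Gf, h, Fp_one]

/-- the certificate at the pole `(-k, -l)` -/
def Gk (m k l : ℕ) : DB := iS (gA (m+3) k)^2 * iT (gA (m+3) l)^2 * Gf m (xS k) (xT l)

/-- the common factor at the pole `(-k, -l)` -/
def Tk (m k l : ℕ) : DB :=
  iS (gA (m+3) k)^2 * iT (gA (m+3) l)^2 * (Fp m (xS k) * Fp m (xT l) * Fp m (xS k + xT l))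

theorem Fp_shift' {R : Type*} [CommRing R] (n : ℕ) (x : R) : Fp (n+1) (x+1) = Fp n x * x := by
  rw [← Fp_shift, Fp_succ]; ring

theorem xS_succ (k : ℕ) : xS k = xS (k+1) + 1 := by
  have : xA k = xA (k+1) + 1 := by simp only [xA]; push_cast; ring
  rw [xS, this, map_add, map_one]; rfl

theorem Gk_succ {m k : ℕ} (l : ℕ) (hk : k + 1 ≤ m+3) : Gk m k l =
    Tk m (k+1) l * (xS (k+1)^3*(xS (k+1)+xT l)*cg ((m:DB)+2) (xS (k+1)+1) (xT l)) := by
  have h := congrArg iS (gA_shift hk)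
  rw [map_mul, map_mul, map_add, map_add, map_natCast, map_one] at h
  change iS (gA (m+3) k) * (xS (k+1) + (((m+3:ℕ):DB)+1)) = iS (gA (m+3) (k+1)) * xS (k+1) at h
  push_cast at h
  simp only [Gk, Tk, Gf]
  rw [xS_succ k]
  generalize xS (k+1) = s at *
  generalize xT l = t at *
  generalize iS (gA (m+3) k) = g at *
  generalize iS (gA (m+3) (k+1)) = g' at *
  generalize iT (gA (m+3) l) = gl at *
  rw [show s + 1 + t = (s+t)+1 by ring, Fp_shift', Fp_shift']
  generalize cg ((m:DB)+2) (s+1) t = c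
  generalize Fp m s = f1
  generalize Fp m t = f2
  generalize Fp m (s+t) = f3
  linear_combination (gl^2*f1*f2*f3*s*(s+t)*c) * (g * (s + ((m:DB)+3+1)) + g'*s) * h

theorem xS_zero_cube : xS 0 ^3 = 0 := by
  have : xA 0 = DualNumber.eps := by simp [xA]
  rw [xS, this, pow_succ, ← map_pow, eps_sq, map_zero, zero_mul]

theorem Gk_last (m l : ℕ) : Gk m (m+3) l = 0 := by
  have h : (xS (m+3) + ((m:DB)+3))^2 = 0 := by
    have h2 := congrArg iS (xA_self (m+3))
    rw [map_add, map_natCast] at h2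
    change xS (m+3) + ((m+3 : ℕ):DB) = _ at h2
    push_cast at h2
    rw [h2, ← map_pow, eps_sq, map_zero]
  simp only [Gk, Gf, h, mul_zero, zero_mul]

def Gsh (m : ℕ) : ℕ → ℕ → DB
  | 0, _ => 0
  | k+1, l => Gk m k l

theorem Gsh_eq {m k : ℕ} (l : ℕ) (hk : k ≤ m+3) : Gsh m k l =
    Tk m k l * (xS k^3*(xS k+xT l)*cg ((m:DB)+2) (xS k+1) (xT l)) := by
  cases k with
  | zero => rw [xS_zero_cube]; simp [Gsh]
  | succ k => exact Gk_succ l hk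

theorem Gk_eq (m k l : ℕ) : Gk m k l = Tk m k l * ((xS k-((m:DB)+2)+1)*(xS k+xT l-((m:DB)+2)+1)
    *(xS k+((m:DB)+2)+1)^2*cg ((m:DB)+2) (xS k) (xT l)) := by
  simp only [Gk, Tk, Gf, Fp_succ]
  ring

theorem swap_Fp (m : ℕ) (x : DB) : swap (Fp m x) = Fp m (swap x) := map_Fp (R := DB) (S := DB) swap m x
theorem swap_cg (n x y : DB) : swap (cg n x y) = cg (swap n) (swap x) (swap y) :=
  map_cg (R := DB) (S := DB) swap n x y

theorem swap_Tk (m k l : ℕ) : swap (Tk m l k) = Tk m k l := by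
  simp only [Tk, map_mul, map_pow, swap_Fp, map_add, swap_iS, swap_iT, xS, xT]
  rw [add_comm (iT (xA l))]; ring

theorem cert_mul {R : Type*} [CommRing R] (T n s t : R) : T * cN n s t =
   (T * (s^3*(s+t)*cg n (s+1) t) - T * ((s-n+1)*(s+t-n+1)*(s+n+1)^2*cg n s t))
   + (T * (t^3*(t+s)*cg n (t+1) s) - T * ((t-n+1)*(t+s-n+1)*(t+n+1)^2*cg n t s)) := by
  rw [cert]; ring

end ZS

namespace ZS
open TrivSqZeroExt

theorem Tk_cN {m k l : ℕ} (hk : k ≤ m+3) (hl : l ≤ m+3) :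
    Tk m k l * cN ((m:DB)+2) (xS k) (xT l) = (Gsh m k l - Gk m k l)
      + swap (Gsh m l k - Gk m l k) := by
  have e1 : swap (xS l) = xT l := by simp [xS, xT]
  have e2 : swap (xT k) = xS k := by simp [xS, xT]
  have e3 : swap (Tk m l k) = Tk m k l := swap_Tk m k l
  have h1 : swap (Gsh m l k) =
      Tk m k l * (xT l^3*(xT l+xS k)*cg ((m:DB)+2) (xT l+1) (xS k)) := by
    rw [Gsh_eq k hl, map_mul, e3]
    simp only [map_mul, map_pow, map_sub, map_add, swap_cg, map_one, map_natCast, map_ofNat, e1, e2]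
  have h2 : swap (Gk m l k) =
      Tk m k l * ((xT l-((m:DB)+2)+1)*(xT l+xS k-((m:DB)+2)+1)
        *(xT l+((m:DB)+2)+1)^2*cg ((m:DB)+2) (xT l) (xS k)) := by
    rw [Gk_eq, map_mul, e3]
    simp only [map_mul, map_pow, map_sub, map_add, swap_cg, map_one, map_natCast, map_ofNat, e1, e2]
  rw [map_sub, h1, h2, Gsh_eq l hk, Gk_eq, cert_mul]

/-- a linear functional on `DB` -/
def pr (a b c d : ℚ) (x : DB) : ℚ := a * x.fst.fst + b * x.snd.fst + c * x.fst.snd + d * x.snd.snd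

theorem pr_add (a b c d : ℚ) (x y : DB) : pr a b c d (x+y) = pr a b c d x + pr a b c d y := by
  simp [pr]; ring
theorem pr_sub (a b c d : ℚ) (x y : DB) : pr a b c d (x-y) = pr a b c d x - pr a b c d y := by
  simp [pr]; ring
theorem pr_swap (a b c d : ℚ) (x : DB) : pr a b c d (swap x) = pr a c b d x := by
  simp [pr]; ring
theorem pr_zero (a b c d : ℚ) : pr a b c d 0 = 0 := by simp [pr]

/-- data of a functional annihilating the certificates -/
structure Func where
  α : ℕ → ℚ
  β : ℕ → ℚ
  m22 : ℕ → ℕ → ℚ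
  m12 : ℕ → ℕ → ℚ
  m21 : ℕ → ℕ → ℚ
  m11 : ℕ → ℕ → ℚ
  s22 : ∀ k l, m22 k l = m22 l k
  s12 : ∀ k l, m12 k l = m21 l k
  s11 : ∀ k l, m11 k l = m11 l k
  d22 : ∀ k l : ℕ, m22 (k+1) l - m22 k l = β l / ((k:ℚ)+1)^2
    - ((β l + β k) / ((k:ℚ)+l+1)^2 + 2*(α l + α k) / ((k:ℚ)+l+1)^3)
  d12 : ∀ k l : ℕ, m12 (k+1) l - m12 k l = β l / ((k:ℚ)+1)
    - (β l / ((k:ℚ)+l+1) + (α l + α k) / ((k:ℚ)+l+1)^2)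
  d21 : ∀ k l : ℕ, m21 (k+1) l - m21 k l = α l / ((k:ℚ)+1)^2
    - (β k / ((k:ℚ)+l+1) + (α l + α k) / ((k:ℚ)+l+1)^2)
  d11 : ∀ k l : ℕ, m11 (k+1) l - m11 k l = α l / ((k:ℚ)+1) - (α l + α k) / ((k:ℚ)+l+1)

def Func.pr (μ : Func) (k l : ℕ) (x : DB) : ℚ :=
  ZS.pr (μ.m22 k l) (μ.m12 k l) (μ.m21 k l) (μ.m11 k l) x

theorem algebraMap_DB (a : DA) : algebraMap DA DB a = iT a := rfl

open Polynomial in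
theorem aeval_Gf_left (m k : ℕ) (t : DA) : aeval (xS k) (Gf m X (C t)) = Gf m (xS k) (iT t) := by
  have h := map_Gf (R := DA[X]) (S := DB) (aeval (xS k) : DA[X] →ₐ[DA] DB).toRingHom m X (C t)
  have e1 : (aeval (xS k) : DA[X] →ₐ[DA] DB).toRingHom X = xS k := aeval_X _
  have e2 : (aeval (xS k) : DA[X] →ₐ[DA] DB).toRingHom (C t) = iT t := aeval_C _ _
  rw [e1, e2] at h
  exact h

open Polynomial in
theorem aeval_Gf_right (m k : ℕ) (t : DA) : aeval (xS k) (Gf m (C t) X) = Gf m (iT t) (xS k) := by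
  have h := map_Gf (R := DA[X]) (S := DB) (aeval (xS k) : DA[X] →ₐ[DA] DB).toRingHom m (C t) X
  have e1 : (aeval (xS k) : DA[X] →ₐ[DA] DB).toRingHom X = xS k := aeval_X _
  have e2 : (aeval (xS k) : DA[X] →ₐ[DA] DB).toRingHom (C t) = iT t := aeval_C _ _
  rw [e1, e2] at h
  exact h

/-- the inverse `1/(k+1)` -/
def u1 (k : ℕ) : DA := inl (1/((k:ℚ)+1))
/-- the inverse of `1+l+k-ε` -/
def u2 (l k : ℕ) : DA := inl (1/((k:ℚ)+l+1)) + inr (1/((k:ℚ)+l+1)^2)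

theorem u1_mul (k : ℕ) : u1 k * (1 + (k:DA)) = 1 := by
  have : (k:ℚ) + 1 ≠ 0 := by positivity
  have hn1 : ((1 + (k:DA))).fst = 1 + (k:ℚ) := by simp
  have hn2 : ((1 + (k:DA))).snd = 0 := by simp
  ext
  · rw [fst_mul, hn1]; simp [u1]; field_simp; ring
  · rw [DualNumber.snd_mul, hn1, hn2]; simp [u1]

theorem u2_mul (l k : ℕ) : u2 l k * ((1 - xA l) + (k:DA)) = 1 := by
  have : (k:ℚ) + l + 1 ≠ 0 := by positivity
  have hn1 : (((1 - xA l) + (k:DA))).fst = (k:ℚ) + l + 1 := by simp; ring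
  have hn2 : (((1 - xA l) + (k:DA))).snd = -1 := by simp
  ext
  · rw [fst_mul, hn1]; simp [u2]; field_simp
  · rw [DualNumber.snd_mul, hn1, hn2]; simp [u2]; field_simp; ring

open Polynomial in
theorem sum12 (m l : ℕ) :
    ∑ k ∈ Finset.range (m+3+1), ((Gk m k l).fst * u1 k^2 + (Gk m k l).snd * u1 k)
    = ∑ k ∈ Finset.range (m+3+1), ((Gk m k l).fst * u2 l k^2 + (Gk m k l).snd * u2 l k) := by
  set P : DA[X] := C (gA (m+3) l^2) * Gf m X (C (xA l)) with hP
  have hG : ∀ k, Gk m k l = iS (gA (m+3) k)^2 * aeval (xS k) P := by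
    intro k
    rw [hP, map_mul, aeval_C, algebraMap_DB, aeval_Gf_left, map_pow, Gk, xT]
    ring
  have hd : P.natDegree ≤ 2*(m+3)+2 :=
    (natDegree_C_mul_le _ _).trans ((natDegree_Gf_left m _).trans (by omega))
  have hev : ∀ z, P.eval z = gA (m+3) l^2 * Gf m z (xA l) := by
    intro z
    have h := map_Gf (R := DA[X]) (S := DA) (evalRingHom z) m X (C (xA l))
    rw [coe_evalRingHom, eval_X, eval_C] at h
    rw [hP, eval_mul, eval_C, h]
  obtain ⟨c, -, hc⟩ := residue (m+3) P hd
  have h1 := hc 1 u1 (by rw [hev, Gf_one, mul_zero]) (fun k _ => u1_mul k)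
  have h2 := hc (1 - xA l) (u2 l) (by rw [hev, Gf_one_sub m _ _ (by ring), mul_zero])
    (fun k _ => u2_mul l k)
  simp only [← hG] at h1 h2
  rw [h1, h2]

open Polynomial in
theorem sum3 (m k : ℕ) :
    ∑ l ∈ Finset.range (m+3+1), ((swap (Gk m k l)).fst * u2 k l^2 + (swap (Gk m k l)).snd * u2 k l)
    = 0 := by
  set P : DA[X] := C (gA (m+3) k^2) * Gf m (C (xA k)) X with hP
  have hG : ∀ l, swap (Gk m k l) = iS (gA (m+3) l)^2 * aeval (xS l) P := by
    intro l
    have e : swap (Gf m (xS k) (xT l)) = Gf m (swap (xS k)) (swap (xT l)) :=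
      map_Gf (R := DB) (S := DB) swap m _ _
    have e1 : swap (xS k) = iT (xA k) := by simp [xS]
    have e2 : swap (xT l) = xS l := by simp [xS, xT]
    rw [Gk, map_mul, map_mul, map_pow, map_pow, swap_iS, swap_iT, e, e1, e2,
      hP, map_mul, aeval_C, algebraMap_DB, aeval_Gf_right, map_pow]
    ring
  have hd : P.natDegree ≤ 2*(m+3)+1 :=
    (natDegree_C_mul_le _ _).trans ((natDegree_Gf_right m _).trans (by omega))
  have hev : ∀ z, P.eval z = gA (m+3) k^2 * Gf m (xA k) z := by
    intro z
    have h := map_Gf (R := DA[X]) (S := DA) (evalRingHom z) m (C (xA k)) X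
    rw [coe_evalRingHom, eval_X, eval_C] at h
    rw [hP, eval_mul, eval_C, h]
  obtain ⟨c, hc0, hc⟩ := residue (m+3) P (by omega)
  have h2 := hc (1 - xA k) (u2 k) (by rw [hev, Gf_one_sub m _ _ (by ring), mul_zero])
    (fun l _ => u2_mul k l)
  simp only [← hG] at h2
  rw [h2, hc0 hd]

theorem fst_sum' (s : Finset ℕ) (f : ℕ → DA) : (∑ k ∈ s, f k).fst = ∑ k ∈ s, (f k).fst :=
  map_sum (fstHom ℚ ℚ ℚ) f s
theorem snd_sum' (s : Finset ℕ) (f : ℕ → DA) : (∑ k ∈ s, f k).snd = ∑ k ∈ s, (f k).snd :=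
  map_sum (sndHom ℚ ℚ) f s

theorem u1_fst (k : ℕ) : (u1 k).fst = 1/((k:ℚ)+1) := by simp [u1]
theorem u1_snd (k : ℕ) : (u1 k).snd = 0 := by simp [u1]
theorem u2_fst (l k : ℕ) : (u2 l k).fst = 1/((k:ℚ)+l+1) := by simp [u2]
theorem u2_snd (l k : ℕ) : (u2 l k).snd = 1/((k:ℚ)+l+1)^2 := by simp [u2]

theorem comb_fst (x : DB) (u : DA) : (x.fst * u^2 + x.snd * u).fst
    = x.fst.fst * u.fst^2 + x.snd.fst * u.fst := by simp
theorem comb_snd (x : DB) (u : DA) : (x.fst * u^2 + x.snd * u).snd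
    = x.fst.snd * u.fst^2 + 2 * x.fst.fst * u.fst * u.snd
      + x.snd.fst * u.snd + x.snd.snd * u.fst := by
  simp [sq, DualNumber.snd_mul]; ring

theorem sum_delta (μ : Func) (m : ℕ) :
    ∑ l ∈ Finset.range (m+3+1), ∑ k ∈ Finset.range (m+3+1),
      (μ.pr (k+1) l (Gk m k l) - μ.pr k l (Gk m k l)) = 0 := by
  set R := Finset.range (m+3+1)
  have key : ∀ k l : ℕ, μ.pr (k+1) l (Gk m k l) - μ.pr k l (Gk m k l) =
      (μ.β l * ((Gk m k l).fst * u1 k^2 + (Gk m k l).snd * u1 k).fst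
        + μ.α l * ((Gk m k l).fst * u1 k^2 + (Gk m k l).snd * u1 k).snd)
      - (μ.β l * ((Gk m k l).fst * u2 l k^2 + (Gk m k l).snd * u2 l k).fst
        + μ.α l * ((Gk m k l).fst * u2 l k^2 + (Gk m k l).snd * u2 l k).snd)
      - (μ.β k * ((swap (Gk m k l)).fst * u2 k l^2 + (swap (Gk m k l)).snd * u2 k l).fst
        + μ.α k * ((swap (Gk m k l)).fst * u2 k l^2 + (swap (Gk m k l)).snd * u2 k l).snd) := by
    intro k l
    have h22 := μ.d22 k l
    have h12 := μ.d12 k l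
    have h21 := μ.d21 k l
    have h11 := μ.d11 k l
    simp only [comb_fst, comb_snd, u1_fst, u1_snd, u2_fst, u2_snd, swap_ff, swap_fs, swap_sf,
      swap_ss, Func.pr, pr]
    rw [show (l:ℚ)+k+1 = (k:ℚ)+l+1 by ring]
    generalize Gk m k l = x at *
    have hN : (k:ℚ)+l+1 ≠ 0 := by positivity
    have hk : (k:ℚ)+1 ≠ 0 := by positivity
    generalize (k:ℚ)+l+1 = N at *
    generalize (k:ℚ)+1 = K at *
    have e1 : μ.m22 (k+1) l = μ.m22 k l + (μ.β l / K^2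
      - ((μ.β l + μ.β k) / N^2 + 2*(μ.α l + μ.α k) / N^3)) := by rw [← h22]; ring
    have e2 : μ.m12 (k+1) l = μ.m12 k l + (μ.β l / K
      - (μ.β l / N + (μ.α l + μ.α k) / N^2)) := by rw [← h12]; ring
    have e3 : μ.m21 (k+1) l = μ.m21 k l + (μ.α l / K^2
      - (μ.β k / N + (μ.α l + μ.α k) / N^2)) := by rw [← h21]; ring
    have e4 : μ.m11 (k+1) l = μ.m11 k l + (μ.α l / K - (μ.α l + μ.α k) / N) := by rw [← h11]; ring
    rw [e1, e2, e3, e4]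
    simp only [div_eq_mul_inv, one_mul, inv_pow]
    ring
  simp only [key, Finset.sum_sub_distrib, Finset.sum_add_distrib, ← Finset.mul_sum]
  have h3 : ∀ f g : ℕ → ℕ → ℚ, (∀ k ∈ R, ∑ l ∈ R, f k l = 0) → (∀ k ∈ R, ∑ l ∈ R, g k l = 0) →
      ∑ l ∈ R, ∑ k ∈ R, μ.β k * f k l + ∑ l ∈ R, ∑ k ∈ R, μ.α k * g k l = 0 := by
    intro f g hf hg
    rw [Finset.sum_comm, Finset.sum_comm (s := R) (t := R) (f := fun l k => μ.α k * g k l)]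
    simp only [← Finset.mul_sum]
    rw [Finset.sum_eq_zero, Finset.sum_eq_zero, add_zero]
    · intro k hk; rw [hg k hk, mul_zero]
    · intro k hk; rw [hf k hk, mul_zero]
  rw [h3, sub_zero]
  · simp only [← fst_sum', ← snd_sum', R, sum12]
    ring
  · intro k _; rw [← fst_sum', sum3]; rfl
  · intro k _; rw [← snd_sum', sum3]; rfl

/-- The functional kills the certified combination. -/
theorem theta_zero (μ : Func) (m : ℕ) :
    ∑ k ∈ Finset.range (m+3+1), ∑ l ∈ Finset.range (m+3+1),
      μ.pr k l (Tk m k l * cN ((m:DB)+2) (xS k) (xT l)) = 0 := by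
  set R := Finset.range (m+3+1) with hR
  have hpr_sub : ∀ k l x y, μ.pr k l (x - y) = μ.pr k l x - μ.pr k l y :=
    fun k l x y => pr_sub _ _ _ _ x y
  have hpr_add : ∀ k l x y, μ.pr k l (x + y) = μ.pr k l x + μ.pr k l y :=
    fun k l x y => pr_add _ _ _ _ x y
  have hpr_swap : ∀ k l x, μ.pr k l (swap x) = μ.pr l k x := by
    intro k l x
    simp only [Func.pr, pr_swap]
    rw [μ.s22 k l, μ.s12 k l, μ.s11 k l, ← μ.s12 l k]
  have h1 : ∑ k ∈ R, ∑ l ∈ R, μ.pr k l (Tk m k l * cN ((m:DB)+2) (xS k) (xT l))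
     = ∑ k ∈ R, ∑ l ∈ R, (μ.pr k l (Gsh m k l - Gk m k l) + μ.pr l k (Gsh m l k - Gk m l k)) := by
    refine Finset.sum_congr rfl fun k hk => Finset.sum_congr rfl fun l hl => ?_
    rw [Tk_cN (by simpa [hR, Nat.lt_succ_iff] using hk) (by simpa [hR, Nat.lt_succ_iff] using hl),
      hpr_add, hpr_swap]
  have h2 : ∑ l ∈ R, ∑ k ∈ R, μ.pr k l (Gsh m k l - Gk m k l) = 0 := by
    rw [← sum_delta μ m]
    refine Finset.sum_congr rfl fun l _ => ?_
    simp only [hpr_sub, Finset.sum_sub_distrib]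
    congr 1
    rw [hR, Finset.sum_range_succ', Finset.sum_range_succ _ (m+3), Gk_last]
    simp [Gsh, Func.pr, pr_zero]
  rw [h1]
  simp only [Finset.sum_add_distrib]
  rw [h2, Finset.sum_comm, h2, add_zero]
end ZS

namespace ZS
open TrivSqZeroExt

/-- the summand at the pole `(-k, -l)`, without the factor `1/n!^3` -/
def Jk (n k l : ℕ) : DB :=
  iS (gA n k)^2 * iT (gA n l)^2 * (Fp n (xS k) * Fp n (xT l) * Fp n (xS k + xT l))

theorem iS_sq_succ (n k : ℕ) : iS (gA (n+1) k)^2 * (xS k + ((n:DB)+1))^2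
    = ((n:DB)+1)^2 * iS (gA n k)^2 := by
  have h := congrArg iS (gA_sq_succ n k)
  simpa only [map_mul, map_pow, map_add, map_natCast, map_one, xS] using h

theorem iT_sq_succ (n k : ℕ) : iT (gA (n+1) k)^2 * (xT k + ((n:DB)+1))^2
    = ((n:DB)+1)^2 * iT (gA n k)^2 := by
  have h := congrArg iT (gA_sq_succ n k)
  simpa only [map_mul, map_pow, map_add, map_natCast, map_one, xT] using h

theorem cN_comb {R : Type*} [CommRing R] (s t g0 g1 g2 g3 h0 h1 h2 h3 f T : R)
    (n : R)
    (hg1 : g1 * (s + (n-1))^2 = (n-1)^2 * g0) (hg2 : g2 * (s + n)^2 = n^2 * g1)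
    (hg3 : g3 * (s + (n+1))^2 = (n+1)^2 * g2)
    (hh1 : h1 * (t + (n-1))^2 = (n-1)^2 * h0) (hh2 : h2 * (t + n)^2 = n^2 * h1)
    (hh3 : h3 * (t + (n+1))^2 = (n+1)^2 * h2) (hT : T = g3 * h3 * f) :
    T * cN n s t = 2*n^3*(2*(2*n+1)*(n+1)^6 * A0 n *
        (g3*h3*(f * ((s-(n-1))*(t-(n-1))*(s+t-(n-1))) * ((s-n)*(t-n)*(s+t-n))
          * ((s-(n+1))*(t-(n+1))*(s+t-(n+1)))))
      + A1 n * (n+1)^4 * (g2*h2*(f * ((s-(n-1))*(t-(n-1))*(s+t-(n-1))) * ((s-n)*(t-n)*(s+t-n))))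
      - 2 * A2 n * ((n+1)*n)^4 * (g1*h1*(f * ((s-(n-1))*(t-(n-1))*(s+t-(n-1)))))
      - (n-1)^4 * A0 (n+1) * ((n+1)*n*(n-1))^4 * (g0*h0*f)) := by
  have a3 : g3*h3*((s+(n+1))^2*(t+(n+1))^2) = (n+1)^4*(g2*h2) := by
    linear_combination (h3 * (t + (n+1))^2) * hg3 + ((n+1)^2 * g2) * hh3
  have a2 : g2*h2*((s+n)^2*(t+n)^2) = n^4*(g1*h1) := by
    linear_combination (h2 * (t + n)^2) * hg2 + (n^2 * g1) * hh2
  have a1 : g1*h1*((s+(n-1))^2*(t+(n-1))^2) = (n-1)^4*(g0*h0) := by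
    linear_combination (h1 * (t + (n-1))^2) * hg1 + ((n-1)^2 * g0) * hh1
  rw [hT, cN]
  generalize A0 n = b0
  generalize A1 n = b1
  generalize A2 n = b2
  generalize A0 (n+1) = b3
  generalize g3*h3 = G3 at *
  generalize g2*h2 = G2 at *
  generalize g1*h1 = G1 at *
  generalize g0*h0 = G0 at *
  generalize (s+(n+1))^2*(t+(n+1))^2 = d3 at *
  generalize (s+n)^2*(t+n)^2 = d2 at *
  generalize (s+(n-1))^2*(t+(n-1))^2 = d1 at *
  generalize (s-(n-1))*(t-(n-1))*(s+t-(n-1)) = n1 at *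
  generalize (s-n)*(t-n)*(s+t-n) = n2 at *
  generalize (s-(n+1))*(t-(n+1))*(s+t-(n+1)) = n3 at *
  linear_combination 2*n^3*f*((b1*n1*n2 - 2*b2*n1*d2 - (n-1)^4*b3*d1*d2) * a3
    + (n+1)^4 * (-2*b2*n1 - (n-1)^4*b3*d1) * a2
    - (n+1)^4*n^4*(n-1)^4*b3 * a1)

set_option maxHeartbeats 1000000 in
theorem Tk_cN_J (m k l : ℕ) (n : DB) (hn : n = (m:DB)+2) : Tk m k l * cN n (xS k) (xT l)
    = 2*n^3*(2*(2*n+1)*(n+1)^6 * A0 n * Jk (m+3) k l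
      + A1 n * (n+1)^4 * Jk (m+2) k l
      - 2 * A2 n * ((n+1)*n)^4 * Jk (m+1) k l
      - (n-1)^4 * A0 (n+1) * ((n+1)*n*(n-1))^4 * Jk m k l) := by
  have c1 : (m:DB)+1 = n - 1 := by rw [hn]; ring
  have c2 : ((m+1:ℕ):DB)+1 = n := by rw [hn]; push_cast; ring
  have c3 : ((m+2:ℕ):DB)+1 = n+1 := by rw [hn]; push_cast; ring
  have hs1 := iS_sq_succ m k
  have hs2 := iS_sq_succ (m+1) k
  have hs3 := iS_sq_succ (m+2) k
  have ht1 := iT_sq_succ m l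
  have ht2 := iT_sq_succ (m+1) l
  have ht3 := iT_sq_succ (m+2) l
  rw [c1] at hs1 ht1
  rw [c2] at hs2 ht2
  rw [c3] at hs3 ht3
  have key := cN_comb (xS k) (xT l) _ _ _ _ _ _ _ _
    (Fp m (xS k) * Fp m (xT l) * Fp m (xS k + xT l)) (Tk m k l) n hs1 hs2 hs3 ht1 ht2 ht3 (by rw [Tk])
  rw [key]
  have f1 : ∀ x : DB, Fp (m+1) x = Fp m x * (x - (n-1)) := fun x => by rw [Fp_succ, c1]
  have f2 : ∀ x : DB, Fp (m+2) x = Fp m x * (x - (n-1)) * (x - n) := fun x => by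
    rw [Fp_succ, f1, c2]
  have f3 : ∀ x : DB, Fp (m+3) x = Fp m x * (x - (n-1)) * (x - n) * (x - (n+1)) := fun x => by
    rw [Fp_succ, f2, c3]
  have j1 : Jk (m+1) k l = iS (gA (m+1) k)^2 * iT (gA (m+1) l)^2 *
      (Fp m (xS k) * Fp m (xT l) * Fp m (xS k + xT l) *
        ((xS k-(n-1))*(xT l-(n-1))*(xS k+xT l-(n-1)))) := by
    rw [Jk, f1, f1, f1]; ring
  have j2 : Jk (m+2) k l = iS (gA (m+2) k)^2 * iT (gA (m+2) l)^2 *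
      (Fp m (xS k) * Fp m (xT l) * Fp m (xS k + xT l) *
        ((xS k-(n-1))*(xT l-(n-1))*(xS k+xT l-(n-1))) * ((xS k-n)*(xT l-n)*(xS k+xT l-n))) := by
    rw [Jk, f2, f2, f2]; ring
  have j3 : Jk (m+3) k l = iS (gA (m+3) k)^2 * iT (gA (m+3) l)^2 *
      (Fp m (xS k) * Fp m (xT l) * Fp m (xS k + xT l) *
        ((xS k-(n-1))*(xT l-(n-1))*(xS k+xT l-(n-1))) * ((xS k-n)*(xT l-n)*(xS k+xT l-n))
        * ((xS k-(n+1))*(xT l-(n+1))*(xS k+xT l-(n+1)))) := by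
    rw [Jk, f3, f3, f3]; ring
  rw [j1, j2, j3, Jk]

/-- scalars -/
def io : ℚ →+* DB := iT.comp (inlHom ℚ ℚ)

theorem pr_io (a b c d r : ℚ) (x : DB) : pr a b c d (io r * x) = r * pr a b c d x := by
  have h1 : (io r).fst.fst = r := by simp [io]
  have h2 : (io r).snd.fst = 0 := by simp [io]
  have h3 : (io r).fst.snd = 0 := by simp [io]
  have h4 : (io r).snd.snd = 0 := by simp [io]
  simp only [pr, mul_ff, mul_sf, mul_fs, mul_ss, h1, h2, h3, h4]; ring

theorem io_natCast (m : ℕ) : io (m:ℚ) = (m:DB) := map_natCast io m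
theorem io_A0 (x : ℚ) : A0 (io x) = io (A0 x) := by
  simp only [A0, map_add, map_sub, map_mul, map_pow, map_ofNat]
theorem io_A1 (x : ℚ) : A1 (io x) = io (A1 x) := by
  simp only [A1, map_add, map_sub, map_mul, map_pow, map_ofNat]
theorem io_A2 (x : ℚ) : A2 (io x) = io (A2 x) := by
  simp only [A2, map_add, map_sub, map_mul, map_pow, map_ofNat]

theorem Jk_zero_left {n k : ℕ} (l : ℕ) (h : n < k) : Jk n k l = 0 := by
  simp only [Jk, gA_of_lt h, map_zero]; ring
theorem Jk_zero_right {n l : ℕ} (k : ℕ) (h : n < l) : Jk n k l = 0 := by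
  simp only [Jk, gA_of_lt h, map_zero]; ring

/-- the total -/
def Sm (μ : Func) (n : ℕ) : ℚ :=
  ∑ k ∈ Finset.range (n+1), ∑ l ∈ Finset.range (n+1), μ.pr k l (Jk n k l)

theorem Func.pr_zero (μ : Func) (k l : ℕ) : μ.pr k l 0 = 0 := ZS.pr_zero _ _ _ _

theorem Sm_ext (μ : Func) {n B : ℕ} (h : n ≤ B) :
    ∑ k ∈ Finset.range (B+1), ∑ l ∈ Finset.range (B+1), μ.pr k l (Jk n k l) = Sm μ n := by
  have hsub : Finset.range (n+1) ⊆ Finset.range (B+1) := Finset.range_subset_range.mpr (by omega)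
  rw [Sm, ← Finset.sum_subset hsub]
  · refine Finset.sum_congr rfl fun k _ => ?_
    rw [← Finset.sum_subset hsub]
    intro l _ hl
    rw [Jk_zero_right _ (by simpa using hl), μ.pr_zero]
  · intro k _ hk
    refine Finset.sum_eq_zero fun l _ => ?_
    rw [Jk_zero_left _ (by simpa using hk), μ.pr_zero]

theorem Sm_rec (μ : Func) (m : ℕ) (n : ℚ) (hn : n = (m:ℚ)+2) :
    2*n^3*(2*(2*n+1)*(n+1)^6 * A0 n) * Sm μ (m+3)
      + 2*n^3*(A1 n * (n+1)^4) * Sm μ (m+2)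
      - 2*n^3*(2 * A2 n * ((n+1)*n)^4) * Sm μ (m+1)
      - 2*n^3*((n-1)^4 * A0 (n+1) * ((n+1)*n*(n-1))^4) * Sm μ m = 0 := by
  have h := theta_zero μ m
  have hio : (m:DB)+2 = io n := by rw [hn, map_add, io_natCast, map_ofNat]
  have hterm : ∀ k l, Tk m k l * cN ((m:DB)+2) (xS k) (xT l) =
      io (2*n^3*(2*(2*n+1)*(n+1)^6 * A0 n)) * Jk (m+3) k l
      + io (2*n^3*(A1 n * (n+1)^4)) * Jk (m+2) k l
      - io (2*n^3*(2 * A2 n * ((n+1)*n)^4)) * Jk (m+1) k l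
      - io (2*n^3*((n-1)^4 * A0 (n+1) * ((n+1)*n*(n-1))^4)) * Jk m k l := by
    intro k l
    have e1 : io n + 1 = io (n+1) := by rw [map_add, map_one]
    rw [hio, Tk_cN_J m k l (io n) hio.symm, e1, io_A0, io_A0, io_A1, io_A2]
    simp only [map_add, map_sub, map_mul, map_pow, map_ofNat, map_one]
    ring
  have hp : ∀ k l, μ.pr k l (Tk m k l * cN ((m:DB)+2) (xS k) (xT l)) =
      (2*n^3*(2*(2*n+1)*(n+1)^6 * A0 n)) * μ.pr k l (Jk (m+3) k l)
      + (2*n^3*(A1 n * (n+1)^4)) * μ.pr k l (Jk (m+2) k l)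
      - (2*n^3*(2 * A2 n * ((n+1)*n)^4)) * μ.pr k l (Jk (m+1) k l)
      - (2*n^3*((n-1)^4 * A0 (n+1) * ((n+1)*n*(n-1))^4)) * μ.pr k l (Jk m k l) := by
    intro k l
    rw [hterm]
    simp only [Func.pr, pr_sub, pr_add, pr_io]
  simp only [hp, Finset.sum_sub_distrib, Finset.sum_add_distrib, ← Finset.mul_sum] at h
  rw [Sm_ext μ (by omega : m+3 ≤ m+3), Sm_ext μ (by omega : m+2 ≤ m+3),
    Sm_ext μ (by omega : m+1 ≤ m+3), Sm_ext μ (by omega : m ≤ m+3)] at h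
  exact h

/-- the normalising constant -/
def cc (n : ℕ) : ℚ := (n.centralBinom : ℚ) / (n.factorial : ℚ)^3

theorem cc_succ (n : ℕ) : ((n:ℚ)+1)^4 * cc (n+1) = 2*(2*(n:ℚ)+1) * cc n := by
  have h := Nat.succ_mul_centralBinom_succ n
  have h' : ((n:ℚ)+1) * ((n+1).centralBinom : ℚ) = 2*(2*(n:ℚ)+1) * n.centralBinom := by
    exact_mod_cast h
  have hf : (n.factorial : ℚ) ≠ 0 := by exact_mod_cast n.factorial_ne_zero
  have hn : (n:ℚ)+1 ≠ 0 := by positivity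
  rw [cc, cc, Nat.factorial_succ]
  push_cast
  field_simp
  linear_combination h'

def Ym (μ : Func) (n : ℕ) : ℚ := cc n * Sm μ n

theorem Ym_rec (μ : Func) (m : ℕ) (n : ℚ) (hn : n = (m:ℚ)+2) :
    (n+1)^6 * A0 n * Ym μ (m+3) + A1 n * Ym μ (m+2) - 4*(2*n-1) * A2 n * Ym μ (m+1)
      - 4*(n-1)^4*(2*n-1)*(2*n-3) * A0 (n+1) * Ym μ m = 0 := by
  have h := Sm_rec μ m n hn
  have c1 := cc_succ m
  have c2 := cc_succ (m+1)
  have c3 := cc_succ (m+2)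
  push_cast at c1 c2 c3
  rw [show (m:ℚ) = n - 2 by rw [hn]; ring] at c1 c2 c3
  have hp : n + 1 ≠ 0 := by rw [hn]; positivity
  have hp0 : n ≠ 0 := by rw [hn]; positivity
  simp only [Ym, show m+1+1 = m+2 from rfl, show m+2+1 = m+3 from rfl] at *
  generalize Sm μ (m+3) = S3 at *
  generalize Sm μ (m+2) = S2 at *
  generalize Sm μ (m+1) = S1 at *
  generalize Sm μ m = S0 at *
  generalize cc (m+3) = d3 at *
  generalize cc (m+2) = d2 at *
  generalize cc (m+1) = d1 at *
  generalize cc m = d0 at *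
  generalize A0 n = b0 at *
  generalize A1 n = b1 at *
  generalize A2 n = b2 at *
  generalize A0 (n+1) = b3 at *
  have hne : 2*n^3*(n+1)^4 ≠ 0 := by positivity
  apply mul_left_cancel₀ hne
  rw [mul_zero]
  linear_combination d2 * h + (2*n^3) * ((n+1)^6*b0*S3 * c3 + 2*b2*S1*(n+1)^4 * c2
    + (n+1)^4*(n-1)^4*b3*S0 * ((n-1)^4 * c2 + 2*(2*n-1) * c1))
end ZS

namespace ZS
open TrivSqZeroExt

/-- the function with prescribed differences -/
def Em (f g : ℕ → ℕ → ℚ) (k l : ℕ) : ℚ :=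
  ∑ j ∈ Finset.range l, g j 0 + ∑ i ∈ Finset.range k, f i l

theorem Em_succ (f g : ℕ → ℕ → ℚ) (k l : ℕ) : Em f g (k+1) l - Em f g k l = f k l := by
  rw [Em, Em, Finset.sum_range_succ]; ring

theorem Em_succ_right (f g : ℕ → ℕ → ℚ)
    (h : ∀ k l, f k (l+1) - f k l = g l (k+1) - g l k) (k l : ℕ) :
    Em f g k (l+1) - Em f g k l = g l k := by
  induction k with
  | zero => simp [Em, Finset.sum_range_succ]
  | succ k ih => linear_combination ih + Em_succ f g k (l+1) - Em_succ f g k l + h k l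

theorem Em_symm (f g : ℕ → ℕ → ℚ)
    (h : ∀ k l, f k (l+1) - f k l = g l (k+1) - g l k) (k l : ℕ) :
    Em f g k l = Em g f l k := by
  induction l with
  | zero => simp [Em]
  | succ l ih => linear_combination ih + Em_succ_right f g h k l - Em_succ g f l k

section
variable (α β : ℕ → ℚ)
def f22 (k l : ℕ) : ℚ := β l / ((k:ℚ)+1)^2
    - ((β l + β k) / ((k:ℚ)+l+1)^2 + 2*(α l + α k) / ((k:ℚ)+l+1)^3)
def f12 (k l : ℕ) : ℚ := β l / ((k:ℚ)+1) - (β l / ((k:ℚ)+l+1) + (α l + α k) / ((k:ℚ)+l+1)^2)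
def f21 (k l : ℕ) : ℚ := α l / ((k:ℚ)+1)^2 - (β k / ((k:ℚ)+l+1) + (α l + α k) / ((k:ℚ)+l+1)^2)
def f11 (k l : ℕ) : ℚ := α l / ((k:ℚ)+1) - (α l + α k) / ((k:ℚ)+l+1)
end

def aP (k : ℕ) : ℚ := Hr 2 k
def bP (k : ℕ) : ℚ := 2 * Hr 3 k

theorem aP_succ (k : ℕ) : aP (k+1) = aP k + 1/((k:ℚ)+1)^2 := by simp [aP, Hr_succ]
theorem bP_succ (k : ℕ) : bP (k+1) = bP k + 2/((k:ℚ)+1)^3 := by simp [bP, Hr_succ]; ring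

theorem c22 (k l : ℕ) : f22 aP bP k (l+1) - f22 aP bP k l = f22 aP bP l (k+1) - f22 aP bP l k := by
  simp only [f22, aP_succ, bP_succ]
  push_cast
  rw [show (l:ℚ)+k+1 = (k:ℚ)+l+1 by ring, show (l:ℚ)+(k+1)+1 = (k+1)+(l+1) by ring,
    show (k:ℚ)+(l+1)+1 = (k+1)+(l+1) by ring]
  have h3 : ((k:ℚ)+1)+(l+1) ≠ 0 := by positivity
  have hk : (k:ℚ)+1 ≠ 0 := by positivity
  have hl : (l:ℚ)+1 ≠ 0 := by positivity
  generalize aP k = a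
  generalize aP l = a'
  generalize bP k = b
  generalize bP l = b'
  have key : ∀ K L : ℚ, K ≠ 0 → L ≠ 0 → K + L ≠ 0 →
    2/L^3/K^2 - (2/L^3/(K+L)^2 + 2*(1/L^2)/(K+L)^3)
      - (2/K^3/L^2 - (2/K^3/(K+L)^2 + 2*(1/K^2)/(K+L)^3)) = 0 := by
    intro K L h1 h2 h3; field_simp; ring
  have := key _ _ hk hl h3
  linear_combination this

theorem c12 (k l : ℕ) : f12 aP bP k (l+1) - f12 aP bP k l = f21 aP bP l (k+1) - f21 aP bP l k := by
  simp only [f12, f21, aP_succ, bP_succ]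
  push_cast
  rw [show (l:ℚ)+k+1 = (k:ℚ)+l+1 by ring, show (l:ℚ)+(k+1)+1 = (k+1)+(l+1) by ring,
    show (k:ℚ)+(l+1)+1 = (k+1)+(l+1) by ring]
  have h3 : ((k:ℚ)+1)+(l+1) ≠ 0 := by positivity
  have hk : (k:ℚ)+1 ≠ 0 := by positivity
  have hl : (l:ℚ)+1 ≠ 0 := by positivity
  generalize aP k = a
  generalize aP l = a'
  generalize bP k = b
  generalize bP l = b'
  have key : ∀ K L : ℚ, K ≠ 0 → L ≠ 0 → K + L ≠ 0 →
    2/L^3/K - (2/L^3/(K+L) + (1/L^2)/(K+L)^2)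
      - (1/K^2/L^2 - (1/K^2)/(K+L)^2) = 0 := by
    intro K L h1 h2 h3; field_simp; ring
  have := key _ _ hk hl h3
  linear_combination this

theorem c11 (k l : ℕ) : f11 aP k (l+1) - f11 aP k l = f11 aP l (k+1) - f11 aP l k := by
  simp only [f11, aP_succ]
  push_cast
  rw [show (l:ℚ)+k+1 = (k:ℚ)+l+1 by ring, show (l:ℚ)+(k+1)+1 = (k+1)+(l+1) by ring,
    show (k:ℚ)+(l+1)+1 = (k+1)+(l+1) by ring]
  have h3 : ((k:ℚ)+1)+(l+1) ≠ 0 := by positivity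
  have hk : (k:ℚ)+1 ≠ 0 := by positivity
  have hl : (l:ℚ)+1 ≠ 0 := by positivity
  generalize aP k = a
  generalize aP l = a'
  have key : ∀ K L : ℚ, K ≠ 0 → L ≠ 0 → K + L ≠ 0 →
    1/L^2/K - (1/L^2)/(K+L) - (1/K^2/L - (1/K^2)/(K+L)) = 0 := by
    intro K L h1 h2 h3; field_simp; ring
  have := key _ _ hk hl h3
  linear_combination this

/-- the functional for `p_n` -/
def muP : Func where
  α := aP
  β := bP
  m22 := Em (f22 aP bP) (f22 aP bP)
  m12 := Em (f12 aP bP) (f21 aP bP)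
  m21 := Em (f21 aP bP) (f12 aP bP)
  m11 := Em (f11 aP) (f11 aP)
  s22 := Em_symm _ _ c22
  s12 := Em_symm _ _ c12
  s11 := Em_symm _ _ c11
  d22 := Em_succ _ _
  d12 := Em_succ _ _
  d21 := Em_succ _ _
  d11 := Em_succ _ _

/-- the functional for `q_n` -/
def muQ : Func where
  α := fun _ => 0
  β := fun _ => 0
  m22 := fun _ _ => 1
  m12 := fun _ _ => 0
  m21 := fun _ _ => 0
  m11 := fun _ _ => 0
  s22 := by intros; rfl
  s12 := by intros; rfl
  s11 := by intros; rfl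
  d22 := by intros; simp
  d12 := by intros; simp
  d21 := by intros; simp
  d11 := by intros; simp

/-- the functional for `p̃_n` -/
def muT : Func where
  α := fun _ => 1
  β := fun _ => 0
  m22 := fun k l => -4 * Hr 3 (k+l)
  m12 := fun k l => Hr 2 l - 2 * Hr 2 (k+l)
  m21 := fun k l => Hr 2 k - 2 * Hr 2 (k+l)
  m11 := fun k l => Hr 1 k + Hr 1 l - 2 * Hr 1 (k+l)
  s22 := by intro k l; rw [add_comm]
  s12 := by intro k l; rw [add_comm]
  s11 := by intro k l; rw [add_comm k l]; ring
  d22 := by intro k l; rw [show k+1+l=(k+l)+1 by ring, Hr_succ]; push_cast; ring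
  d12 := by intro k l; rw [show k+1+l=(k+l)+1 by ring, Hr_succ]; push_cast; ring
  d21 := by intro k l; rw [show k+1+l=(k+l)+1 by ring, Hr_succ, Hr_succ]; push_cast; ring
  d11 := by intro k l; rw [show k+1+l=(k+l)+1 by ring, Hr_succ, Hr_succ]; push_cast; ring

theorem mkB_mul (a b c d a' b' c' d' : ℚ) : mkB a b c d * mkB a' b' c' d'
    = mkB (a*a') (a*b'+b*a') (a*c'+c*a') (a*d'+c*b'+b*c'+d*a') := by
  apply extB <;> simp only [mkB_ff, mkB_sf, mkB_fs, mkB_ss, mul_ff, mul_sf, mul_fs, mul_ss]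
theorem mkB_add (a b c d a' b' c' d' : ℚ) : mkB a b c d + mkB a' b' c' d'
    = mkB (a+a') (b+b') (c+c') (d+d') := by apply extB <;> simp
theorem mkB_sub (a b c d a' b' c' d' : ℚ) : mkB a b c d - mkB a' b' c' d'
    = mkB (a-a') (b-b') (c-c') (d-d') := by apply extB <;> simp
theorem one_mkB : (1:DB) = mkB 1 0 0 0 := by apply extB <;> simp
theorem natCast_mkB (n : ℕ) : (n:DB) = mkB n 0 0 0 := by apply extB <;> simp
theorem iS_mkB (a : DA) : iS a = mkB a.fst a.snd 0 0 := by apply extB <;> simp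
theorem iT_mkB (a : DA) : iT a = mkB a.fst 0 a.snd 0 := by apply extB <;> simp
theorem pr_mkB (a b c d a' b' c' d' : ℚ) : pr a b c d (mkB a' b' c' d') = a*a'+b*b'+c*c'+d*d' := by
  simp [pr]

theorem Fp_zero' {R : Type*} [CommRing R] (x : R) : Fp 0 x = 1 := by simp [Fp]

theorem Ym0 (μ : Func) : Ym μ 0 = μ.m22 0 0 := by
  simp [Ym, Sm, cc, Jk, Fp_zero', Func.pr, pr, gA, iS_mkB, iT_mkB, mkB_mul, sq]
end ZS

namespace ZS
open TrivSqZeroExt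

theorem mkB_add_one (a b c d : ℚ) : mkB a b c d + 1 = mkB (a+1) b c d := by
  apply extB <;> simp

theorem J100 : Jk 1 0 0 = mkB (-1) (4) (4) (-15) := by
  norm_num [Jk, sq, iS_mkB, iT_mkB, gA_fst, gA_snd, Hr, Finset.sum_range_succ, xS, xT, Fp, Finset.prod_range_succ, mkB_add, mkB_sub, mkB_mul, mkB_add_one, natCast_mkB, Nat.choose]

theorem J101 : Jk 1 0 1 = mkB (-4) (14) (-4) (15) := by
  norm_num [Jk, sq, iS_mkB, iT_mkB, gA_fst, gA_snd, Hr, Finset.sum_range_succ, xS, xT, Fp, Finset.prod_range_succ, mkB_add, mkB_sub, mkB_mul, mkB_add_one, natCast_mkB, Nat.choose]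

theorem J110 : Jk 1 1 0 = mkB (-4) (-4) (14) (15) := by
  norm_num [Jk, sq, iS_mkB, iT_mkB, gA_fst, gA_snd, Hr, Finset.sum_range_succ, xS, xT, Fp, Finset.prod_range_succ, mkB_add, mkB_sub, mkB_mul, mkB_add_one, natCast_mkB, Nat.choose]

theorem J111 : Jk 1 1 1 = mkB (-12) (-14) (-14) (-15) := by
  norm_num [Jk, sq, iS_mkB, iT_mkB, gA_fst, gA_snd, Hr, Finset.sum_range_succ, xS, xT, Fp, Finset.prod_range_succ, mkB_add, mkB_sub, mkB_mul, mkB_add_one, natCast_mkB, Nat.choose]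

theorem J200 : Jk 2 0 0 = mkB (8) (-48) (-48) (278) := by
  norm_num [Jk, sq, iS_mkB, iT_mkB, gA_fst, gA_snd, Hr, Finset.sum_range_succ, xS, xT, Fp, Finset.prod_range_succ, mkB_add, mkB_sub, mkB_mul, mkB_add_one, natCast_mkB, Nat.choose]

theorem J201 : Jk 2 0 1 = mkB (288) (-1536) (-480) (2456) := by
  norm_num [Jk, sq, iS_mkB, iT_mkB, gA_fst, gA_snd, Hr, Finset.sum_range_succ, xS, xT, Fp, Finset.prod_range_succ, mkB_add, mkB_sub, mkB_mul, mkB_add_one, natCast_mkB, Nat.choose]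

theorem J202 : Jk 2 0 2 = mkB (288) (-1464) (528) (-2734) := by
  norm_num [Jk, sq, iS_mkB, iT_mkB, gA_fst, gA_snd, Hr, Finset.sum_range_succ, xS, xT, Fp, Finset.prod_range_succ, mkB_add, mkB_sub, mkB_mul, mkB_add_one, natCast_mkB, Nat.choose]

theorem J210 : Jk 2 1 0 = mkB (288) (-480) (-1536) (2456) := by
  norm_num [Jk, sq, iS_mkB, iT_mkB, gA_fst, gA_snd, Hr, Finset.sum_range_succ, xS, xT, Fp, Finset.prod_range_succ, mkB_add, mkB_sub, mkB_mul, mkB_add_one, natCast_mkB, Nat.choose]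

theorem J211 : Jk 2 1 1 = mkB (6912) (-9792) (-9792) (12672) := by
  norm_num [Jk, sq, iS_mkB, iT_mkB, gA_fst, gA_snd, Hr, Finset.sum_range_succ, xS, xT, Fp, Finset.prod_range_succ, mkB_add, mkB_sub, mkB_mul, mkB_add_one, natCast_mkB, Nat.choose]

theorem J212 : Jk 2 1 2 = mkB (5760) (-7392) (11328) (-15128) := by
  norm_num [Jk, sq, iS_mkB, iT_mkB, gA_fst, gA_snd, Hr, Finset.sum_range_succ, xS, xT, Fp, Finset.prod_range_succ, mkB_add, mkB_sub, mkB_mul, mkB_add_one, natCast_mkB, Nat.choose]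

theorem J220 : Jk 2 2 0 = mkB (288) (528) (-1464) (-2734) := by
  norm_num [Jk, sq, iS_mkB, iT_mkB, gA_fst, gA_snd, Hr, Finset.sum_range_succ, xS, xT, Fp, Finset.prod_range_succ, mkB_add, mkB_sub, mkB_mul, mkB_add_one, natCast_mkB, Nat.choose]

theorem J221 : Jk 2 2 1 = mkB (5760) (11328) (-7392) (-15128) := by
  norm_num [Jk, sq, iS_mkB, iT_mkB, gA_fst, gA_snd, Hr, Finset.sum_range_succ, xS, xT, Fp, Finset.prod_range_succ, mkB_add, mkB_sub, mkB_mul, mkB_add_one, natCast_mkB, Nat.choose]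

theorem J222 : Jk 2 2 2 = mkB (4320) (8856) (8856) (17862) := by
  norm_num [Jk, sq, iS_mkB, iT_mkB, gA_fst, gA_snd, Hr, Finset.sum_range_succ, xS, xT, Fp, Finset.prod_range_succ, mkB_add, mkB_sub, mkB_mul, mkB_add_one, natCast_mkB, Nat.choose]

theorem cc1 : cc 1 = 2 := by norm_num [cc, Nat.centralBinom, Nat.choose]
theorem cc2 : cc 2 = 3/4 := by norm_num [cc, Nat.centralBinom, Nat.choose, Nat.factorial]

theorem Q1 : Ym muQ 1 = -42 := by
  norm_num [Ym, Sm, Finset.sum_range_succ, cc1, J100, J101, J110, J111, Func.pr, pr_mkB, muQ]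
theorem Q2 : Ym muQ 2 = 17934 := by
  norm_num [Ym, Sm, Finset.sum_range_succ, cc2, J200, J201, J202, J210, J211, J212, J220, J221, J222,
    Func.pr, pr_mkB, muQ]
theorem T1 : Ym muT 1 = 4*(101/2) := by
  norm_num [Ym, Sm, Finset.sum_range_succ, cc1, J100, J101, J110, J111, Func.pr, pr_mkB, muT, Hr]
theorem T2 : Ym muT 2 = 4*(-344923/16) := by
  norm_num [Ym, Sm, Finset.sum_range_succ, cc2, J200, J201, J202, J210, J211, J212, J220, J221, J222,
    Func.pr, pr_mkB, muT, Hr]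
theorem PP1 : Ym muP 1 = -2*(87/2) := by
  norm_num [Ym, Sm, Finset.sum_range_succ, cc1, J100, J101, J110, J111, Func.pr, pr_mkB, muP, Em,
    f22, f12, f21, f11, aP, bP, Hr]
theorem PP2 : Ym muP 2 = -2*(-1190161/64) := by
  norm_num [Ym, Sm, Finset.sum_range_succ, cc2, J200, J201, J202, J210, J211, J212, J220, J221, J222,
    Func.pr, pr_mkB, muP, Em, f22, f12, f21, f11, aP, bP, Hr]

theorem a0_ne (n : ℕ) (h : 2 ≤ n) : a0 (n:ℚ) ≠ 0 := by
  obtain ⟨m, rfl⟩ := Nat.exists_eq_add_of_le h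
  have : a0 ((2+m:ℕ):ℚ) = 41218*(m:ℚ)^3 + 198849*m^2 + 320790*m + 173057 := by
    simp only [a0]; push_cast; ring
  rw [this]; positivity

/-- uniqueness of solutions -/
theorem rec_unique (c : ℚ) (μ : Func) (y : ℕ → ℚ) (hy : Rec1 y) (h0 : y 0 = c * Ym μ 0)
    (h1 : y 1 = c * Ym μ 1) (h2 : y 2 = c * Ym μ 2) (n : ℕ) : y n = c * Ym μ n := by
  suffices h : ∀ n, y n = c * Ym μ n ∧ y (n+1) = c * Ym μ (n+1) ∧ y (n+2) = c * Ym μ (n+2) from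
    (h n).1
  intro n
  induction n with
  | zero => exact ⟨h0, h1, h2⟩
  | succ n ih =>
    obtain ⟨e0, e1, e2⟩ := ih
    refine ⟨e1, e2, ?_⟩
    have hr := hy (n+2) (by omega)
    have hm := Ym_rec μ n ((n+2:ℕ):ℚ) (by push_cast; ring)
    have hA0 : ∀ x : ℚ, A0 x = a0 x := fun x => by simp only [A0, a0]
    have hA1 : ∀ x : ℚ, A1 x = a1 x := fun x => by simp only [A1, a1]
    have hA2 : ∀ x : ℚ, A2 x = a2 x := fun x => by simp only [A2, a2]
    rw [hA0, hA0, hA1, hA2] at hm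
    have hne : (((n+2:ℕ):ℚ)+1)^6 * a0 ((n+2:ℕ):ℚ) ≠ 0 :=
      mul_ne_zero (by positivity) (a0_ne _ (by omega))
    rw [show n+2+1 = n+3 from rfl, show n+2-1 = n+1 by omega, show n+2-2 = n by omega,
      e0, e1, e2] at hr
    apply mul_left_cancel₀ hne
    linear_combination hr - c * hm
end ZS

namespace ZS
open TrivSqZeroExt

/-- `p`-integral rationals -/
def Rp (p : ℕ) (hp : p.Prime) : Subring ℚ where
  carrier := {x | ¬ p ∣ x.den}
  mul_mem' {a b} ha hb h := by
    rcases (hp.dvd_mul).1 (h.trans (Rat.mul_den_dvd a b)) with h | h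
    · exact ha h
    · exact hb h
  one_mem' := by simpa using hp.one_lt.ne'
  add_mem' {a b} ha hb h := by
    rcases (hp.dvd_mul).1 (h.trans (Rat.add_den_dvd a b)) with h | h
    · exact ha h
    · exact hb h
  zero_mem' := by simpa using hp.one_lt.ne'
  neg_mem' {a} ha := by simpa using ha

theorem mem_Rp {p : ℕ} {hp : p.Prime} {x : ℚ} : x ∈ Rp p hp ↔ ¬ p ∣ x.den := Iff.rfl

theorem Rp_inv {p : ℕ} {hp : p.Prime} {m : ℕ} (h : ¬ p ∣ m) : ((m:ℚ))⁻¹ ∈ Rp p hp := by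
  rw [mem_Rp]
  have hm : m ≠ 0 := by rintro rfl; simp at h
  rw [Rat.inv_natCast_den]
  simpa [hm] using h

theorem Rp_of_mul {p : ℕ} {hp : p.Prime} {m : ℕ} {x : ℚ} (h : ¬ p ∣ m) (hx : (m:ℚ) * x ∈ Rp p hp) :
    x ∈ Rp p hp := by
  have hm : (m:ℚ) ≠ 0 := by
    have : m ≠ 0 := by rintro rfl; simp at h
    exact_mod_cast this
  have := (Rp p hp).mul_mem (Rp_inv (hp := hp) h) hx
  rwa [inv_mul_cancel_left₀ hm] at this

/-- a rational that is `p`-integral for all `p` is an integer -/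
theorem int_of_Rp {x : ℚ} (h : ∀ p (hp : p.Prime), x ∈ Rp p hp) : ∃ z : ℤ, x = z := by
  have : x.den = 1 := by
    by_contra hne
    obtain ⟨p, hp, hd⟩ := Nat.exists_prime_and_dvd hne
    exact h p hp hd
  exact ⟨x.num, ((Rat.den_eq_one_iff x).1 this).symm⟩

def U1 (x : ℤ) : ℤ :=
  (231157798368)*x^15 + (-965239995888)*x^14 + (1016044234016)*x^13 + (759837238328)*x^12 +
    (-1736952166432)*x^11 + (44142954240)*x^10 + (1139038605312)*x^9 + (-272073497484)*x^8 +
    (-396551447264)*x^7 + (134522916052)*x^6 + (78667194592)*x^5 + (-31200654828)*x^4 +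
    (-8725266528)*x^3 + (3811122348)*x^2 + (423980928)*x^1 + (-198280656)*x^0
def V1 (x : ℤ) : ℤ :=
  (-73397716960)*x^15 + (526678212240)*x^14 + (-1334660482056)*x^13 + (993806234748)*x^12 +
    (1311733805576)*x^11 + (-2254736863540)*x^10 + (-256119085952)*x^9 + (1765095263024)*x^8 +
    (-142974938048)*x^7 + (-739833299664)*x^6 + (61095711792)*x^5 + (166888179752)*x^4 +
    (-9616472376)*x^3 + (-20466250968)*x^2 + (565873056)*x^1 + (1074276000)*x^0
def U2 (x : ℤ) : ℤ :=
  (-547455064252384)*x^21 + (8855455566352752)*x^20 + (-62468587103507432)*x^19 +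
    (249195422605690996)*x^18 + (-602538343940319080)*x^17 + (846412610066851932)*x^16 +
    (-471894260427930408)*x^15 + (-468017666214562176)*x^14 + (981457879472671440)*x^13 +
    (-418412950207342600)*x^12 + (-405909900718148744)*x^11 + (463632767020926692)*x^10 +
    (-17945760097977944)*x^9 + (-171557996291659236)*x^8 + (58619127799204376)*x^7 +
    (28270658542566696)*x^6 + (-17993179957933616)*x^5 + (-1319571777558176)*x^4 +
    (2518117558970880)*x^3 + (-235458540484416)*x^2 + (-142768725289344)*x^1 +
    (27279047496960)*x^0
def V2 (x : ℤ) : ℤ :=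
  (173829102705152)*x^21 + (-3333290496467712)*x^20 + (27968361226291264)*x^19 +
    (-133542281440218688)*x^18 + (392093083610092688)*x^17 + (-697843594883457056)*x^16 +
    (623048049002625840)*x^15 + (103614627263938936)*x^14 + (-847132776933377976)*x^13 +
    (652737357434002800)*x^12 + (196096880852846888)*x^11 + (-518276540514529576)*x^10 +
    (132262957630364320)*x^9 + (165043157297854016)*x^8 + (-92444694297439072)*x^7 +
    (-21473363356701752)*x^6 + (23868076636802024)*x^5 + (-360340262091696)*x^4 +
    (-3094298567612856)*x^3 + (434870168718888)*x^2 + (167611631501088)*x^1 +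
    (-37038920375520)*x^0

def b0 (x : ℤ) : ℤ := 41218*x^3 - 48459*x^2 + 20010*x - 2871
def b1 (x : ℤ) : ℤ := 2*(48802112*x^9 + 89030880*x^8 + 36002654*x^7 - 24317344*x^6
  - 19538418*x^5 + 1311365*x^4 + 3790503*x^3 + 460056*x^2 - 271701*x - 60291)
def b2 (x : ℤ) : ℤ := 3874492*x^8 - 2617900*x^7 - 3144314*x^6 + 2947148*x^5
  + 647130*x^4 - 1182926*x^3 + 115771*x^2 + 170716*x - 44541
def bb (x : ℤ) : ℤ := 4*(2*x-1)*b2 x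
def bc (x : ℤ) : ℤ := 4*(x-1)^4*(2*x-1)*(2*x-3)
def W1 (x : ℤ) : ℤ := -b1 x * bc (x-1)
def W2 (x : ℤ) : ℤ := U1 x * bc (x-2)

theorem lev1 (x : ℤ) : b1 x * b1 (x-1) + x^6 * b0 (x-1) * bb x = U1 x * b0 x := by
  simp only [b0, b1, b2, bb, U1]; ring
theorem lev2 (x : ℤ) : -b1 x * bb (x-1) + x^6 * b0 (x-1) * (bc x * b0 (x+1)) = V1 x * b0 x := by
  simp only [b0, b1, b2, bb, bc, V1]; ring
theorem lev3 (x : ℤ) : -U1 x * b1 (x-2) + (x-1)^6 * b0 (x-2) * V1 x = U2 x * b0 (x-1) := by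
  simp only [b0, b1, V1, U1, U2]; ring
theorem lev4 (x : ℤ) : U1 x * bb (x-2) + (x-1)^6 * b0 (x-2) * W1 x = V2 x * b0 (x-1) := by
  simp only [b0, b1, b2, bb, bc, U1, V2, W1]; ring
theorem bez (x : ℤ) : (5116193215 - 6671200617*x + 2198003794*x^2) * b0 x
    + (-1156439449 - 91714968*x - 2140558628*x^2) * b0 (x-1)
    + (203854956 - 3431295*x - 57445166*x^2) * b0 (x-2) = 1 := by
  simp only [b0]; ring

theorem b0_ne (n : ℤ) (h : 2 ≤ n) : b0 n ≠ 0 := by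
  obtain ⟨m, rfl⟩ := Int.le.dest h
  have : b0 (2+m) = 41218*(m:ℤ)^3 + 198849*m^2 + 320790*m + 173057 := by
    simp only [b0]; ring
  rw [this]; positivity

/-- one step of the recursion without the apparent singularities -/
theorem big_step (y0 y1 y2 y3 y4 y5 : ℚ) (n : ℤ) (hn : 4 ≤ n)
    (e0 : ((n:ℚ)+1)^6 * b0 n * y5 + b1 n * y4 - bb n * y3 - bc n * b0 (n+1) * y2 = 0)
    (e1 : (n:ℚ)^6 * b0 (n-1) * y4 + b1 (n-1) * y3 - bb (n-1) * y2 - bc (n-1) * b0 n * y1 = 0)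
    (e2 : ((n:ℚ)-1)^6 * b0 (n-2) * y3 + b1 (n-2) * y2 - bb (n-2) * y1
      - bc (n-2) * b0 (n-1) * y0 = 0) :
    (((n:ℚ)-1)*n*(n+1))^6 * y5 =
      (5116193215 - 6671200617*n + 2198003794*n^2) * (((n:ℚ)-1)*n)^6
        * (-b1 n * y4 + bb n * y3 + bc n * b0 (n+1) * y2)
      + (-1156439449 - 91714968*n - 2140558628*n^2) * ((n:ℚ)-1)^6
        * (U1 n * y3 + V1 n * y2 + W1 n * y1)
      + (203854956 - 3431295*n - 57445166*n^2) * (U2 n * y2 + V2 n * y1 + W2 n * y0) := by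
  have l1 : (b1 n * b1 (n-1) + n^6 * b0 (n-1) * bb n : ℚ) = U1 n * b0 n := by exact_mod_cast lev1 n
  have l2 : (-b1 n * bb (n-1) + n^6 * b0 (n-1) * (bc n * b0 (n+1)) : ℚ) = V1 n * b0 n := by
    exact_mod_cast lev2 n
  have l3 : (-U1 n * b1 (n-2) + (n-1)^6 * b0 (n-2) * V1 n : ℚ) = U2 n * b0 (n-1) := by
    exact_mod_cast lev3 n
  have l4 : (U1 n * bb (n-2) + (n-1)^6 * b0 (n-2) * W1 n : ℚ) = V2 n * b0 (n-1) := by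
    exact_mod_cast lev4 n
  have hb := bez n
  have hb' : ((5116193215 - 6671200617*n + 2198003794*n^2) * b0 n
    + (-1156439449 - 91714968*n - 2140558628*n^2) * b0 (n-1)
    + (203854956 - 3431295*n - 57445166*n^2) * b0 (n-2) : ℚ) = 1 := by exact_mod_cast hb
  have n0 : (b0 n : ℚ) ≠ 0 := by exact_mod_cast b0_ne n (by omega)
  have n1 : (b0 (n-1) : ℚ) ≠ 0 := by exact_mod_cast b0_ne (n-1) (by omega)
  have w1 : (W1 n : ℚ) = -b1 n * bc (n-1) := by rw [W1]; push_cast; ring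
  have w2 : (W2 n : ℚ) = U1 n * bc (n-2) := by rw [W2]; push_cast; ring
  have s1 : (n:ℚ)^6*(n+1)^6*b0 (n-1) * y5 = U1 n * y3 + V1 n * y2 + W1 n * y1 := by
    apply mul_left_cancel₀ n0
    rw [w1]
    linear_combination ((n:ℚ)^6 * b0 (n-1)) * e0 - b1 n * e1 + y3 * l1 + y2 * l2
  have s2 : ((n:ℚ)-1)^6*n^6*(n+1)^6*b0 (n-2) * y5 = U2 n * y2 + V2 n * y1 + W2 n * y0 := by
    apply mul_left_cancel₀ n1
    rw [w2]
    linear_combination (((n:ℚ)-1)^6 * b0 (n-2)) * s1 + U1 n * e2 + y2 * l3 + y1 * l4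
  linear_combination (-(((n:ℚ)-1)*n*(n+1))^6 * y5) * hb'
    + (5116193215 - 6671200617*(n:ℚ) + 2198003794*n^2) * (((n:ℚ)-1)*n)^6 * e0
    + (-1156439449 - 91714968*(n:ℚ) - 2140558628*n^2) * ((n:ℚ)-1)^6 * s1
    + (203854956 - 3431295*(n:ℚ) - 57445166*n^2) * s2

end ZS

namespace ZS
open TrivSqZeroExt

theorem int_mem {p : ℕ} {hp : p.Prime} (z : ℤ) : (z:ℚ) ∈ Rp p hp := intCast_mem _ z
theorem nat_mem {p : ℕ} {hp : p.Prime} (z : ℕ) : (z:ℚ) ∈ Rp p hp := natCast_mem _ z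

theorem b0_cast (n : ℤ) : (b0 n : ℚ) = a0 n := by simp only [b0, a0]; push_cast; ring
theorem b1_cast (n : ℤ) : (b1 n : ℚ) = a1 n := by simp only [b1, a1]; push_cast; ring
theorem b2_cast (n : ℤ) : (b2 n : ℚ) = a2 n := by simp only [b2, a2]; push_cast; ring

theorem rec_int {y : ℕ → ℚ} (hy : Rec1 y) (m : ℕ) (n : ℤ) (hn : n = m + 2) :
    ((n:ℚ)+1)^6 * b0 n * y (m+3) + b1 n * y (m+2) - bb n * y (m+1) - bc n * b0 (n+1) * y m = 0 := by
  have h := hy (m+2) (by omega)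
  rw [show m+2+1 = m+3 from rfl, show m+2-1 = m+1 by omega, show m+2-2 = m by omega] at h
  have e : ((m+2:ℕ):ℚ) = n := by rw [hn]; push_cast; ring
  rw [e] at h
  simp only [bb, bc]
  push_cast
  rw [b0_cast, b1_cast, b2_cast, b0_cast]
  push_cast
  linear_combination h

/-- integrality at the primes `p > n` -/
theorem large {y : ℕ → ℚ} (hy : Rec1 y)
    (h : ∀ n, n ≤ 4 → ∀ p (hp : p.Prime), n < p → y n ∈ Rp p hp) :
    ∀ n p (hp : p.Prime), n < p → y n ∈ Rp p hp := by
  intro n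
  induction n using Nat.strong_induction_on with
  | _ n ih =>
  intro p hp hnp
  rcases Nat.lt_or_ge 4 n with h5 | h5
  swap
  · exact h n h5 p hp hnp
  obtain ⟨m, rfl⟩ := Nat.exists_eq_add_of_le' (show 5 ≤ n by omega)
  have e0 := rec_int hy (m+2) ((m:ℤ)+4) (by push_cast; ring)
  have e1 := rec_int hy (m+1) ((m:ℤ)+4-1) (by push_cast; ring)
  have e2 := rec_int hy m ((m:ℤ)+4-2) (by ring)
  set n : ℤ := (m:ℤ)+4 with hn
  rw [show n-1+1 = n by ring] at e1
  rw [show n-2+1 = n-1 by ring] at e2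
  have e1' : (n:ℚ)^6 * b0 (n-1) * y (m+4) + b1 (n-1) * y (m+3) - bb (n-1) * y (m+2)
      - bc (n-1) * b0 n * y (m+1) = 0 := by
    rw [show ((n-1:ℤ):ℚ)+1 = n by push_cast; ring] at e1
    exact e1
  have e2' : ((n:ℚ)-1)^6 * b0 (n-2) * y (m+3) + b1 (n-2) * y (m+2) - bb (n-2) * y (m+1)
      - bc (n-2) * b0 (n-1) * y m = 0 := by
    rw [show ((n-2:ℤ):ℚ)+1 = n-1 by push_cast; ring] at e2
    exact e2
  have key := big_step _ _ _ _ _ _ n (by omega) e0 e1' e2'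
  have m0 := ih m (by omega) p hp (by omega)
  have m1 := ih (m+1) (by omega) p hp (by omega)
  have m2 := ih (m+2) (by omega) p hp (by omega)
  have m3 := ih (m+3) (by omega) p hp (by omega)
  have m4 := ih (m+2+2) (by omega) p hp (by omega)
  have hd : ¬ p ∣ ((m+3)*(m+4)*(m+5))^6 := by
    intro hd
    rcases hp.dvd_mul.1 (hp.dvd_of_dvd_pow hd) with hd | hd
    · rcases hp.dvd_mul.1 hd with hd | hd
      · exact absurd (Nat.le_of_dvd (by omega) hd) (by omega)
      · exact absurd (Nat.le_of_dvd (by omega) hd) (by omega)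
    · exact absurd (Nat.le_of_dvd (by omega) hd) (by omega)
  apply Rp_of_mul hd
  have e : ((((m+3)*(m+4)*(m+5))^6 : ℕ) : ℚ) = (((n:ℚ)-1)*n*(n+1))^6 := by
    rw [hn]; push_cast; ring
  rw [e]
  change _ * y (m+2+3) ∈ _
  rw [key]
  have i : ∀ z : ℤ, ∀ w ∈ Rp p hp, (z:ℚ) * w ∈ Rp p hp := fun z w hw => mul_mem (int_mem z) hw
  have t1 : (-b1 n * y (m+2+2) + bb n * y (m+3) + bc n * b0 (n+1) * y (m+2) : ℚ) ∈ Rp p hp := by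
    have := add_mem (add_mem (i (-b1 n) _ m4) (i (bb n) _ m3)) (i (bc n * b0 (n+1)) _ m2)
    push_cast at this; exact this
  have t2 : (U1 n * y (m+3) + V1 n * y (m+2) + W1 n * y (m+1) : ℚ) ∈ Rp p hp :=
    add_mem (add_mem (i (U1 n) _ m3) (i (V1 n) _ m2)) (i (W1 n) _ m1)
  have t3 : (U2 n * y (m+2) + V2 n * y (m+1) + W2 n * y m : ℚ) ∈ Rp p hp :=
    add_mem (add_mem (i (U2 n) _ m2) (i (V2 n) _ m1)) (i (W2 n) _ m0)
  have := add_mem (add_mem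
    (i ((5116193215 - 6671200617*n + 2198003794*n^2) * ((n-1)*n)^6) _ t1)
    (i ((-1156439449 - 91714968*n - 2140558628*n^2) * (n-1)^6) _ t2))
    (i (203854956 - 3431295*n - 57445166*n^2) _ t3)
  push_cast at this
  exact this

theorem rec_mul {y : ℕ → ℚ} (hy : Rec1 y) (c : ℚ) : Rec1 (fun n => c * y n) := by
  intro n hn
  have := hy n hn
  linear_combination c * this

/-- values at three and four -/
theorem rec_34 {y : ℕ → ℚ} (hy : Rec1 y) :
    y 3 = -(a1 2 * y 2 - 4*3*a2 2*y 1 - 4*3*a0 3*y 0)/(3^6*a0 2) ∧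
    y 4 = -(a1 3 * y 3 - 4*5*a2 3*y 2 - 4*2^4*5*3*a0 4*y 1)/(4^6*a0 3) := by
  have h2 := hy 2 (by omega)
  have h3 := hy 3 (by omega)
  norm_num at h2 h3
  have n2 : a0 2 ≠ 0 := by norm_num [a0]
  have n3 : a0 3 ≠ 0 := by norm_num [a0]
  constructor
  · field_simp; linear_combination h2
  · field_simp; linear_combination h3

theorem mem_of_den {p : ℕ} {hp : p.Prime} {x : ℚ} (k : ℕ) (z : ℤ) (h3 : 3 < p)
    (h : (6:ℚ)^k * x = z) : x ∈ Rp p hp := by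
  have hd : ¬ p ∣ 6^k := by
    intro hd
    have h6 := hp.dvd_of_dvd_pow hd
    rcases hp.dvd_mul.1 (show p ∣ 2*3 from h6) with h | h
    · exact absurd (Nat.le_of_dvd (by omega) h) (by omega)
    · exact absurd (Nat.le_of_dvd (by omega) h) (by omega)
  apply Rp_of_mul hd
  push_cast
  rw [h]; exact int_mem z

theorem mem_of_den2 {p : ℕ} {hp : p.Prime} {x : ℚ} (k : ℕ) (z : ℤ) (h3 : 2 < p)
    (h : (2:ℚ)^k * x = z) : x ∈ Rp p hp := by
  have hd : ¬ p ∣ 2^k := by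
    intro hd
    have h := hp.dvd_of_dvd_pow hd
    exact absurd (Nat.le_of_dvd (by omega) h) (by omega)
  apply Rp_of_mul hd
  push_cast
  rw [h]; exact int_mem z

theorem large4 {y : ℕ → ℚ} (hy : Rec1 y) (z0 z1 z2 z3 z4 : ℤ) (h0 : 4 * y 0 = z0) (h1 : 4 * y 1 = z1)
    (h2 : (2:ℚ)^4 * (4 * y 2) = z2) (h3 : (6:ℚ)^11 * (4*y 3) = z3) (h4 : (6:ℚ)^11 * (4*y 4) = z4) :
    ∀ n p (hp : p.Prime), n < p → 4 * y n ∈ Rp p hp := by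
  apply large (rec_mul hy 4)
  intro n hn p hp hnp
  interval_cases n
  · rw [h0]; exact int_mem _
  · rw [h1]; exact int_mem _
  · exact mem_of_den2 _ _ hnp h2
  · exact mem_of_den _ _ hnp h3
  · exact mem_of_den _ _ (by omega) h4

theorem large_q {q : ℕ → ℚ} (hq : Rec1 q) (hq0 : q 0 = -1) (hq1 : q 1 = 42) (hq2 : q 2 = -17934) :
    ∀ n p (hp : p.Prime), n < p → 4 * q n ∈ Rp p hp := by
  obtain ⟨h3, h4⟩ := rec_34 hq
  rw [hq0, hq1, hq2] at h3
  norm_num [a0, a1, a2] at h3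
  rw [h3, hq1, hq2] at h4
  norm_num [a0, a1, a2] at h4
  exact large4 hq (-4) (4*42) (2^4*4*(-17934)) (6^11*4*14290980) (6^11*4*(-15226085070))
    (by rw [hq0]; norm_num) (by rw [hq1]; norm_num) (by rw [hq2]; norm_num)
    (by rw [h3]; norm_num) (by rw [h4]; norm_num)

theorem large_p {p : ℕ → ℚ} (hp : Rec1 p) (hp0 : p 0 = 0) (hp1 : p 1 = 87/2)
    (hp2 : p 2 = -1190161/64) : ∀ n r (hr : r.Prime), n < r → 4 * p n ∈ Rp r hr := by
  obtain ⟨h3, h4⟩ := rec_34 hp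
  rw [hp0, hp1, hp2] at h3
  norm_num [a0, a1, a2] at h3
  rw [h3, hp1, hp2] at h4
  norm_num [a0, a1, a2] at h4
  exact large4 hp 0 (2*87) (-1190161) (2^8*3^7*38410106195) (4*3^8*(-873032613281675))
    (by rw [hp0]; norm_num) (by rw [hp1]; norm_num) (by rw [hp2]; norm_num)
    (by rw [h3]; norm_num) (by rw [h4]; norm_num)

theorem large_t {p : ℕ → ℚ} (hp : Rec1 p) (hp0 : p 0 = 0) (hp1 : p 1 = 101/2)
    (hp2 : p 2 = -344923/16) : ∀ n r (hr : r.Prime), n < r → 4 * p n ∈ Rp r hr := by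
  obtain ⟨h3, h4⟩ := rec_34 hp
  rw [hp0, hp1, hp2] at h3
  norm_num [a0, a1, a2] at h3
  rw [h3, hp1, hp2] at h4
  norm_num [a0, a1, a2] at h4
  exact large4 hp 0 (2*101) (4*(-344923)) (2^10*3^8*3710571371) (2^6*3^9*(-21084619007795))
    (by rw [hp0]; norm_num) (by rw [hp1]; norm_num) (by rw [hp2]; norm_num)
    (by rw [h3]; norm_num) (by rw [h4]; norm_num)

end ZS

namespace ZS
open TrivSqZeroExt

theorem dvd_Dlcm {j n : ℕ} (h1 : 1 ≤ j) (h2 : j ≤ n) : j ∣ Dlcm n := by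
  have := Finset.dvd_lcm (f := id) (Finset.mem_Icc.2 ⟨h1, h2⟩)
  exact this

theorem div_mem {p : ℕ} {hp : p.Prime} {X N v N' : ℕ} (hN : N = p^v * N') (hN' : ¬ p ∣ N')
    (h : p^v ∣ X) : (X:ℚ) / N ∈ Rp p hp := by
  obtain ⟨c, rfl⟩ := h
  apply Rp_of_mul hN'
  have h1 : (N':ℚ) ≠ 0 := by
    have : N' ≠ 0 := by rintro rfl; simp at hN'
    exact_mod_cast this
  have h2 : (p:ℚ) ≠ 0 := by exact_mod_cast hp.ne_zero
  have : (N':ℚ) * (((p^v*c : ℕ):ℚ) / N) = (c:ℚ) := by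
    rw [hN]; push_cast; field_simp
  rw [this]; exact nat_mem c

theorem prime_dvd_central {p n : ℕ} (hp : p.Prime) (h1 : n < p^2) (h2 : p^2 ≤ 2*n) :
    p ∣ n.centralBinom := by
  rw [Nat.centralBinom_eq_two_mul_choose, two_mul]
  have h := Nat.factorization_choose' (p := p) (n := n) (k := n) (b := Nat.log p (n+n) + 1) hp
    (by omega)
  have hmem : 2 ∈ {i ∈ Finset.Ico 1 (Nat.log p (n+n) + 1) | p^i ≤ n % p^i + n % p^i} := by
    rw [Finset.mem_filter, Finset.mem_Ico]
    refine ⟨⟨by omega, ?_⟩, ?_⟩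
    · have : 2 ≤ Nat.log p (n+n) := Nat.le_log_of_pow_le hp.one_lt (by omega)
      omega
    · rw [Nat.mod_eq_of_lt h1]; omega
  have hpos : 0 < ((n+n).choose n).factorization p := by
    rw [h]; exact Finset.card_pos.2 ⟨_, hmem⟩
  exact Nat.dvd_of_factorization_pos hpos.ne'

section
variable {p : ℕ} {hp : p.Prime} {n : ℕ}

theorem pow_dvd_Dlcm {p n v : ℕ} (hp : p.Prime) (hpn : p ≤ n) (hv : 1 ≤ v) (h : p^v ≤ 2*n) :
    p^(v-1) ∣ Dlcm n := by
  apply dvd_Dlcm (Nat.one_le_iff_ne_zero.2 (pow_ne_zero _ hp.ne_zero))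
  have : p^v = p * p^(v-1) := by rw [← pow_succ', Nat.sub_add_cancel hv]
  have h2 : 2 * p^(v-1) ≤ p * p^(v-1) := Nat.mul_le_mul_right _ hp.two_le
  omega

theorem D2_div (hpn : p ≤ n) {N : ℕ} (h1 : 1 ≤ N) (h2 : N ≤ 2*n) :
    (Dlcm n : ℚ)^2 / N ∈ Rp p hp := by
  obtain ⟨v, N', hN', hN⟩ := Nat.exists_eq_pow_mul_and_not_dvd (show N ≠ 0 by omega) p hp.ne_one
  have hpD : p ∣ Dlcm n := dvd_Dlcm hp.one_le hpn
  have hN0 : 1 ≤ N' := Nat.one_le_iff_ne_zero.2 (by rintro rfl; simp at hN')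
  have hv : p^v ≤ 2*n := by
    have : p^v * 1 ≤ p^v * N' := Nat.mul_le_mul_left _ hN0
    omega
  have key : p^v ∣ Dlcm n^2 := by
    rcases Nat.eq_zero_or_pos v with rfl | hv1
    · simp
    · have := pow_dvd_Dlcm hp hpn hv1 hv
      have h3 := mul_dvd_mul this hpD
      rwa [← pow_succ, Nat.sub_add_cancel hv1, ← sq] at h3
  have := div_mem (hp := hp) hN hN' key
  push_cast at this; exact this

theorem D5_div (hpn : p ≤ n) {N : ℕ} (h1 : 1 ≤ N) (h2 : N ≤ 2*n) :
    (Dlcm n : ℚ)^5 * n.centralBinom / (N:ℚ)^3 ∈ Rp p hp := by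
  obtain ⟨v, N', hN', hN⟩ := Nat.exists_eq_pow_mul_and_not_dvd (show N ≠ 0 by omega) p hp.ne_one
  have hpD : p ∣ Dlcm n := dvd_Dlcm hp.one_le hpn
  have hN0 : 1 ≤ N' := Nat.one_le_iff_ne_zero.2 (by rintro rfl; simp at hN')
  have hv : p^v ≤ 2*n := by
    have : p^v * 1 ≤ p^v * N' := Nat.mul_le_mul_left _ hN0
    omega
  have key : p^(v*3) ∣ Dlcm n^5 * n.centralBinom := by
    rcases Nat.eq_zero_or_pos v with rfl | hv1
    · simp
    · have hd := pow_dvd_Dlcm hp hpn hv1 hv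
      have hD5 : p^5 ∣ Dlcm n^5 := pow_dvd_pow_of_dvd hpD 5
      rcases (show v = 1 ∨ v = 2 ∨ 3 ≤ v by omega) with rfl | rfl | h3
      · exact Dvd.dvd.mul_right ((pow_dvd_pow p (by omega)).trans hD5) _
      · rcases Nat.lt_or_ge n (p^2) with hlt | hge
        · have := mul_dvd_mul hD5 (prime_dvd_central hp hlt hv)
          rwa [← pow_succ] at this
        · have h4 : p^2 ∣ Dlcm n := dvd_Dlcm (Nat.one_le_iff_ne_zero.2 (pow_ne_zero _ hp.ne_zero)) hge
          have h5 := pow_dvd_pow_of_dvd h4 5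
          rw [← pow_mul] at h5
          exact Dvd.dvd.mul_right ((pow_dvd_pow p (by omega)).trans h5) _
      · have h5 := pow_dvd_pow_of_dvd hd 5
        rw [← pow_mul] at h5
        exact Dvd.dvd.mul_right ((pow_dvd_pow p (by omega)).trans h5) _
  have hN3 : N^3 = p^(v*3) * N'^3 := by rw [hN, mul_pow, pow_mul]
  have hN'3 : ¬ p ∣ N'^3 := fun h => hN' (hp.dvd_of_dvd_pow h)
  have := div_mem (hp := hp) hN3 hN'3 key
  push_cast at this; exact this

theorem D1_div {N : ℕ} (h1 : 1 ≤ N) (h2 : N ≤ n) : (Dlcm n : ℚ) / N ∈ Rp p hp := by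
  obtain ⟨c, hc⟩ := dvd_Dlcm h1 h2
  have : (N:ℚ) ≠ 0 := by have : N ≠ 0 := by omega
                         exact_mod_cast this
  rw [hc]; push_cast
  rw [mul_div_cancel_left₀ _ this]
  exact nat_mem c

theorem D_Hr (r : ℕ) {k : ℕ} (hk : k ≤ n) : (Dlcm n : ℚ)^r * Hr r k ∈ Rp p hp := by
  rw [Hr, Finset.mul_sum]
  refine sum_mem fun i hi => ?_
  have hi' : i < k := Finset.mem_range.1 hi
  have h := pow_mem (D1_div (p := p) (hp := hp) (n := n) (N := i+1) (by omega) (by omega)) r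
  have e : (Dlcm n : ℚ)^r * (1/((i:ℚ)+1)^r) = ((Dlcm n : ℚ)/((i+1:ℕ):ℚ))^r := by
    push_cast; rw [div_pow]; ring
  rw [e]; exact h

theorem DC_mem (j : ℕ) : (Dlcm n : ℚ)^j * n.centralBinom ∈ Rp p hp :=
  mul_mem (pow_mem (nat_mem _) _) (nat_mem _)

theorem two_mem : (2:ℚ) ∈ Rp p hp := by
  have := nat_mem (hp := hp) 2
  simpa using this

theorem D_aP {k : ℕ} (hk : k ≤ n) : (Dlcm n : ℚ)^2 * aP k ∈ Rp p hp := D_Hr 2 hk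
theorem D_bP {k : ℕ} (hk : k ≤ n) : (Dlcm n : ℚ)^3 * bP k ∈ Rp p hp := by
  have : (Dlcm n : ℚ)^3 * bP k = 2 * ((Dlcm n : ℚ)^3 * Hr 3 k) := by rw [bP]; ring
  rw [this]; exact mul_mem two_mem (D_Hr 3 hk)

theorem N_cast (k l : ℕ) : (k:ℚ)+l+1 = ((k+l+1:ℕ):ℚ) := by push_cast; ring
theorem K_cast (k : ℕ) : (k:ℚ)+1 = ((k+1:ℕ):ℚ) := by push_cast; ring

theorem f22_mem (hpn : p ≤ n) {k l : ℕ} (hk : k < n) (hl : l ≤ n) :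
    (Dlcm n : ℚ)^7 * n.centralBinom * f22 aP bP k l ∈ Rp p hp := by
  have x1 := D1_div (p := p) (hp := hp) (n := n) (N := k+1) (by omega) (by omega)
  have x2 := D2_div (hp := hp) hpn (N := k+l+1) (by omega) (by omega)
  have x5 := D5_div (hp := hp) hpn (N := k+l+1) (by omega) (by omega)
  have ak := D_aP (p := p) (hp := hp) (n := n) hk.le
  have al := D_aP (p := p) (hp := hp) (n := n) hl
  have bk := D_bP (p := p) (hp := hp) (n := n) hk.le
  have bl := D_bP (p := p) (hp := hp) (n := n) hl
  have c := DC_mem (p := p) (hp := hp) (n := n)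
  rw [f22, N_cast, K_cast]
  have := sub_mem (mul_mem (mul_mem (c 2) bl) (pow_mem x1 2))
    (add_mem (mul_mem (mul_mem (c 0) (add_mem bl bk)) (pow_mem x2 2))
      (mul_mem (mul_mem two_mem (add_mem al ak)) x5))
  convert this using 1
  rw [div_pow, div_pow]; ring

theorem f12_mem (hpn : p ≤ n) {k l : ℕ} (hk : k < n) (hl : l ≤ n) :
    (Dlcm n : ℚ)^6 * n.centralBinom * f12 aP bP k l ∈ Rp p hp := by
  have x1 := D1_div (p := p) (hp := hp) (n := n) (N := k+1) (by omega) (by omega)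
  have x2 := D2_div (hp := hp) hpn (N := k+l+1) (by omega) (by omega)
  have ak := D_aP (p := p) (hp := hp) (n := n) hk.le
  have al := D_aP (p := p) (hp := hp) (n := n) hl
  have bl := D_bP (p := p) (hp := hp) (n := n) hl
  have c := DC_mem (p := p) (hp := hp) (n := n)
  rw [f12, N_cast, K_cast]
  have := sub_mem (mul_mem (mul_mem (c 2) bl) x1)
    (add_mem (mul_mem (mul_mem (c 1) bl) x2)
      (mul_mem (mul_mem (c 0) (add_mem al ak)) (pow_mem x2 2)))
  convert this using 1
  rw [div_pow]; ring

theorem f21_mem (hpn : p ≤ n) {k l : ℕ} (hk : k < n) (hl : l ≤ n) :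
    (Dlcm n : ℚ)^6 * n.centralBinom * f21 aP bP k l ∈ Rp p hp := by
  have x1 := D1_div (p := p) (hp := hp) (n := n) (N := k+1) (by omega) (by omega)
  have x2 := D2_div (hp := hp) hpn (N := k+l+1) (by omega) (by omega)
  have ak := D_aP (p := p) (hp := hp) (n := n) hk.le
  have al := D_aP (p := p) (hp := hp) (n := n) hl
  have bk := D_bP (p := p) (hp := hp) (n := n) hk.le
  have c := DC_mem (p := p) (hp := hp) (n := n)
  rw [f21, N_cast, K_cast]
  have := sub_mem (mul_mem (mul_mem (c 2) al) (pow_mem x1 2))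
    (add_mem (mul_mem (mul_mem (c 1) bk) x2)
      (mul_mem (mul_mem (c 0) (add_mem al ak)) (pow_mem x2 2)))
  convert this using 1
  rw [div_pow, div_pow]; ring

theorem f11_mem (hpn : p ≤ n) {k l : ℕ} (hk : k < n) (hl : l ≤ n) :
    (Dlcm n : ℚ)^5 * n.centralBinom * f11 aP k l ∈ Rp p hp := by
  have x1 := D1_div (p := p) (hp := hp) (n := n) (N := k+1) (by omega) (by omega)
  have x2 := D2_div (hp := hp) hpn (N := k+l+1) (by omega) (by omega)
  have ak := D_aP (p := p) (hp := hp) (n := n) hk.le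
  have al := D_aP (p := p) (hp := hp) (n := n) hl
  have c := DC_mem (p := p) (hp := hp) (n := n)
  rw [f11, N_cast, K_cast]
  have := sub_mem (mul_mem (mul_mem (c 2) al) x1)
      (mul_mem (mul_mem (c 1) (add_mem al ak)) x2)
  convert this using 1
  ring

theorem Em_mem {f g : ℕ → ℕ → ℚ} {x : ℚ} (hf : ∀ k l, k < n → l ≤ n → x * f k l ∈ Rp p hp)
    (hg : ∀ k l, k < n → l ≤ n → x * g k l ∈ Rp p hp) {k l : ℕ} (hk : k ≤ n) (hl : l ≤ n) :
    x * Em f g k l ∈ Rp p hp := by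
  rw [Em, mul_add, Finset.mul_sum, Finset.mul_sum]
  refine add_mem (sum_mem fun j hj => ?_) (sum_mem fun i hi => ?_)
  · have := Finset.mem_range.1 hj
    exact hg j 0 (by omega) (by omega)
  · have := Finset.mem_range.1 hi
    exact hf i l (by omega) hl

theorem D2_Hr (hpn : p ≤ n) (r : ℕ) {k : ℕ} (hk : k ≤ 2*n) :
    (Dlcm n : ℚ)^(2*r) * Hr r k ∈ Rp p hp := by
  rw [Hr, Finset.mul_sum]
  refine sum_mem fun i hi => ?_
  have hi' : i < k := Finset.mem_range.1 hi
  have h := pow_mem (D2_div (p := p) (hp := hp) hpn (N := i+1) (by omega) (by omega)) r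
  have e : (Dlcm n : ℚ)^(2*r) * (1/((i:ℚ)+1)^r) = ((Dlcm n : ℚ)^2/((i+1:ℕ):ℚ))^r := by
    push_cast; rw [div_pow, pow_mul]; ring
  rw [e]; exact h

theorem D5_Hr (hpn : p ≤ n) {k : ℕ} (hk : k ≤ 2*n) :
    (Dlcm n : ℚ)^5 * n.centralBinom * Hr 3 k ∈ Rp p hp := by
  rw [Hr, Finset.mul_sum]
  refine sum_mem fun i hi => ?_
  have hi' : i < k := Finset.mem_range.1 hi
  have h := D5_div (p := p) (hp := hp) hpn (N := i+1) (by omega) (by omega)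
  convert h using 1
  push_cast; ring

/-- the graded order in `DB` -/
def Gr (p : ℕ) (hp : p.Prime) (n : ℕ) : Subring DB where
  carrier := {x | x.fst.fst ∈ Rp p hp ∧ (Dlcm n : ℚ) * x.snd.fst ∈ Rp p hp ∧
    (Dlcm n : ℚ) * x.fst.snd ∈ Rp p hp ∧ (Dlcm n : ℚ)^2 * x.snd.snd ∈ Rp p hp}
  mul_mem' {x y} hx hy := by
    obtain ⟨x1, x2, x3, x4⟩ := hx
    obtain ⟨y1, y2, y3, y4⟩ := hy
    refine ⟨?_, ?_, ?_, ?_⟩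
    · rw [mul_ff]; exact mul_mem x1 y1
    · rw [mul_sf]; convert add_mem (mul_mem x1 y2) (mul_mem x2 y1) using 1; ring
    · rw [mul_fs]; convert add_mem (mul_mem x1 y3) (mul_mem x3 y1) using 1; ring
    · rw [mul_ss]
      convert add_mem (add_mem (add_mem (mul_mem x1 y4) (mul_mem x3 y2)) (mul_mem x2 y3))
        (mul_mem x4 y1) using 1
      ring
  one_mem' := by
    refine ⟨?_, ?_, ?_, ?_⟩ <;> simp [one_mem, zero_mem]
  add_mem' {x y} hx hy := by
    obtain ⟨x1, x2, x3, x4⟩ := hx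
    obtain ⟨y1, y2, y3, y4⟩ := hy
    refine ⟨?_, ?_, ?_, ?_⟩ <;> simp only [fst_add, snd_add, mul_add] <;>
      exact add_mem (by assumption) (by assumption)
  zero_mem' := by
    refine ⟨?_, ?_, ?_, ?_⟩ <;> simp [zero_mem]
  neg_mem' {x} hx := by
    obtain ⟨x1, x2, x3, x4⟩ := hx
    refine ⟨?_, ?_, ?_, ?_⟩ <;> simp only [fst_neg, snd_neg, mul_neg] <;>
      exact neg_mem (by assumption)

theorem mem_Gr {x : DB} : x ∈ Gr p hp n ↔ x.fst.fst ∈ Rp p hp ∧ (Dlcm n : ℚ) * x.snd.fst ∈ Rp p hp ∧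
    (Dlcm n : ℚ) * x.fst.snd ∈ Rp p hp ∧ (Dlcm n : ℚ)^2 * x.snd.snd ∈ Rp p hp := Iff.rfl

theorem gA_mem {k : ℕ} (hk : k ≤ n) : (gA n k).fst ∈ Rp p hp ∧
    (Dlcm n : ℚ) * (gA n k).snd ∈ Rp p hp := by
  have h1 : (n.choose k : ℚ) * (-1)^k ∈ Rp p hp :=
    mul_mem (nat_mem _) (pow_mem (neg_mem (one_mem _)) _)
  refine ⟨by rw [gA_fst]; exact h1, ?_⟩
  have a := D_Hr (p := p) (hp := hp) (n := n) 1 hk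
  have b := D_Hr (p := p) (hp := hp) (n := n) 1 (k := n-k) (by omega)
  rw [gA_snd]
  convert mul_mem h1 (sub_mem a b) using 1
  ring

theorem iS_gA_mem {k : ℕ} (hk : k ≤ n) : iS (gA n k) ∈ Gr p hp n := by
  obtain ⟨h1, h2⟩ := gA_mem (p := p) (hp := hp) hk
  rw [mem_Gr]
  simp only [iS_ff, iS_sf, iS_fs, iS_ss, mul_zero]
  exact ⟨h1, h2, zero_mem _, zero_mem _⟩

theorem iT_gA_mem {k : ℕ} (hk : k ≤ n) : iT (gA n k) ∈ Gr p hp n := by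
  obtain ⟨h1, h2⟩ := gA_mem (p := p) (hp := hp) hk
  rw [mem_Gr]
  simp only [iT_ff, iT_sf, iT_fs, iT_ss, mul_zero]
  exact ⟨h1, zero_mem _, h2, zero_mem _⟩

theorem io_ff (r : ℚ) : (io r).fst.fst = r := by simp [io]
theorem io_sf (r : ℚ) : (io r).snd.fst = 0 := by simp [io]
theorem io_fs (r : ℚ) : (io r).fst.snd = 0 := by simp [io]
theorem io_ss (r : ℚ) : (io r).snd.snd = 0 := by simp [io]

/-- normalised shifted products -/
def Gb (η : DB) (a m : ℕ) : DB := io (1/(m.factorial:ℚ)) * Fp m (η - (a:DB))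

theorem Gb_base (η : DB) (m : ℕ) :
    Gb η 0 (m+1) = Gb η 0 m * (io (1/((m:ℚ)+1)) * η - 1) := by
  have h1 : (m:ℚ)+1 ≠ 0 := by positivity
  have e : io (1/((m+1).factorial:ℚ)) = io (1/(m.factorial:ℚ)) * io (1/((m:ℚ)+1)) := by
    rw [← map_mul]; congr 1; rw [Nat.factorial_succ]; push_cast; field_simp
  have e2 : io (1/((m:ℚ)+1)) * ((m:DB)+1) = 1 := by
    have : ((m:DB)+1) = io ((m:ℚ)+1) := by rw [map_add, io_natCast, map_one]
    rw [this, ← map_mul, one_div, inv_mul_cancel₀ h1, map_one]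
  rw [Gb, Gb, Fp_succ, e, Nat.cast_zero, sub_zero]
  linear_combination (-io (1/(m.factorial:ℚ)) * Fp m η) * e2

theorem Gb_pascal (η : DB) (a m : ℕ) :
    Gb η (a+1) (m+1) = Gb η a (m+1) - Gb η (a+1) m := by
  have e : io (1/((m+1).factorial:ℚ)) * ((m:DB)+1) = io (1/(m.factorial:ℚ)) := by
    have : ((m:DB)+1) = io ((m:ℚ)+1) := by rw [map_add, io_natCast, map_one]
    have h1 : (m:ℚ)+1 ≠ 0 := by positivity
    rw [this, ← map_mul]; congr 1; rw [Nat.factorial_succ]; push_cast; field_simp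
  have h := Fp_shift' m (η - ((a+1:ℕ):DB))
  rw [show η - ((a+1:ℕ):DB) + 1 = η - (a:DB) by push_cast; ring] at h
  rw [Gb, Gb, Gb, h, Fp_succ, ← e]
  ring

theorem Gb_mem {η : DB} (h0 : η.fst.fst = 0) (h1 : η.snd.fst ∈ Rp p hp) (h2 : η.fst.snd ∈ Rp p hp)
    (h3 : η.snd.snd = 0) (a m : ℕ) (hm : m ≤ n) : Gb η a m ∈ Gr p hp n := by
  have hz : ∀ a, Gb η a 0 = 1 := fun a => by simp [Gb, Fp_zero']
  induction a generalizing m with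
  | zero =>
    induction m with
    | zero => rw [hz]; exact one_mem _
    | succ m ih =>
      rw [Gb_base]
      refine mul_mem (ih (by omega)) (sub_mem ?_ (one_mem _))
      have x1 := D1_div (p := p) (hp := hp) (n := n) (N := m+1) (by omega) (by omega)
      have e : ∀ c : ℚ, (Dlcm n : ℚ) * (1/((m:ℚ)+1) * c) = (Dlcm n : ℚ)/((m+1:ℕ):ℚ) * c := by
        intro c; push_cast; ring
      rw [mem_Gr]
      simp only [mul_ff, mul_sf, mul_fs, mul_ss, io_ff, io_sf, io_fs, io_ss, h0, h3, mul_zero,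
        zero_mul, add_zero, e]
      exact ⟨zero_mem _, mul_mem x1 h1, mul_mem x1 h2, zero_mem _⟩
  | succ a iha =>
    induction m with
    | zero => rw [hz]; exact one_mem _
    | succ m ih => rw [Gb_pascal]; exact sub_mem (iha _ hm) (ih (by omega))

theorem xS_eps (k : ℕ) : xS k = iS DualNumber.eps - (k:DB) := by
  rw [xS, xA, map_add, map_neg, map_natCast]; ring
theorem xT_eps (k : ℕ) : xT k = iT DualNumber.eps - (k:DB) := by
  rw [xT, xA, map_add, map_neg, map_natCast]; ring
theorem xST_eq (k l : ℕ) : xS k + xT l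
    = iS DualNumber.eps + iT DualNumber.eps - ((k+l:ℕ):DB) := by
  rw [xS_eps, xT_eps]; push_cast; ring

theorem Jk_mem {k l : ℕ} (hk : k ≤ n) (hl : l ≤ n) :
    io (1/(n.factorial:ℚ)^3) * Jk n k l ∈ Gr p hp n := by
  have g1 : Gb (iS DualNumber.eps) k n ∈ Gr p hp n := by
    apply Gb_mem _ _ _ _ _ _ le_rfl <;> simp [one_mem, zero_mem]
  have g2 : Gb (iT DualNumber.eps) l n ∈ Gr p hp n := by
    apply Gb_mem _ _ _ _ _ _ le_rfl <;> simp [one_mem, zero_mem]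
  have g3 : Gb (iS DualNumber.eps + iT DualNumber.eps) (k+l) n ∈ Gr p hp n := by
    apply Gb_mem _ _ _ _ _ _ le_rfl <;> simp [one_mem]
  have h := mul_mem (mul_mem (pow_mem (iS_gA_mem (p := p) (hp := hp) hk) 2)
    (pow_mem (iT_gA_mem (p := p) (hp := hp) hl) 2)) (mul_mem (mul_mem g1 g2) g3)
  convert h using 1
  rw [Gb, Gb, Gb, Jk, ← xS_eps, ← xT_eps, ← xST_eq, ← one_div_pow, map_pow]
  ring

theorem Ym_eq (μ : Func) (n : ℕ) : Ym μ n = n.centralBinom *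
    ∑ k ∈ Finset.range (n+1), ∑ l ∈ Finset.range (n+1),
      μ.pr k l (io (1/(n.factorial:ℚ)^3) * Jk n k l) := by
  simp only [Func.pr, pr_io, ← Finset.mul_sum]
  rw [Ym, cc, Sm]
  simp only [Func.pr]
  ring

theorem small (μ : Func) (w : ℕ)
    (h22 : ∀ k l, k ≤ n → l ≤ n → (Dlcm n:ℚ)^(w+2) * n.centralBinom * μ.m22 k l ∈ Rp p hp)
    (h12 : ∀ k l, k ≤ n → l ≤ n → (Dlcm n:ℚ)^(w+1) * n.centralBinom * μ.m12 k l ∈ Rp p hp)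
    (h21 : ∀ k l, k ≤ n → l ≤ n → (Dlcm n:ℚ)^(w+1) * n.centralBinom * μ.m21 k l ∈ Rp p hp)
    (h11 : ∀ k l, k ≤ n → l ≤ n → (Dlcm n:ℚ)^w * n.centralBinom * μ.m11 k l ∈ Rp p hp) :
    (Dlcm n:ℚ)^(w+2) * Ym μ n ∈ Rp p hp := by
  rw [Ym_eq, ← mul_assoc, Finset.mul_sum]
  refine sum_mem fun k hk => ?_
  rw [Finset.mul_sum]
  refine sum_mem fun l hl => ?_
  have hk' : k ≤ n := Nat.lt_succ_iff.1 (Finset.mem_range.1 hk)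
  have hl' : l ≤ n := Nat.lt_succ_iff.1 (Finset.mem_range.1 hl)
  obtain ⟨j1, j2, j3, j4⟩ := mem_Gr.1 (Jk_mem (p := p) (hp := hp) hk' hl')
  rw [Func.pr, pr]
  convert add_mem (add_mem (add_mem (mul_mem (h22 k l hk' hl') j1) (mul_mem (h12 k l hk' hl') j2))
    (mul_mem (h21 k l hk' hl') j3)) (mul_mem (h11 k l hk' hl') j4) using 1
  ring

theorem small_Q : (Dlcm n:ℚ)^2 * Ym muQ n ∈ Rp p hp := by
  apply small muQ 0 <;> intro k l _ _ <;> simp only [muQ, mul_zero, mul_one, zero_mem]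
  exact DC_mem _

theorem small_P (hpn : p ≤ n) : (Dlcm n:ℚ)^7 * Ym muP n ∈ Rp p hp := by
  apply small muP 5 <;> intro k l hk hl <;> simp only [muP]
  · exact Em_mem (fun k l hk hl => f22_mem hpn hk hl) (fun k l hk hl => f22_mem hpn hk hl) hk hl
  · exact Em_mem (fun k l hk hl => f12_mem hpn hk hl) (fun k l hk hl => f21_mem hpn hk hl) hk hl
  · exact Em_mem (fun k l hk hl => f21_mem hpn hk hl) (fun k l hk hl => f12_mem hpn hk hl) hk hl
  · exact Em_mem (fun k l hk hl => f11_mem hpn hk hl) (fun k l hk hl => f11_mem hpn hk hl) hk hl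

theorem small_T (hpn : p ≤ n) : (Dlcm n:ℚ)^5 * Ym muT n ∈ Rp p hp := by
  have i4 : (4:ℚ) ∈ Rp p hp := by
    have := nat_mem (hp := hp) 4
    simpa using this
  have hC : (n.centralBinom:ℚ) ∈ Rp p hp := nat_mem _
  have hD : (Dlcm n:ℚ) ∈ Rp p hp := nat_mem _
  apply small muT 3 <;> intro k l hk hl <;> simp only [muT]
  · convert neg_mem (mul_mem i4 (D5_Hr (hp := hp) hpn (k := k+l) (by omega))) using 1; ring
  · convert mul_mem hC (sub_mem (D2_Hr (hp := hp) hpn 2 (k := l) (by omega))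
      (mul_mem two_mem (D2_Hr (hp := hp) hpn 2 (k := k+l) (by omega)))) using 1
    ring
  · convert mul_mem hC (sub_mem (D2_Hr (hp := hp) hpn 2 (k := k) (by omega))
      (mul_mem two_mem (D2_Hr (hp := hp) hpn 2 (k := k+l) (by omega)))) using 1
    ring
  · convert mul_mem (mul_mem hC hD) (sub_mem (add_mem (D2_Hr (hp := hp) hpn 1 (k := k) (by omega))
      (D2_Hr (hp := hp) hpn 1 (k := l) (by omega)))
      (mul_mem two_mem (D2_Hr (hp := hp) hpn 1 (k := k+l) (by omega)))) using 1
    ring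

end

end ZS

/-- For all `n ≥ 1` one has `4 D_n^2 q_n ∈ ℤ`, `4 D_n^7 p_n ∈ ℤ` and `4 D_n^5 p̃_n ∈ ℤ`,
with `D_n = lcm(1, 2, …, n)`. -/
theorem stmt6
    (q p pt : ℕ → ℚ)
    (hq : Rec1 q) (hp : Rec1 p) (hpt : Rec1 pt)
    (hq0 : q 0 = -1) (hq1 : q 1 = 42) (hq2 : q 2 = -17934)
    (hp0 : p 0 = 0) (hp1 : p 1 = 87/2) (hp2 : p 2 = -1190161/64)
    (hpt0 : pt 0 = 0) (hpt1 : pt 1 = 101/2) (hpt2 : pt 2 = -344923/16) :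
    ∀ n : ℕ, 1 ≤ n →
      (∃ z : ℤ, 4 * (Dlcm n : ℚ)^2 * q n = (z : ℚ)) ∧
      (∃ z : ℤ, 4 * (Dlcm n : ℚ)^7 * p n = (z : ℚ)) ∧
      (∃ z : ℤ, 4 * (Dlcm n : ℚ)^5 * pt n = (z : ℚ)) := by
  intro n hn
  have cast : ∀ x : ℚ, (∀ r (hr : r.Prime), x ∈ ZS.Rp r hr) → ∃ z : ℤ, x = z :=
    fun x h => ZS.int_of_Rp h
  have hD : ∀ r (hr : r.Prime), ∀ j, (Dlcm n : ℚ)^j ∈ ZS.Rp r hr :=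
    fun r hr j => pow_mem (ZS.nat_mem _) _
  refine ⟨cast _ fun r hr => ?_, cast _ fun r hr => ?_, cast _ fun r hr => ?_⟩
  · rcases Nat.lt_or_ge n r with h | h
    · convert mul_mem (hD r hr 2) (ZS.large_q hq hq0 hq1 hq2 n r hr h) using 1; ring
    · have e := ZS.rec_unique (-1) ZS.muQ q hq (by rw [hq0, ZS.Ym0]; simp [ZS.muQ])
        (by rw [hq1, ZS.Q1]; norm_num) (by rw [hq2, ZS.Q2]; norm_num) n
      rw [e]
      convert mul_mem (ZS.int_mem (hp := hr) (-4)) (ZS.small_Q (p := r) (hp := hr) (n := n)) using 1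
      push_cast; ring
  · rcases Nat.lt_or_ge n r with h | h
    · convert mul_mem (hD r hr 7) (ZS.large_p hp hp0 hp1 hp2 n r hr h) using 1; ring
    · have e := ZS.rec_unique (-1/2) ZS.muP p hp (by rw [hp0, ZS.Ym0]; simp [ZS.muP, ZS.Em])
        (by rw [hp1, ZS.PP1]; norm_num) (by rw [hp2, ZS.PP2]; norm_num) n
      rw [e]
      convert mul_mem (ZS.int_mem (hp := hr) (-2)) (ZS.small_P (p := r) (hp := hr) (n := n) h) using 1
      push_cast; ring
  · rcases Nat.lt_or_ge n r with h | h
    · convert mul_mem (hD r hr 5) (ZS.large_t hpt hpt0 hpt1 hpt2 n r hr h) using 1; ring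
    · have e := ZS.rec_unique (1/4) ZS.muT pt hpt (by rw [hpt0, ZS.Ym0]; simp [ZS.muT])
        (by rw [hpt1, ZS.T1]; norm_num) (by rw [hpt2, ZS.T2]; norm_num) n
      rw [e]
      convert mul_mem (ZS.int_mem (hp := hr) 1) (ZS.small_T (p := r) (hp := hr) (n := n) h) using 1
      push_cast; ring
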